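/- arXiv:2605.03347 — 3 statements merged into one kernel-verified Lean document; each statement's English description precedes it below -/
import Mathlib

section
/- Let K be a field, k ≥ 1 an integer, n = 2k, R = K[x_1,…,x_n], and let J(P_n) be the cover ideal of the path graph P_n. Then for every integer t with 1 ≤ t ≤ k − 1, depth(R/J(P_n)^t) = k − 1 + ⌊(k + t)/(2t + 1)⌋. -/
/-!
Depth is handled through Rees' theorem: for a proper ideal `I`, a regular sequence of length `d` in
`m = (x_1, …, x_n)` exists exactly when `Ext^i(R/m, R/I) = 0` for all `i < d`
(`extVanish_iff_exists_isRegular`). This condition also makes sense for the zero module and behaves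
well in short exact sequences, of which two are used: `0 → R/(I : f) → R/I → R/(I + (f)) → 0` for a
monomial `f`, and the Mayer-Vietoris sequence of two ideals. All ideals are monomial and are encoded
by their sets of exponents.

Since paths are bipartite, `J(P_n)^t = ⋂ (x_i, x_{i+1})^t` (`coverIdeal_pathGraph_pow`). More
generally one considers `(x_i : i ∈ S) + ⋂ (x_i, x_{i+1})^{w_i}`, where the weights vanish before a
vertex `p`, equal `u ≤ t` on the edge `{p, p+1}` and `t` afterwards, and `S` consists of vertices
before `p`. If `u = 0` the edge disappears and `p` is replaced by `p + 1`, with first weight `t`.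
If `u ≥ 1`, the colon by `x_{p+1}^{u-1}` and then by `x_{p+2}^{t-u+1}` turns the weights
`u, t, t, t, …` into `1, 0, u-1, t, …`: one edge splits off and a path with first weight `u - 1` on
`{p+2, p+3}` remains. At each stage of these chains of colons the other term of the exact sequence
has a killed variable `x_v`, so the edges at `v` impose only pure powers, and it reduces to a shorter
path of the same kind, whose depth is large enough not to interfere. Hence depth bounds travel in
both directions along the chains (`step_up`, `step_down`). The split ideal is the intersection of a
shorter path ideal with `(x_p, x_{p+1})`, and the Mayer-Vietoris sequence relates its depth to that
of the sum of the two, again a shorter path ideal.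

By induction the depth is `N - |S| - 1 - g`, with `g` the number of edges split off (`peelCount`;
`depthGE_lower`, `depthGE_upper`). Starting with first weight `t`, the process has period `2t + 1` in
the number of vertices and splits off `t` edges per period, which gives
`g = k - ⌊(k + t)/(2t + 1)⌋` for `n = 2k` (`peelCount_even`).
-/

open MvPolynomial

/-- The cover ideal `J(G) = ⋂_{{u,v} ∈ E(G)} (x_u, x_v)` of a graph `G` on `{1,…,n}`,
inside `R = K[x_1,…,x_n]`. -/
noncomputable def coverIdeal (K : Type*) [Field K] {n : ℕ} (G : SimpleGraph (Fin n)) :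
    Ideal (MvPolynomial (Fin n) K) :=
  ⨅ (u : Fin n) (v : Fin n) (_ : G.Adj u v), Ideal.span {X u, X v}

/-- The maximal homogeneous ideal `(x_1,…,x_n)` of `K[x_1,…,x_n]`. -/
noncomputable def maxIdeal (K : Type*) [Field K] (n : ℕ) : Ideal (MvPolynomial (Fin n) K) :=
  Ideal.span (Set.range (X : Fin n → MvPolynomial (Fin n) K))

/-- `depth(R/I)` with respect to the maximal homogeneous ideal: the supremum of the
lengths of `R/I`-regular sequences consisting of elements of `(x_1,…,x_n)`. -/
noncomputable def depthQuot (K : Type*) [Field K] (n : ℕ)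
    (I : Ideal (MvPolynomial (Fin n) K)) : ℕ :=
  sSup {d : ℕ | ∃ rs : List (MvPolynomial (Fin n) K), rs.length = d ∧
    (∀ r ∈ rs, r ∈ maxIdeal K n) ∧
    RingTheory.Sequence.IsRegular ((MvPolynomial (Fin n) K) ⧸ I) rs}

/-! ### Vanishing of Ext, depth and exact sequences -/

section Homological

open CategoryTheory Abelian

universe u

variable {R : Type u} [CommRing R]

/-- `Ext^i(R/m, M) = 0` for all `i < d`.  By Rees' theorem this says that the `m`-grade of a
finitely generated module `M ≠ mM` is at least `d`. -/
def ExtVanish (m : Ideal R) (d : ℕ) (M : Type u) [AddCommGroup M] [Module R M] : Prop :=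
  ∀ i < d, Subsingleton (Ext (ModuleCat.of R (R ⧸ m)) (ModuleCat.of R M) i)

variable {m : Ideal R} {A B C : Type u} [AddCommGroup A] [Module R A] [AddCommGroup B]
  [Module R B] [AddCommGroup C] [Module R C]

lemma shortExact_of {f : A →ₗ[R] B} {g : B →ₗ[R] C} (hf : Function.Injective f)
    (hg : Function.Surjective g) (h : Function.Exact f g) :
    (ModuleCat.shortComplexOfCompEqZero f g h.linearMap_comp_eq_zero).ShortExact where
  exact := ModuleCat.shortComplex_exact _ h
  mono_f := (ModuleCat.mono_iff_injective _).2 hf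
  epi_g := (ModuleCat.epi_iff_surjective _).2 hg

lemma ExtVanish.mono {d e : ℕ} (h : ExtVanish m d A) (hde : e ≤ d) : ExtVanish m e A :=
  fun i hi => h i (hi.trans_le hde)

lemma ExtVanish.middle {f : A →ₗ[R] B} {g : B →ₗ[R] C} (hf : Function.Injective f)
    (hg : Function.Surjective g) (h : Function.Exact f g) {d : ℕ}
    (hA : ExtVanish m d A) (hC : ExtVanish m d C) : ExtVanish m d B := by
  intro i hi
  have hS := shortExact_of hf hg h
  have := hA i hi
  have := hC i hi
  refine subsingleton_of_forall_eq 0 fun x => ?_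
  obtain ⟨y, rfl⟩ := Ext.covariant_sequence_exact₂ _ hS x
    (@Subsingleton.elim _ (hC i hi) _ _)
  rw [@Subsingleton.elim _ (hA i hi) y 0, Ext.zero_comp]

lemma ExtVanish.left {f : A →ₗ[R] B} {g : B →ₗ[R] C} (hf : Function.Injective f)
    (hg : Function.Surjective g) (h : Function.Exact f g) {d : ℕ}
    (hB : ExtVanish m d B) (hC : ExtVanish m (d - 1) C) : ExtVanish m d A := by
  intro i hi
  have hS := shortExact_of hf hg h
  refine subsingleton_of_forall_eq 0 fun x => ?_
  rcases i with _ | i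
  · have := hS.mono_f
    exact Ext.postcomp_mk₀_injective_of_mono _
      (ModuleCat.shortComplexOfCompEqZero f g h.linearMap_comp_eq_zero).f
      (@Subsingleton.elim _ (hB 0 hi) _ _)
  · obtain ⟨y, rfl⟩ := Ext.covariant_sequence_exact₁ _ hS x
      (@Subsingleton.elim _ (hB _ hi) _ _) rfl
    rw [@Subsingleton.elim _ (hC i (by omega)) y 0, Ext.zero_comp]

lemma ExtVanish.right {f : A →ₗ[R] B} {g : B →ₗ[R] C} (hf : Function.Injective f)
    (hg : Function.Surjective g) (h : Function.Exact f g) {d : ℕ}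
    (hA : ExtVanish m d A) (hB : ExtVanish m (d - 1) B) : ExtVanish m (d - 1) C := by
  intro i hi
  have hS := shortExact_of hf hg h
  refine subsingleton_of_forall_eq 0 fun x => ?_
  obtain ⟨y, rfl⟩ := Ext.covariant_sequence_exact₃ _ hS x rfl
    (@Subsingleton.elim _ (hA (i + 1) (by omega)) _ _)
  rw [@Subsingleton.elim _ (hB i hi) y 0, Ext.zero_comp]

lemma ExtVanish.of_subsingleton [Subsingleton A] (d : ℕ) : ExtVanish m d A := by
  intro i _
  have h0 : Limits.IsZero (ModuleCat.of R A) := ModuleCat.isZero_of_subsingleton _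
  refine subsingleton_of_forall_eq 0 fun x => ?_
  rw [← Ext.comp_mk₀_id x, h0.eq_of_src (𝟙 _) 0, Ext.mk₀_zero, Ext.comp_zero]

lemma ExtVanish.prod {d : ℕ} (hA : ExtVanish m d A) (hB : ExtVanish m d B) :
    ExtVanish m d (A × B) :=
  ExtVanish.middle (f := LinearMap.inl R A B) (g := LinearMap.snd R A B)
    LinearMap.inl_injective LinearMap.snd_surjective Function.Exact.inl_snd hA hB

/-- Dividing by an element of `m` that is regular on `A` lowers the order of vanishing by one:
multiplication by the element is zero on `Ext(R/m, A)`. -/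
lemma ExtVanish.succ_of_smul {x : R} (hx : x ∈ m) {f : A →ₗ[R] A} {g : A →ₗ[R] C}
    (hfx : ∀ a, f a = x • a) (hf : Function.Injective f)
    (hg : Function.Surjective g) (h : Function.Exact f g) {d : ℕ}
    (hC : ExtVanish m d C) : ExtVanish m (d + 1) A := by
  intro i hi
  have hS := shortExact_of hf hg h
  have hz : ∀ y : Ext (ModuleCat.of R (R ⧸ m)) (ModuleCat.of R A) i,
      y.comp (Ext.mk₀ (ModuleCat.shortComplexOfCompEqZero f g h.linearMap_comp_eq_zero).f)
        (add_zero i) = 0 := by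
    intro y
    have hfe : (ModuleCat.shortComplexOfCompEqZero f g h.linearMap_comp_eq_zero).f
        = x • 𝟙 (ModuleCat.of R A) := by
      ext a
      exact hfx a
    have hann : x ∈ Module.annihilator R (R ⧸ m) := by rwa [Ideal.annihilator_quotient]
    have := congrArg (fun k => k.hom y)
      (Ext.postcomp_smul_id_eq_zero_of_mem_annihilator (M := ModuleCat.of R A)
        (N := ModuleCat.of R (R ⧸ m)) hann i)
    rw [hfe]
    exact this
  refine subsingleton_of_forall_eq 0 fun y => ?_
  rcases i with _ | i
  · have := hS.mono_f
    refine Ext.postcomp_mk₀_injective_of_mono _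
      (ModuleCat.shortComplexOfCompEqZero f g h.linearMap_comp_eq_zero).f ?_
    exact (hz y).trans (hz 0).symm
  · obtain ⟨z, rfl⟩ := Ext.covariant_sequence_exact₁ _ hS y (hz y) rfl
    rw [@Subsingleton.elim _ (hC i (by omega)) z 0, Ext.zero_comp]

/-- `Hom(R/m, R/m) ≠ 0`: the residue module has grade zero. -/
lemma not_extVanish_quotient (hm : m ≠ ⊤) : ¬ ExtVanish m 1 (R ⧸ m) := by
  intro h
  have h0 := h 0 one_pos
  have h1 : Subsingleton (ModuleCat.of R (R ⧸ m) ⟶ ModuleCat.of R (R ⧸ m)) :=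
    Ext.addEquiv₀.subsingleton_congr.mp h0
  have h2 : Subsingleton ((R ⧸ m) →ₗ[R] (R ⧸ m)) :=
    (ModuleCat.homAddEquiv (M := ModuleCat.of R (R ⧸ m))
      (N := ModuleCat.of R (R ⧸ m))).symm.subsingleton
  have h3 : (LinearMap.id : (R ⧸ m) →ₗ[R] (R ⧸ m)) = 0 := Subsingleton.elim _ _
  have h4 : (Ideal.Quotient.mk m 1) = 0 := congrArg (fun k => k (Ideal.Quotient.mk m 1)) h3
  exact hm ((Ideal.eq_top_iff_one m).2 (Ideal.Quotient.eq_zero_iff_mem.1 h4))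

/-- Rees' theorem for a cyclic module. -/
lemma extVanish_iff_exists_isRegular [IsNoetherianRing R] {I : Ideal R} (hI : I ≤ m)
    (hm : m ≠ ⊤) (d : ℕ) :
    ExtVanish m d (R ⧸ I) ↔ ∃ rs : List R, rs.length = d ∧ (∀ r ∈ rs, r ∈ m) ∧
      RingTheory.Sequence.IsRegular (R ⧸ I) rs := by
  have hlt : m • (⊤ : Submodule R (R ⧸ I)) < ⊤ := by
    refine lt_top_iff_ne_top.2 fun h => hm ?_
    have h2 : m • (⊤ : Submodule R (R ⧸ I)) ≤ (m.map (Ideal.Quotient.mk I)).restrictScalars R := by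
      rw [Submodule.smul_le]
      intro r hr x _
      obtain ⟨x, rfl⟩ := Ideal.Quotient.mk_surjective x
      rw [Submodule.restrictScalars_mem, ← Ideal.Quotient.mk_eq_mk, ← Submodule.Quotient.mk_smul,
        Ideal.Quotient.mk_eq_mk]
      exact Ideal.mem_map_of_mem _ (m.mul_mem_right x hr)
    have h1 : Ideal.Quotient.mk I 1 ∈ m.map (Ideal.Quotient.mk I) :=
      h2 (by rw [h]; exact Submodule.mem_top)
    rw [Ideal.mem_quotient_iff_mem hI] at h1
    exact (Ideal.eq_top_iff_one m).2 h1
  constructor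
  · intro h
    exact ModuleCat.exists_isRegular_of_exists_subsingleton_ext m d (ModuleCat.of R (R ⧸ I)) hlt
      (ModuleCat.of R (R ⧸ m))
      (by rw [Module.support_eq_zeroLocus, Ideal.annihilator_quotient]) h
  · rintro ⟨rs, rfl, h1, h2⟩
    exact ModuleCat.subsingleton_ext_of_exists_isRegular m (ModuleCat.of R (R ⧸ m))
      (by rw [Module.support_eq_zeroLocus, Ideal.annihilator_quotient]) (ModuleCat.of R (R ⧸ I))
      hlt rs h1 h2

/-- The sequence `0 → R/(I : x) → R/I → R/(I + (x)) → 0`, the first map being multiplication by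
`x`. -/
lemma colon_sequence {I A C : Ideal R} {x : R} (hA : ∀ r, r ∈ A ↔ x * r ∈ I)
    (hC : C = I ⊔ Ideal.span {x}) :
    ∃ (f : (R ⧸ A) →ₗ[R] (R ⧸ I)) (g : (R ⧸ I) →ₗ[R] (R ⧸ C)), Function.Injective f ∧
      Function.Surjective g ∧ Function.Exact f g ∧
        ∀ r : R, f (Submodule.Quotient.mk r) = Submodule.Quotient.mk (x * r) := by
  have hIC : I ≤ C := hC ▸ le_sup_left
  obtain ⟨f, hf⟩ : ∃ f : (R ⧸ A) →ₗ[R] (R ⧸ I),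
      ∀ r : R, f (Submodule.Quotient.mk r) = Submodule.Quotient.mk (x * r) :=
    ⟨Submodule.mapQ A I (LinearMap.lsmul R R x) fun r hr => (hA r).1 hr, fun r => rfl⟩
  obtain ⟨g, hg⟩ : ∃ g : (R ⧸ I) →ₗ[R] (R ⧸ C),
      ∀ r : R, g (Submodule.Quotient.mk r) = Submodule.Quotient.mk r :=
    ⟨Submodule.factor hIC, fun r => rfl⟩
  refine ⟨f, g, ?_, ?_, ?_, hf⟩
  · rw [← LinearMap.ker_eq_bot, LinearMap.ker_eq_bot']
    intro y
    obtain ⟨r, rfl⟩ := Submodule.Quotient.mk_surjective _ y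
    rw [hf, Submodule.Quotient.mk_eq_zero, Submodule.Quotient.mk_eq_zero]
    exact (hA r).2
  · intro y
    obtain ⟨r, rfl⟩ := Submodule.Quotient.mk_surjective _ y
    exact ⟨_, hg r⟩
  · intro y
    obtain ⟨r, rfl⟩ := Submodule.Quotient.mk_surjective _ y
    rw [hg, Submodule.Quotient.mk_eq_zero]
    constructor
    · intro h
      rw [hC, Submodule.mem_sup] at h
      obtain ⟨a, ha, b, hb, rfl⟩ := h
      obtain ⟨c, rfl⟩ := Ideal.mem_span_singleton'.1 hb
      refine ⟨Submodule.Quotient.mk c, ?_⟩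
      rw [hf, Submodule.Quotient.eq]
      have : x * c - (a + c * x) = -a := by ring
      rw [this]
      exact I.neg_mem ha
    · rintro ⟨z, hz⟩
      obtain ⟨c, rfl⟩ := Submodule.Quotient.mk_surjective _ z
      rw [hf, Submodule.Quotient.eq] at hz
      have h1 : x * c ∈ C := hC ▸ Ideal.mem_sup_right (Ideal.mem_span_singleton.2 ⟨c, rfl⟩)
      have h2 := C.sub_mem h1 (hIC hz)
      simpa using h2

/-- The Mayer-Vietoris sequence `0 → R/(I ∩ J) → R/I ⊕ R/J → R/(I + J) → 0`. -/
lemma mayerVietoris_sequence (I J : Ideal R) :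
    ∃ (f : (R ⧸ (I ⊓ J)) →ₗ[R] (R ⧸ I) × (R ⧸ J))
      (g : (R ⧸ I) × (R ⧸ J) →ₗ[R] (R ⧸ (I ⊔ J))), Function.Injective f ∧
      Function.Surjective g ∧ Function.Exact f g := by
  obtain ⟨f, hf⟩ : ∃ f : (R ⧸ (I ⊓ J)) →ₗ[R] (R ⧸ I) × (R ⧸ J),
      ∀ r : R, f (Submodule.Quotient.mk r) = (Submodule.Quotient.mk r, Submodule.Quotient.mk r) :=
    ⟨(Submodule.factor inf_le_left).prod (Submodule.factor inf_le_right), fun r => rfl⟩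
  obtain ⟨g, hg⟩ : ∃ g : (R ⧸ I) × (R ⧸ J) →ₗ[R] (R ⧸ (I ⊔ J)),
      ∀ r s : R, g (Submodule.Quotient.mk r, Submodule.Quotient.mk s) =
        Submodule.Quotient.mk (r - s) :=
    ⟨(Submodule.factor le_sup_left).comp (LinearMap.fst R _ _) -
      (Submodule.factor le_sup_right).comp (LinearMap.snd R _ _), fun r s => rfl⟩
  refine ⟨f, g, ?_, ?_, ?_⟩
  · rw [← LinearMap.ker_eq_bot, LinearMap.ker_eq_bot']
    intro y
    obtain ⟨r, rfl⟩ := Submodule.Quotient.mk_surjective _ y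
    rw [hf, Prod.mk_eq_zero, Submodule.Quotient.mk_eq_zero, Submodule.Quotient.mk_eq_zero,
      Submodule.Quotient.mk_eq_zero]
    exact id
  · intro y
    obtain ⟨r, rfl⟩ := Submodule.Quotient.mk_surjective _ y
    exact ⟨(Submodule.Quotient.mk r, Submodule.Quotient.mk 0), by rw [hg, sub_zero]⟩
  · rintro ⟨y, z⟩
    obtain ⟨r, rfl⟩ := Submodule.Quotient.mk_surjective _ y
    obtain ⟨s, rfl⟩ := Submodule.Quotient.mk_surjective _ z
    rw [hg, Submodule.Quotient.mk_eq_zero, Submodule.mem_sup]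
    constructor
    · rintro ⟨a, ha, b, hb, hab⟩
      refine ⟨Submodule.Quotient.mk (r - a), ?_⟩
      rw [hf, Prod.mk.injEq, Submodule.Quotient.eq, Submodule.Quotient.eq]
      constructor
      · simpa using ha
      · convert hb using 1
        linear_combination -hab
    · rintro ⟨c, hc⟩
      obtain ⟨c, rfl⟩ := Submodule.Quotient.mk_surjective _ c
      rw [hf, Prod.mk.injEq, Submodule.Quotient.eq, Submodule.Quotient.eq] at hc
      exact ⟨-(c - r), I.neg_mem hc.1, c - s, hc.2, by ring⟩

end Homological

/-! ### Monomial ideals and their depth -/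

section MonomialIdeals

variable {N : ℕ}

/-- The monomial ideal generated by the monomials with exponent in `U`. For an upper set `U` these
are exactly the monomials of the ideal, and operations on ideals become operations on sets. -/
noncomputable def monIdeal (K : Type*) [Field K] (U : Set (Fin N →₀ ℕ)) :
    Ideal (MvPolynomial (Fin N) K) :=
  Ideal.span (Set.image (fun s => monomial s (1 : K)) U)

/-- `Ext^i(K, R/I) = 0` for all `i < d`, where `I` is the monomial ideal generated by the monomials
with exponent in `U`; for `I ≠ R` this means `depth (R/I) ≥ d`, and it always holds for `I = R`. -/
def DepthGE (K : Type*) [Field K] (d : ℕ) (U : Set (Fin N →₀ ℕ)) : Prop :=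
  ExtVanish (maxIdeal K N) d (MvPolynomial (Fin N) K ⧸ monIdeal K U)

variable {K : Type*} [Field K] {U V : Set (Fin N →₀ ℕ)}

lemma mem_monIdeal (hU : IsUpperSet U) {p : MvPolynomial (Fin N) K} :
    p ∈ monIdeal K U ↔ ∀ a, coeff a p ≠ 0 → a ∈ U := by
  rw [monIdeal, mem_ideal_span_monomial_image]
  constructor
  · intro h a ha
    obtain ⟨s, hs, hsa⟩ := h a (mem_support_iff.2 ha)
    exact hU hsa hs
  · intro h a ha
    exact ⟨a, h a (mem_support_iff.1 ha), le_rfl⟩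

lemma monIdeal_inter (hU : IsUpperSet U) (hV : IsUpperSet V) :
    monIdeal K (U ∩ V) = monIdeal K U ⊓ monIdeal K V := by
  ext p
  rw [Ideal.mem_inf, mem_monIdeal hU, mem_monIdeal hV, mem_monIdeal (hU.inter hV)]
  exact ⟨fun h => ⟨fun a ha => (h a ha).1, fun a ha => (h a ha).2⟩,
    fun h a ha => ⟨h.1 a ha, h.2 a ha⟩⟩

lemma monIdeal_union : monIdeal K (U ∪ V) = monIdeal K U ⊔ monIdeal K V := by
  rw [monIdeal, Set.image_union, Ideal.span_union]; rfl

lemma monIdeal_Ici (b : Fin N →₀ ℕ) : monIdeal K (Set.Ici b) = Ideal.span {monomial b 1} := by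
  apply le_antisymm
  · rw [monIdeal, Ideal.span_le]
    rintro _ ⟨a, ha, rfl⟩
    refine Ideal.mem_span_singleton.2 ⟨monomial (a - b) 1, ?_⟩
    rw [monomial_mul, one_mul, add_tsub_cancel_of_le (Set.mem_Ici.1 ha)]
  · rw [Ideal.span_singleton_le_iff_mem]
    exact Ideal.subset_span ⟨b, Set.mem_Ici.2 le_rfl, rfl⟩

lemma monIdeal_colon (hU : IsUpperSet U) (b : Fin N →₀ ℕ) (r : MvPolynomial (Fin N) K) :
    r ∈ monIdeal K {a | b + a ∈ U} ↔ monomial b 1 * r ∈ monIdeal K U := by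
  have hU' : IsUpperSet {a | b + a ∈ U} := fun x y hxy hx => hU (by gcongr) hx
  rw [mem_monIdeal hU, mem_monIdeal hU']
  constructor
  · intro h a ha
    rw [coeff_monomial_mul'] at ha
    split_ifs at ha with hba
    · have := h (a - b) (by simpa using ha)
      rwa [Set.mem_ofPred_eq, add_tsub_cancel_of_le hba] at this
    · exact absurd rfl ha
  · intro h a ha
    exact h (b + a) (by rwa [coeff_monomial_mul, one_mul])

lemma depthGE_zero : DepthGE K 0 U := fun _ hi => absurd hi (Nat.not_lt_zero _)

lemma DepthGE.mono {d e : ℕ} (h : DepthGE K d U) (hde : e ≤ d) : DepthGE K e U :=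
  ExtVanish.mono h hde

lemma depthGE_univ (d : ℕ) : DepthGE K d (Set.univ : Set (Fin N →₀ ℕ)) := by
  have : monIdeal K (Set.univ : Set (Fin N →₀ ℕ)) = ⊤ := by
    rw [Ideal.eq_top_iff_one]
    exact Ideal.subset_span ⟨0, trivial, rfl⟩
  have : Subsingleton (MvPolynomial (Fin N) K ⧸ monIdeal K (Set.univ : Set (Fin N →₀ ℕ))) :=
    Ideal.Quotient.subsingleton_iff.2 this
  exact ExtVanish.of_subsingleton d

/-- `depth R/I ≥ min (depth R/(I : x^b)) (depth R/(I + (x^b)))`. -/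
lemma DepthGE.of_colon (hU : IsUpperSet U) (b : Fin N →₀ ℕ) {d : ℕ}
    (h1 : DepthGE K d {a | b + a ∈ U}) (h2 : DepthGE K d (U ∪ Set.Ici b)) : DepthGE K d U := by
  obtain ⟨f, g, hf, hg, h, -⟩ := colon_sequence (monIdeal_colon (K := K) hU b)
    (by rw [← monIdeal_Ici, ← monIdeal_union])
  exact ExtVanish.middle hf hg h h1 h2

/-- `depth R/(I : x^b) ≥ min (depth R/I) (depth R/(I + (x^b)) + 1)`. -/
lemma DepthGE.colon (hU : IsUpperSet U) (b : Fin N →₀ ℕ) {d : ℕ}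
    (h1 : DepthGE K d U) (h2 : DepthGE K (d - 1) (U ∪ Set.Ici b)) :
    DepthGE K d {a | b + a ∈ U} := by
  obtain ⟨f, g, hf, hg, h, -⟩ := colon_sequence (monIdeal_colon (K := K) hU b)
    (by rw [← monIdeal_Ici, ← monIdeal_union])
  exact ExtVanish.left hf hg h h1 h2

/-- The depth of `R/(I ∩ J)` is bounded below by the depths in the Mayer-Vietoris sequence. -/
lemma DepthGE.inter (hU : IsUpperSet U) (hV : IsUpperSet V) {d : ℕ} (h1 : DepthGE K d U)
    (h2 : DepthGE K d V) (h3 : DepthGE K (d - 1) (U ∪ V)) : DepthGE K d (U ∩ V) := by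
  obtain ⟨f, g, hf, hg, h⟩ := mayerVietoris_sequence (monIdeal K U) (monIdeal K V)
  rw [DepthGE, monIdeal_inter hU hV]
  rw [DepthGE, monIdeal_union] at h3
  exact ExtVanish.left hf hg h (ExtVanish.prod h1 h2) h3

/-- The depth of `R/(I + J)` is bounded below by the depths in the Mayer-Vietoris sequence. -/
lemma DepthGE.union (hU : IsUpperSet U) (hV : IsUpperSet V) {d : ℕ}
    (h1 : DepthGE K d (U ∩ V)) (h2 : DepthGE K (d - 1) U) (h3 : DepthGE K (d - 1) V) :
    DepthGE K (d - 1) (U ∪ V) := by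
  obtain ⟨f, g, hf, hg, h⟩ := mayerVietoris_sequence (monIdeal K U) (monIdeal K V)
  rw [DepthGE, monIdeal_inter hU hV] at h1
  rw [DepthGE, monIdeal_union]
  exact ExtVanish.right hf hg h h1 (ExtVanish.prod h2 h3)

/-- If the variable `x_v` is regular modulo a monomial ideal, adding it to the ideal lowers the
depth by exactly one. -/
lemma depthGE_succ_iff (hU : IsUpperSet U) (v : Fin N)
    (hv : ∀ a, Finsupp.single v 1 + a ∈ U → a ∈ U) (d : ℕ) :
    DepthGE K (d + 1) U ↔ DepthGE K d (U ∪ Set.Ici (Finsupp.single v 1)) := by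
  have hc : {a | Finsupp.single v 1 + a ∈ U} = U :=
    Set.Subset.antisymm (fun a => hv a) (fun a ha => hU (le_add_self) ha)
  have hcol := monIdeal_colon (K := K) hU (Finsupp.single v 1)
  rw [hc] at hcol
  obtain ⟨f, g, hf, hg, h, hfx⟩ := colon_sequence hcol
    (by rw [← monIdeal_Ici, ← monIdeal_union])
  constructor
  · intro h1
    exact ExtVanish.right hf hg h h1 (ExtVanish.mono h1 (Nat.sub_le _ _))
  · have hx : (X v : MvPolynomial (Fin N) K) ∈ maxIdeal K N :=
      Ideal.subset_span (Set.mem_range_self v)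
    refine ExtVanish.succ_of_smul hx (fun a => ?_) hf hg h
    obtain ⟨r, rfl⟩ := Submodule.Quotient.mk_surjective _ a
    exact hfx r

/-- The exponent of the variable with index `i : ℕ`; it is `0` when there is no such variable. -/
def ex (a : Fin N →₀ ℕ) (i : ℕ) : ℕ := if h : i < N then a ⟨i, h⟩ else 0

/-- The monomial with exponents `f 0, …, f (N - 1)`. -/
noncomputable def ofFn (N : ℕ) (f : ℕ → ℕ) : Fin N →₀ ℕ :=
  Finsupp.equivFunOnFinite.symm fun i => f i

lemma ex_add (a b : Fin N →₀ ℕ) (i : ℕ) : ex (a + b) i = ex a i + ex b i := by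
  unfold ex; split_ifs <;> simp

lemma ex_zero (i : ℕ) : ex (0 : Fin N →₀ ℕ) i = 0 := by
  unfold ex; split_ifs <;> simp

lemma ex_ofFn {f : ℕ → ℕ} {i : ℕ} (hi : i < N) : ex (ofFn N f) i = f i := by
  simp [ex, hi, ofFn]

lemma ex_single (v : Fin N) (c i : ℕ) :
    ex (Finsupp.single v c) i = if i = v then c else 0 := by
  unfold ex
  split_ifs with h1 h2 h2
  · subst h2; simp
  · exact Finsupp.single_eq_of_ne fun h => h2 (by rw [← h])
  · exact absurd (h2 ▸ v.2) h1
  · rfl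

lemma le_iff_ex {a b : Fin N →₀ ℕ} : a ≤ b ↔ ∀ i < N, ex a i ≤ ex b i := by
  constructor
  · intro h i hi
    simpa [ex, hi] using h ⟨i, hi⟩
  · intro h i
    simpa [ex] using h i i.2

lemma ex_mono {a b : Fin N →₀ ℕ} (h : a ≤ b) (i : ℕ) : ex a i ≤ ex b i := by
  unfold ex; split_ifs
  · exact h _
  · exact le_rfl

lemma single_le_iff {v : Fin N} {a : Fin N →₀ ℕ} : Finsupp.single v 1 ≤ a ↔ ex a v ≠ 0 := by
  rw [Finsupp.single_le_iff, Nat.one_le_iff_ne_zero]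
  simp [ex]

/-- Exponents of the ideal generated by the variables with index in `S`. -/
def killSet (N : ℕ) (S : Finset ℕ) : Set (Fin N →₀ ℕ) := {a | ∃ i ∈ S, ex a i ≠ 0}

lemma isUpperSet_killSet (S : Finset ℕ) : IsUpperSet (killSet N S) := by
  rintro a b hab ⟨i, hi, ha⟩
  have := ex_mono hab i
  exact ⟨i, hi, by omega⟩

lemma killSet_insert (v : Fin N) (S : Finset ℕ) :
    killSet N (insert (v : ℕ) S) = killSet N S ∪ Set.Ici (Finsupp.single v 1) := by
  ext a
  rw [Set.mem_union, Set.mem_Ici, single_le_iff]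
  simp [killSet, or_comm]

lemma monIdeal_killSet_range : monIdeal K (killSet N (Finset.range N)) = maxIdeal K N := by
  ext p
  rw [mem_monIdeal (isUpperSet_killSet _), maxIdeal, ← Set.image_univ, mem_ideal_span_X_image]
  refine forall_congr' fun a => ?_
  rw [mem_support_iff]
  refine imp_congr_right fun _ => ⟨?_, ?_⟩
  · rintro ⟨i, hi, h⟩
    exact ⟨⟨i, Finset.mem_range.1 hi⟩, trivial, by simpa [ex, Finset.mem_range.1 hi] using h⟩
  · rintro ⟨i, -, h⟩
    exact ⟨i, by simp, by simpa [ex] using h⟩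

lemma maxIdeal_ne_top : maxIdeal K N ≠ ⊤ := by
  rw [← monIdeal_killSet_range, Ne, Ideal.eq_top_iff_one, mem_monIdeal (isUpperSet_killSet _)]
  intro h
  obtain ⟨i, -, hi⟩ := h 0 (by simp)
  exact hi (ex_zero i)

/-- The quotient by a set `S` of variables has depth `N - |S|`. -/
lemma depthGE_killSet_iff {S : Finset ℕ} (hS : S ⊆ Finset.range N) (d : ℕ) :
    DepthGE K d (killSet N S) ↔ d + S.card ≤ N := by
  have hcard := Finset.card_le_card hS
  rw [Finset.card_range] at hcard
  induction d generalizing S with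
  | zero => simpa [depthGE_zero] using hcard
  | succ d ih =>
    -- Either all variables are killed, and the quotient is the residue field, or some remaining
    -- variable is regular and killing it decreases both sides.
    by_cases hSN : S = Finset.range N
    · subst hSN
      rw [Finset.card_range]
      refine iff_of_false (fun h => not_extVanish_quotient (maxIdeal_ne_top (K := K) (N := N)) ?_)
        (by omega)
      have h1 := h.mono (show 1 ≤ d + 1 by omega)
      rwa [DepthGE, monIdeal_killSet_range] at h1
    · obtain ⟨v, hv, hvS⟩ := Finset.exists_of_ssubset (hS.ssubset_of_ne hSN)
      have hv := Finset.mem_range.1 hv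
      have hins : insert v S ⊆ Finset.range N := Finset.insert_subset (Finset.mem_range.2 hv) hS
      have hc := Finset.card_le_card hins
      rw [Finset.card_range] at hc
      have e := killSet_insert (⟨v, hv⟩ : Fin N) S
      rw [depthGE_succ_iff (isUpperSet_killSet S) ⟨v, hv⟩, ← e]
      · refine (ih hins hc).trans ?_
        rw [Finset.card_insert_of_notMem hvS]
        omega
      · rintro a ⟨i, hi, h⟩
        refine ⟨i, hi, ?_⟩
        rwa [ex_add, ex_single, if_neg, zero_add] at h
        rintro rfl
        exact hvS hi

/-- Modulo variables and one further monomial in the other variables, the depth drops by at most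
one (the monomial may be `1`). -/
lemma depthGE_killSet_union_Ici {S : Finset ℕ} (hS : S ⊆ Finset.range N) {d : ℕ}
    (hd : d + S.card + 1 ≤ N) (f : Fin N →₀ ℕ) (hf : ∀ i ∈ S, ex f i = 0) :
    DepthGE K d (killSet N S ∪ Set.Ici f) := by
  induction hn : f.degree generalizing f with
  | zero =>
    have : f = 0 := (Finsupp.degree_eq_zero_iff f).1 hn
    subst this
    convert depthGE_univ (K := K) d
    ext a
    simp
  | succ n ih =>
    have hne : f ≠ 0 := by rintro rfl; simp at hn
    obtain ⟨v, hv⟩ := Finsupp.ne_iff.1 hne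
    have hv : f v ≠ 0 := hv
    have hle : Finsupp.single v 1 ≤ f := by
      rw [Finsupp.single_le_iff]; omega
    obtain ⟨f', rfl⟩ := exists_add_of_le hle
    have hvS : (v : ℕ) ∉ S := fun h => by
      have := hf _ h
      rw [ex_add, ex_single] at this
      simp at this
    refine DepthGE.of_colon ((isUpperSet_killSet S).union (isUpperSet_Ici _))
      (Finsupp.single v 1) ?_ ?_
    · convert ih f' (fun i hi => ?_) ?_ using 1
      · ext a
        simp only [Set.mem_ofPred_eq, Set.mem_union, Set.mem_Ici, add_le_add_iff_left]
        refine or_congr_left (exists_congr fun i => and_congr_right fun hi => ?_)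
        rw [ex_add, ex_single, if_neg, zero_add]
        rintro rfl
        exact hvS hi
      · have := hf i hi
        rw [ex_add] at this
        omega
      · rw [map_add, Finsupp.degree_single] at hn
        omega
    · have hins : insert (v : ℕ) S ⊆ Finset.range N :=
        Finset.insert_subset (Finset.mem_range.2 v.2) hS
      convert (depthGE_killSet_iff (K := K) hins d).2
        (by rw [Finset.card_insert_of_notMem hvS]; omega) using 1
      rw [killSet_insert, Set.union_assoc]
      congr 1
      exact Set.union_eq_right.2 (Set.Ici_subset_Ici.2 hle)

end MonomialIdeals

/-! ### Weighted path ideals and splitting off an edge -/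

section Path

variable {N : ℕ}

/-- Exponents of the sum of the ideal `(x_i : i ∈ S)` and `⋂ (x_i, x_{i+1}) ^ w i`, the second
ideal being a weighted version of a power of the cover ideal of the path on `0, …, N - 1`. -/
def pathSet (N : ℕ) (w : ℕ → ℕ) (S : Finset ℕ) : Set (Fin N →₀ ℕ) :=
  {a | (∃ i ∈ S, ex a i ≠ 0) ∨ ∀ i, i + 1 < N → w i ≤ ex a i + ex a (i + 1)}

lemma isUpperSet_pathSet (w : ℕ → ℕ) (S : Finset ℕ) : IsUpperSet (pathSet N w S) := by
  rintro a b hab (⟨i, hi, h⟩ | h)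
  · have := ex_mono hab i
    exact Or.inl ⟨i, hi, by omega⟩
  · refine Or.inr fun i hi => ?_
    have := h i hi
    have := ex_mono hab i
    have := ex_mono hab (i + 1)
    omega

lemma pathSet_congr {w w' : ℕ → ℕ} (S : Finset ℕ) (h : ∀ i, i + 1 < N → w i = w' i) :
    pathSet N w S = pathSet N w' S := by
  ext a
  refine or_congr_right (forall_congr' fun i => forall_congr' fun hi => ?_)
  rw [h i hi]

lemma pathSet_eq_univ {w : ℕ → ℕ} (S : Finset ℕ) (h : ∀ i, i + 1 < N → w i = 0) :
    pathSet N w S = Set.univ :=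
  Set.eq_univ_of_forall fun a => Or.inr fun i hi => by rw [h i hi]; exact Nat.zero_le _

lemma pathSet_insert (w : ℕ → ℕ) (S : Finset ℕ) (v : Fin N) :
    pathSet N w (insert (v : ℕ) S) = pathSet N w S ∪ Set.Ici (Finsupp.single v 1) := by
  ext a
  rw [Set.mem_union, Set.mem_Ici, single_le_iff]
  simp only [pathSet, Set.mem_ofPred_eq, Finset.exists_mem_insert]
  rw [or_comm (a := ex a v ≠ 0), or_right_comm]

lemma pathSet_union_killSet (w : ℕ → ℕ) {S T : Finset ℕ} (hST : S ⊆ T) :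
    pathSet N w S ∪ killSet N T = pathSet N w T := by
  ext a
  simp only [pathSet, killSet, Set.mem_union, Set.mem_ofPred_eq]
  constructor
  · rintro ((⟨i, hi, h⟩ | h) | h)
    · exact Or.inl ⟨i, hST hi, h⟩
    · exact Or.inr h
    · exact Or.inl h
  · tauto

/-- The weights that `w` becomes after taking the colon by `x_v ^ j`. -/
def lower (w : ℕ → ℕ) (v j : ℕ) : ℕ → ℕ := fun i => w i - if i = v ∨ i + 1 = v then j else 0

lemma pathSet_colon (w : ℕ → ℕ) {S : Finset ℕ} (v : Fin N) (hv : (v : ℕ) ∉ S) (j : ℕ) :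
    {a | Finsupp.single v j + a ∈ pathSet N w S} = pathSet N (lower w v j) S := by
  ext a
  refine or_congr (exists_congr fun i => and_congr_right fun hi => ?_)
    (forall_congr' fun i => forall_congr' fun _ => ?_)
  · rw [ex_add, ex_single, if_neg, zero_add]
    rintro rfl
    exact hv hi
  · simp only [ex_add, ex_single, lower]
    split_ifs <;> omega

lemma lower_zero (w : ℕ → ℕ) (v : ℕ) : lower w v 0 = w := by
  funext i; simp [lower]

lemma lower_lower (w : ℕ → ℕ) (v j : ℕ) : lower (lower w v j) v 1 = lower w v (j + 1) := by
  funext i; simp only [lower]; split_ifs <;> omega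

variable {K : Type*} [Field K]

/-- Iterating the colon by `x_v`: depth passes from an ideal to its colon by `x_v ^ k`. -/
lemma chain_down {w : ℕ → ℕ} {S : Finset ℕ} {v : ℕ} (hvN : v < N) (hv : v ∉ S) {d k : ℕ}
    (h : DepthGE K d (pathSet N w S))
    (hs : ∀ j < k, DepthGE K (d - 1) (pathSet N (lower w v j) (insert v S))) :
    DepthGE K d (pathSet N (lower w v k) S) := by
  induction k with
  | zero => rwa [lower_zero]
  | succ k ih =>
    have h1 := DepthGE.colon (isUpperSet_pathSet _ _) (Finsupp.single (⟨v, hvN⟩ : Fin N) 1)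
      (ih fun j hj => hs j (by omega)) (by rw [← pathSet_insert]; exact hs k (by omega))
    rwa [pathSet_colon _ _ hv, lower_lower] at h1

/-- Iterating the colon by `x_v`: depth passes from the colon by `x_v ^ k` back to the ideal. -/
lemma chain_up {w : ℕ → ℕ} {S : Finset ℕ} {v : ℕ} (hvN : v < N) (hv : v ∉ S) {d k : ℕ}
    (hs : ∀ j < k, DepthGE K d (pathSet N (lower w v j) (insert v S)))
    (h : DepthGE K d (pathSet N (lower w v k) S)) :
    DepthGE K d (pathSet N w S) := by
  induction k with
  | zero => rwa [lower_zero] at h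
  | succ k ih =>
    refine ih (fun j hj => hs j (by omega)) ?_
    refine DepthGE.of_colon (isUpperSet_pathSet _ _) (Finsupp.single (⟨v, hvN⟩ : Fin N) 1) ?_
      (by rw [← pathSet_insert]; exact hs k (by omega))
    rwa [pathSet_colon _ _ hv, lower_lower]

/-- Once `x_{q+1}` is killed, the edges at `q + 1` impose pure powers of `x_q` and `x_{q+2}`; the
colon by the product of these powers removes both edges. -/
lemma depthGE_pathSet_of_killed {w w' : ℕ → ℕ} {S : Finset ℕ} {q d : ℕ}
    (hS : S ⊆ Finset.range N) (h1 : q + 1 ∈ S) (h0 : q ∉ S) (h2 : q + 2 ∉ S)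
    (hd : d + S.card + 1 ≤ N) (hw0 : w' q = 0) (hw1 : w' (q + 1) = 0)
    (hw2 : w' (q + 2) = w (q + 2) - w (q + 1)) (hwp : ∀ i, i + 1 = q → w' i = w i - w q)
    (hw : ∀ i, i + 1 < q ∨ q + 2 < i → w' i = w i) (h : DepthGE K d (pathSet N w' S)) :
    DepthGE K d (pathSet N w S) := by
  -- Exponents of the monomial imposed by the two edges at the killed vertex.
  set φ : ℕ → ℕ := fun i => if i = q then w q else if i = q + 2 then w (q + 1) else 0 with hφ
  have hfS : ∀ i ∈ S, ex (ofFn N φ) i = 0 := fun i hi => by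
    have hiN := Finset.mem_range.1 (hS hi)
    rw [ex_ofFn hiN, hφ]
    dsimp only
    rw [if_neg, if_neg]
    · rintro rfl; exact h2 hi
    · rintro rfl; exact h0 hi
  refine DepthGE.of_colon (isUpperSet_pathSet _ _) (ofFn N φ) ?_ ?_
  · convert h using 1
    ext a
    simp only [pathSet, Set.mem_ofPred_eq]
    by_cases hk : ∃ i ∈ S, ex a i ≠ 0
    · refine iff_of_true (Or.inl ?_) (Or.inl hk)
      obtain ⟨i, hi, h⟩ := hk
      exact ⟨i, hi, by rw [ex_add]; omega⟩
    · have hk' : ¬ ∃ i ∈ S, ex (ofFn N φ + a) i ≠ 0 := by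
        rintro ⟨i, hi, h⟩
        rw [ex_add, hfS i hi, zero_add] at h
        exact hk ⟨i, hi, h⟩
      simp only [hk, hk', false_or]
      have ha : ex a (q + 1) = 0 := by
        by_contra hc
        exact hk ⟨_, h1, hc⟩
      refine forall_congr' fun i => forall_congr' fun hi => ?_
      rw [ex_add, ex_add, ex_ofFn (by omega), ex_ofFn hi, hφ]
      dsimp only
      obtain hi1 | hi1 | rfl | rfl | rfl | hi1 :
          i + 1 < q ∨ i + 1 = q ∨ i = q ∨ i = q + 1 ∨ i = q + 2 ∨ q + 2 < i := by omega
      · rw [hw i (Or.inl hi1)]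
        split_ifs <;> omega
      · rw [hwp i hi1]
        split_ifs <;> omega
      · rw [hw0, if_pos rfl]
        omega
      · rw [hw1, if_neg (by omega), if_neg (by omega), if_neg (by omega), if_pos (by omega)]
        omega
      · rw [hw2, if_neg (by omega), if_pos rfl, if_neg (by omega), if_neg (by omega)]
        omega
      · rw [hw i (Or.inr hi1)]
        split_ifs <;> omega
  · convert depthGE_killSet_union_Ici (K := K) hS hd (ofFn N φ) hfS using 1
    ext a
    simp only [pathSet, killSet, Set.mem_ofPred_eq, Set.mem_union, Set.mem_Ici]
    by_cases hk : ∃ i ∈ S, ex a i ≠ 0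
    · simp only [hk, true_or]
    · simp only [hk, false_or]
      refine or_iff_right_of_imp fun h => le_iff_ex.2 fun i hi => ?_
      have ha : ex a (q + 1) = 0 := by
        by_contra hc
        exact hk ⟨_, h1, hc⟩
      rw [ex_ofFn hi, hφ]
      dsimp only
      split_ifs with hq hq2
      · rw [hq]
        have := h q (Finset.mem_range.1 (hS h1))
        rw [ha] at this
        omega
      · subst hq2
        have := h (q + 1) hi
        rwa [ha, zero_add] at this
      · omega

/-- The weights of a partially peeled path: no edges before `p`, weight `u` on the edge
`{p, p + 1}`, weight `t` afterwards. -/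
def tailWeight (t p u : ℕ) : ℕ → ℕ := fun i => if i < p then 0 else if i = p then u else t

/-- The weights reached from `tailWeight t p u` when the edge `{p, p + 1}` has been brought down
to weight `1` and has been detached from the rest of the path. -/
def splitWeight (t p u : ℕ) : ℕ → ℕ :=
  fun i => if i = p then 1 else if i = p + 2 then u - 1 else if i < p + 2 then 0 else t

/-- With weights `splitWeight`, the edge `{p, p + 1}` and the rest of the path have no common
variable; the edge contributes the intersection with `(x_p, x_{p+1})`. -/
lemma pathSet_splitWeight {t p u : ℕ} {S : Finset ℕ} (hp : p + 1 < N) :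
    pathSet N (splitWeight t p u) S =
      pathSet N (tailWeight t (p + 2) (u - 1)) S ∩ killSet N (insert p (insert (p + 1) S)) := by
  ext a
  simp only [pathSet, killSet, Set.mem_ofPred_eq, Set.mem_inter_iff, Finset.exists_mem_insert]
  by_cases hk : ∃ i ∈ S, ex a i ≠ 0
  · simp only [hk, true_or, or_true, and_true]
  · simp only [hk, false_or, or_false]
    constructor
    · intro h
      constructor
      · intro i hi
        have := h i hi
        simp only [splitWeight] at this
        simp only [tailWeight]
        split_ifs at * <;> omega
      · have := h p hp
        simp only [splitWeight, if_true] at this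
        omega
    · rintro ⟨h, h'⟩ i hi
      have := h i hi
      simp only [tailWeight] at this
      simp only [splitWeight]
      split_ifs at * with h1 <;> first | omega | (subst h1; omega)

/-- The ideals to which those met as `I + (x_v)` along the two chains of colons leading from
`tailWeight t p u` to `splitWeight t p u` reduce have depth at least `e`. The vertex `v` is
`p + 1` in the first chain and `p + 2` in the second; killing it leaves the part of the path beyond
`v`, with first weight the power of `x_v` already divided out. -/
structure SideDepth (K : Type*) [Field K] (N t p u e : ℕ) (S : Finset ℕ) : Prop where
  card_le : e + S.card + 2 ≤ N
  fst : ∀ j < u - 1, DepthGE K e (pathSet N (tailWeight t (p + 2) j) (insert (p + 1) S))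
  snd : p + 2 < N → ∀ j < t - u + 1,
    DepthGE K e (pathSet N (tailWeight t (p + 3) j) (insert (p + 2) S))

section Step

variable {t p u e : ℕ} {S : Finset ℕ}

lemma notMem_of_le {i : ℕ} (hS : S ⊆ Finset.range p) (hi : p ≤ i) : i ∉ S := fun h => by
  have := Finset.mem_range.1 (hS h)
  omega

lemma insert_subset_range {v : ℕ} (hS : S ⊆ Finset.range p) (hv : v < N) (hpv : p ≤ v) :
    insert v S ⊆ Finset.range N :=
  Finset.insert_subset (Finset.mem_range.2 hv)
    (hS.trans (Finset.range_subset_range.2 (by omega)))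

/-- Killing `p + 1` in the first chain separates `p`, and leaves weight `j` on the edge
`{p + 2, p + 3}`. -/
lemma SideDepth.first (hp : p + 1 < N) (hut : u ≤ t) (hS : S ⊆ Finset.range p)
    (h : SideDepth K N t p u e S) (j : ℕ) (hj : j < u - 1) :
    DepthGE K e (pathSet N (lower (tailWeight t p u) (p + 1) j) (insert (p + 1) S)) := by
  have hn := fun {i : ℕ} => notMem_of_le (i := i) hS
  refine depthGE_pathSet_of_killed (q := p) (w' := tailWeight t (p + 2) j)
    (insert_subset_range hS hp (by omega))
    (Finset.mem_insert_self _ _) ?_ ?_ ?_ ?_ ?_ ?_ ?_ ?_ ?_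
  · simp [hn le_rfl]
  · simp [hn (by omega : p ≤ p + 2)]
  · rw [Finset.card_insert_of_notMem (hn (by omega))]
    have := h.card_le
    omega
  · unfold tailWeight; split_ifs <;> omega
  · unfold tailWeight; split_ifs <;> omega
  · unfold lower tailWeight; split_ifs <;> omega
  · intro i hi; unfold lower tailWeight; split_ifs <;> omega
  · intro i hi; unfold lower tailWeight; split_ifs <;> omega
  · exact h.fst j hj

/-- Killing `p + 2` in the second chain separates the edge `{p, p + 1}`, on which no condition
remains, and leaves weight `j` on the edge `{p + 3, p + 4}`. -/
lemma SideDepth.second (hu : 1 ≤ u) (hut : u ≤ t) (hS : S ⊆ Finset.range p)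
    (h : SideDepth K N t p u e S) (hp2 : p + 2 < N) (j : ℕ)
    (hj : j < t - u + 1) :
    DepthGE K e (pathSet N (lower (lower (tailWeight t p u) (p + 1) (u - 1)) (p + 2) j)
      (insert (p + 2) S)) := by
  have hn := fun {i : ℕ} => notMem_of_le (i := i) hS
  refine depthGE_pathSet_of_killed (q := p + 1) (w' := tailWeight t (p + 3) j)
    (insert_subset_range hS hp2 (by omega))
    (Finset.mem_insert_self _ _) ?_ ?_ ?_ ?_ ?_ ?_ ?_ ?_ ?_
  · simp [hn (by omega : p ≤ p + 1)]
  · simp [hn (by omega : p ≤ p + 1 + 2)]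
  · rw [Finset.card_insert_of_notMem (hn (by omega))]
    have := h.card_le
    omega
  · unfold tailWeight; split_ifs <;> omega
  · unfold tailWeight; split_ifs <;> omega
  · unfold lower tailWeight; split_ifs <;> omega
  · intro i hi; unfold lower tailWeight; split_ifs <;> omega
  · intro i hi; unfold lower tailWeight; split_ifs <;> omega
  · exact h.snd hp2 j hj

lemma lower_eq_splitWeight (hu : 1 ≤ u) (hut : u ≤ t) :
    pathSet N (lower (lower (tailWeight t p u) (p + 1) (u - 1)) (p + 2) (t - u + 1)) S =
      pathSet N (splitWeight t p u) S := by
  refine pathSet_congr _ fun i _ => ?_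
  simp only [lower, tailWeight, splitWeight]
  split_ifs <;> omega

/-- When the path ends at `p + 1`, the first chain alone reaches `splitWeight`. -/
lemma lower_eq_splitWeight_last (hu : 1 ≤ u) (hp2 : ¬ p + 2 < N) :
    pathSet N (lower (tailWeight t p u) (p + 1) (u - 1)) S =
      pathSet N (splitWeight t p u) S := by
  refine pathSet_congr _ fun i _ => ?_
  simp only [lower, tailWeight, splitWeight]
  split_ifs <;> omega

/-- A depth bound for the partially peeled path passes to the one with its first edge split off. -/
lemma step_down (hp : p + 1 < N) (hu : 1 ≤ u) (hut : u ≤ t) (hS : S ⊆ Finset.range p)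
    (h : SideDepth K N t p u e S)
    (hd : DepthGE K (e + 1) (pathSet N (tailWeight t p u) S)) :
    DepthGE K (e + 1) (pathSet N (splitWeight t p u) S) := by
  have h1 := chain_down hp (notMem_of_le hS (by omega)) hd (SideDepth.first hp hut hS h)
  by_cases hp2 : p + 2 < N
  · rw [← lower_eq_splitWeight hu hut]
    exact chain_down hp2 (notMem_of_le hS (by omega)) h1 (SideDepth.second hu hut hS h hp2)
  · rwa [← lower_eq_splitWeight_last hu hp2]

/-- A depth bound for the path with its first edge split off passes back to the partially peeled
path. -/
lemma step_up (hp : p + 1 < N) (hu : 1 ≤ u) (hut : u ≤ t) (hS : S ⊆ Finset.range p)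
    (h : SideDepth K N t p u e S)
    (hd : DepthGE K e (pathSet N (splitWeight t p u) S)) :
    DepthGE K e (pathSet N (tailWeight t p u) S) := by
  refine chain_up hp (notMem_of_le hS (by omega)) (SideDepth.first hp hut hS h) ?_
  by_cases hp2 : p + 2 < N
  · refine chain_up hp2 (notMem_of_le hS (by omega)) (SideDepth.second hu hut hS h hp2) ?_
    rwa [lower_eq_splitWeight hu hut]
  · rwa [lower_eq_splitWeight_last hu hp2]

end Step

end Path

/-! ### The number of edges split off -/

section Count

/-- The number of edges split off from a path with `n` vertices, first weight `u` and later
weights `t`, when each splitting removes two vertices and lowers the first weight by one, while a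
first weight `0` is replaced by `t` at the cost of one vertex. When it is positive, the quotient by
the corresponding ideal and by a set `S` of earlier variables has depth
`N - |S| - 1 - peelCount t n u`. -/
def peelCount (t : ℕ) : ℕ → ℕ → ℕ
  | 0, _ => 0
  | 1, _ => 0
  | n + 2, 0 => peelCount t (n + 1) t
  | n + 2, u + 1 => 1 + peelCount t n u

variable {t : ℕ}

lemma two_mul_peelCount_le (n u : ℕ) : 2 * peelCount t n u ≤ n := by
  induction n using Nat.strong_induction_on generalizing u with
  | _ n ih =>
    match n, u with
    | 0, _ => simp [peelCount]
    | 1, _ => simp [peelCount]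
    | n + 2, 0 =>
      have := ih (n + 1) (by omega) t
      rw [peelCount]; omega
    | n + 2, u + 1 =>
      have := ih n (by omega) u
      rw [peelCount]; omega

/-- `peelCount t n u` is monotone in `n` and in `u ≤ t`, and never varies by more than one between
neighbouring arguments. -/
lemma peelCount_compare (ht : 1 ≤ t) (n : ℕ) :
    (∀ u v, u ≤ v → v ≤ t → peelCount t n u ≤ peelCount t n v) ∧
    (∀ u v, u ≤ t → v ≤ t → peelCount t n u ≤ peelCount t (n + 1) v) ∧
    (∀ u v, u ≤ t → v ≤ t → peelCount t n u ≤ 1 + peelCount t n v) ∧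
    (∀ u v, u ≤ t → v ≤ t → peelCount t (n + 1) u ≤ 1 + peelCount t n v) := by
  induction n using Nat.strong_induction_on with
  | _ n ih =>
    match n with
    | 0 => simp [peelCount]
    | 1 =>
      refine ⟨by simp [peelCount], by simp [peelCount], by simp [peelCount], ?_⟩
      rintro (_ | u) v hu hv <;> simp [peelCount]
    | n + 2 =>
      obtain ⟨a0, c0, d0, b0⟩ := ih n (by omega)
      obtain ⟨a1, c1, d1, b1⟩ := ih (n + 1) (by omega)
      have a2 : ∀ u v, u ≤ v → v ≤ t → peelCount t (n + 2) u ≤ peelCount t (n + 2) v := by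
        rintro (_ | u) (_ | v) huv hv
        · exact le_rfl
        · exact b0 t v le_rfl (by omega)
        · omega
        · exact Nat.add_le_add_left (a0 u v (by omega) (by omega)) 1
      have c2 : ∀ u v, u ≤ t → v ≤ t → peelCount t (n + 2) u ≤ peelCount t (n + 2 + 1) v := by
        rintro u (_ | v) hu hv
        · exact a2 u t hu le_rfl
        rcases u with _ | u
        · exact d1 t v le_rfl (by omega)
        · exact Nat.add_le_add_left (c0 u v (by omega) (by omega)) 1
      have d2 : ∀ u v, u ≤ t → v ≤ t → peelCount t (n + 2) u ≤ 1 + peelCount t (n + 2) v := by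
        rintro (_ | u) v hu hv
        · exact (c1 t v le_rfl hv).trans (Nat.le_add_left _ _)
        · exact Nat.add_le_add_left
            ((c0 u 0 (by omega) (by omega)).trans (c1 0 v (by omega) hv)) 1
      refine ⟨a2, c2, d2, ?_⟩
      rintro (_ | u) v hu hv
      · exact d2 t v le_rfl hv
      · exact Nat.add_le_add_left (c1 u v (by omega) hv) 1

lemma peelCount_of_le (n u : ℕ) (h : n ≤ 2 * u + 1) : peelCount t n u = n / 2 := by
  induction u generalizing n with
  | zero =>
    obtain rfl | rfl : n = 0 ∨ n = 1 := by omega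
    · rfl
    · rfl
  | succ u ih =>
    match n with
    | 0 => rfl
    | 1 => rfl
    | n + 2 => rw [peelCount, ih n (by omega)]; omega

lemma peelCount_add (u r : ℕ) : peelCount t (2 * u + 1 + r + 1) u = u + peelCount t (r + 1) t := by
  induction u with
  | zero =>
    rw [show 2 * 0 + 1 + r + 1 = r + 2 by omega, peelCount, zero_add]
  | succ u ih =>
    rw [show 2 * (u + 1) + 1 + r + 1 = (2 * u + 1 + r + 1) + 2 by omega, peelCount, ih]
    omega

/-- Within one period of `2 * t + 1` vertices, `t` edges are split off. -/
lemma peelCount_period (q r : ℕ) (hr : 1 ≤ r) (hr' : r ≤ 2 * t + 1) :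
    peelCount t (q * (2 * t + 1) + r) t = q * t + r / 2 := by
  induction q with
  | zero => rw [zero_mul, zero_mul, zero_add, zero_add, peelCount_of_le _ _ hr']
  | succ q ih =>
    rw [show (q + 1) * (2 * t + 1) + r = 2 * t + 1 + (q * (2 * t + 1) + r - 1) + 1 by
      rw [add_one_mul]; omega, peelCount_add,
      show q * (2 * t + 1) + r - 1 + 1 = q * (2 * t + 1) + r by omega, ih]
    ring

lemma peelCount_even (k : ℕ) (hk : 1 ≤ k) :
    peelCount t (2 * k) t + (k + t) / (2 * t + 1) = k := by
  obtain ⟨q, r, hr, hr', h⟩ : ∃ q r, 1 ≤ r ∧ r ≤ 2 * t + 1 ∧ 2 * k = q * (2 * t + 1) + r := by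
    refine ⟨(2 * k - 1) / (2 * t + 1), (2 * k - 1) % (2 * t + 1) + 1, by omega,
      Nat.mod_lt _ (by omega), ?_⟩
    have := Nat.div_add_mod' (2 * k - 1) (2 * t + 1)
    omega
  rw [h, peelCount_period q r hr hr']
  have hq : (k + t) / (2 * t + 1) = (q + 1) / 2 := by
    rw [Nat.div_eq_iff (by omega)]
    rcases Nat.even_or_odd' q with ⟨c, rfl | rfl⟩
    · rw [show (2 * c + 1) / 2 = c by omega]
      have : 2 * c * (2 * t + 1) = 2 * (c * (2 * t + 1)) := by ring
      omega
    · rw [show (2 * c + 1 + 1) / 2 = c + 1 by omega]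
      have : (2 * c + 1) * (2 * t + 1) = 2 * (c * (2 * t + 1)) + (2 * t + 1) := by ring
      have := add_one_mul c (2 * t + 1)
      omega
  rw [hq]
  have : q * (2 * t + 1) = 2 * (q * t) + q := by ring
  omega

end Count

/-! ### Depth of the peeled paths -/

section Depth

variable {N t : ℕ} {K : Type*} [Field K]

lemma pathSet_tailWeight_zero (p : ℕ) (S : Finset ℕ) :
    pathSet N (tailWeight t p 0) S = pathSet N (tailWeight t (p + 1) t) S := by
  refine pathSet_congr _ fun i _ => ?_
  unfold tailWeight; split_ifs <;> omega

lemma pathSet_tailWeight_eq_univ (ht : 1 ≤ t) {p u : ℕ} (S : Finset ℕ)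
    (h : peelCount t (N - p) u = 0) : pathSet N (tailWeight t p u) S = Set.univ := by
  have : N - p ≤ 1 ∨ (N - p = 2 ∧ u = 0) := by
    generalize hn : N - p = n at h
    match n, u with
    | 0, _ => omega
    | 1, _ => omega
    | 2, 0 => omega
    | n + 3, 0 =>
      obtain ⟨s, rfl⟩ := Nat.exists_eq_add_of_le' ht
      rw [peelCount, peelCount] at h
      omega
    | n + 2, u + 1 =>
      rw [peelCount] at h
      omega
  refine pathSet_eq_univ _ fun i hi => ?_
  unfold tailWeight; split_ifs <;> omega

/-- The ideals met along the chains have the expected depth as soon as the lower bound on the depth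
is known for shorter paths. -/
lemma sideDepth_of (ht : 1 ≤ t) {p u e : ℕ} {S : Finset ℕ} (hu : 1 ≤ u)
    (hut : u ≤ t) (hS : S ⊆ Finset.range p)
    (hd : e + S.card + 2 + peelCount t (N - (p + 2)) (u - 1) ≤ N)
    (ih : ∀ q j T, p < q → j ≤ t → T ⊆ Finset.range q →
      e + T.card + 1 + peelCount t (N - q) j ≤ N → DepthGE K e (pathSet N (tailWeight t q j) T)) :
    SideDepth K N t p u e S := by
  have hsub : ∀ q, p < q → insert q S ⊆ Finset.range (q + 1) := fun q hq =>
    Finset.insert_subset (by simp) (hS.trans (Finset.range_subset_range.2 (by omega)))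
  have hcard : ∀ q, p < q → (insert q S).card = S.card + 1 := fun q hq =>
    Finset.card_insert_of_notMem (notMem_of_le hS hq.le)
  refine ⟨by omega, fun j hj => ih _ _ _ (by omega) (by omega) (hsub _ (by omega)) ?_,
    fun hp2 j hj => ih _ _ _ (by omega) (by omega) (hsub _ (by omega)) ?_⟩
  · rw [hcard _ (by omega)]
    have := (peelCount_compare ht (N - (p + 2))).1 j (u - 1) hj.le (by omega)
    omega
  · rw [hcard _ (by omega)]
    have : peelCount t (N - (p + 3)) j ≤ peelCount t (N - (p + 2)) (u - 1) := by
      have := (peelCount_compare ht (N - (p + 3))).2.1 j (u - 1) (by omega) (by omega)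
      rwa [show N - (p + 3) + 1 = N - (p + 2) by omega] at this
    omega

lemma peelCount_pos_eq {n u : ℕ} (hn : 2 ≤ n) (hu : 1 ≤ u) :
    peelCount t n u = 1 + peelCount t (n - 2) (u - 1) := by
  obtain ⟨n, rfl⟩ := Nat.exists_eq_add_of_le' hn
  obtain ⟨u, rfl⟩ := Nat.exists_eq_add_of_le' hu
  rw [peelCount]
  rfl

lemma peelCount_zero_eq {n : ℕ} (hn : 2 ≤ n) : peelCount t n 0 = peelCount t (n - 1) t := by
  obtain ⟨n, rfl⟩ := Nat.exists_eq_add_of_le' hn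
  rw [peelCount]
  rfl

lemma card_insert_pair {p : ℕ} {S : Finset ℕ} (hS : S ⊆ Finset.range p) :
    (insert p (insert (p + 1) S)).card = S.card + 2 := by
  have hn := fun {i : ℕ} => notMem_of_le (i := i) hS
  rw [Finset.card_insert_of_notMem, Finset.card_insert_of_notMem (hn (by omega))]
  simp [hn le_rfl]

lemma insert_pair_subset {p q : ℕ} {S : Finset ℕ} (hS : S ⊆ Finset.range p) (hq : p + 2 ≤ q) :
    insert p (insert (p + 1) S) ⊆ Finset.range q :=
  Finset.insert_subset (Finset.mem_range.2 (by omega)) <|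
    Finset.insert_subset (Finset.mem_range.2 (by omega))
      (hS.trans (Finset.range_subset_range.2 (by omega)))

/-- `depth ≥ N - |S| - 1 - peelCount`. -/
lemma depthGE_lower (ht : 1 ≤ t) (n p u d : ℕ) (S : Finset ℕ) (hn : N - p = n) (hut : u ≤ t)
    (hS : S ⊆ Finset.range p) (hd : d + S.card + 1 + peelCount t (N - p) u ≤ N) :
    DepthGE K d (pathSet N (tailWeight t p u) S) := by
  induction n using Nat.strong_induction_on generalizing p u d S with
  | _ n ih =>
    by_cases hn2 : N - p ≤ 1
    · rw [pathSet_eq_univ]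
      · exact depthGE_univ d
      · intro i hi
        unfold tailWeight
        rw [if_pos (by omega)]
    rcases Nat.eq_zero_or_pos u with rfl | hu
    · rw [pathSet_tailWeight_zero]
      refine ih _ (by omega) (p + 1) t d S rfl le_rfl
        (hS.trans (Finset.range_subset_range.2 (by omega))) ?_
      rwa [peelCount_zero_eq (by omega)] at hd
    have hp : p + 1 < N := by omega
    rw [peelCount_pos_eq (by omega) hu, Nat.sub_sub] at hd
    refine step_up hp hu hut hS (sideDepth_of ht hu hut hS (by omega)
      fun q j T hq hj hT h => ih _ (by omega) q j _ T rfl hj hT h) ?_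
    rw [pathSet_splitWeight hp]
    have hsub := insert_pair_subset hS le_rfl
    have hcard := card_insert_pair hS
    refine DepthGE.inter (isUpperSet_pathSet _ _) (isUpperSet_killSet _) ?_ ?_ ?_
    · exact ih _ (by omega) (p + 2) (u - 1) d S rfl (by omega)
        (hS.trans (Finset.range_subset_range.2 (by omega))) (by omega)
    · rw [depthGE_killSet_iff (insert_pair_subset hS (by omega)), hcard]
      omega
    · rw [pathSet_union_killSet _
        ((Finset.subset_insert _ _).trans (Finset.subset_insert _ _))]
      rcases Nat.eq_zero_or_pos d with rfl | hd0
      · exact depthGE_zero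
      · exact ih _ (by omega) (p + 2) (u - 1) (d - 1) _ rfl (by omega) hsub (by omega)

/-- `depth ≤ N - |S| - 1 - peelCount`: too large a depth would pass to the intersection of the
shorter path ideal with `(x_p, x_{p+1})` and then, by Mayer-Vietoris, to their sum, which is again a
peeled path ideal. -/
lemma depthGE_upper (ht : 1 ≤ t) (n p u d : ℕ) (S : Finset ℕ) (hn : N - p = n) (hut : u ≤ t)
    (hS : S ⊆ Finset.range p) (hpos : 1 ≤ peelCount t (N - p) u)
    (hd : DepthGE K d (pathSet N (tailWeight t p u) S)) :
    d + S.card + 1 + peelCount t (N - p) u ≤ N := by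
  induction n using Nat.strong_induction_on generalizing p u d S with
  | _ n ih =>
    have hle := two_mul_peelCount_le (t := t) (N - p) u
    have hn2 : 2 ≤ N - p := by omega
    rcases Nat.eq_zero_or_pos u with rfl | hu
    · rw [peelCount_zero_eq (by omega), Nat.sub_sub] at hpos ⊢
      rw [pathSet_tailWeight_zero] at hd
      exact ih _ (by omega) (p + 1) t d S rfl le_rfl
        (hS.trans (Finset.range_subset_range.2 (by omega))) hpos hd
    have hp : p + 1 < N := by omega
    have hS' : S ⊆ Finset.range (p + 2) := hS.trans (Finset.range_subset_range.2 (by omega))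
    rw [peelCount_pos_eq (by omega) hu, Nat.sub_sub] at hle ⊢
    have hcS := Finset.card_le_card hS
    rw [Finset.card_range] at hcS
    by_contra hcon
    -- It suffices to exclude the value `e + 1` exceeding the claimed depth by one.
    obtain ⟨e, he⟩ : ∃ e, e + 1 + S.card + 1 + peelCount t (N - (p + 2)) (u - 1) = N :=
      ⟨N - (S.card + 2 + peelCount t (N - (p + 2)) (u - 1)), by omega⟩
    have hd := hd.mono (show e + 1 ≤ d by omega)
    have h1 := step_down hp hu hut hS (sideDepth_of ht hu hut hS (by omega)
      fun q j T hq hj hT h => depthGE_lower ht _ q j _ T rfl hj hT h) hd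
    rw [pathSet_splitWeight hp] at h1
    have hcard := card_insert_pair hS
    rcases Nat.eq_zero_or_pos (peelCount t (N - (p + 2)) (u - 1)) with h0 | h0
    · rw [pathSet_tailWeight_eq_univ ht _ h0, Set.univ_inter,
        depthGE_killSet_iff (insert_pair_subset hS (by omega)), hcard] at h1
      omega
    -- The sum of the two ideals is a shorter path ideal, of depth one more than allowed.
    · have h2 := DepthGE.union (isUpperSet_pathSet _ _) (isUpperSet_killSet _) h1
        (depthGE_lower ht _ _ _ _ _ rfl (by omega) hS' (by omega))
        ((depthGE_killSet_iff (insert_pair_subset hS (by omega)) _).2 (by omega))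
      rw [pathSet_union_killSet _
        ((Finset.subset_insert _ _).trans (Finset.subset_insert _ _))] at h2
      have := ih _ (by omega) (p + 2) (u - 1) _ _ rfl (by omega)
        (insert_pair_subset hS le_rfl) h0 h2
      omega

end Depth

/-! ### Powers of the cover ideal of a path -/

section Powers

variable {N : ℕ} {K : Type*} [Field K]

open scoped Pointwise

lemma monIdeal_mul (U V : Set (Fin N →₀ ℕ)) :
    monIdeal K U * monIdeal K V = monIdeal K (U + V) := by
  rw [monIdeal, monIdeal, monIdeal, Ideal.span_mul_span']
  congr 1
  ext p
  simp only [Set.mem_mul, Set.mem_image, Set.mem_add]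
  constructor
  · rintro ⟨_, ⟨a, ha, rfl⟩, _, ⟨b, hb, rfl⟩, rfl⟩
    exact ⟨a + b, ⟨a, ha, b, hb, rfl⟩, by rw [monomial_mul, one_mul]⟩
  · rintro ⟨_, ⟨a, ha, b, hb, rfl⟩, rfl⟩
    exact ⟨_, ⟨a, ha, rfl⟩, _, ⟨b, hb, rfl⟩, by rw [monomial_mul, one_mul]⟩

lemma mem_pathSet_const {t : ℕ} {a : Fin N →₀ ℕ} :
    a ∈ pathSet N (fun _ => t) ∅ ↔ ∀ i, i + 1 < N → t ≤ ex a i + ex a (i + 1) := by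
  simp [pathSet]

lemma coverIdeal_pathGraph :
    coverIdeal K (SimpleGraph.pathGraph N) = monIdeal K (pathSet N (fun _ => 1) ∅) := by
  ext p
  rw [mem_monIdeal (isUpperSet_pathSet _ _)]
  simp only [coverIdeal, Submodule.mem_iInf, mem_pathSet_const]
  have key : ∀ u v : Fin N, p ∈ Ideal.span {(X u : MvPolynomial (Fin N) K), X v} ↔
      ∀ a, coeff a p ≠ 0 → 1 ≤ ex a u + ex a v := by
    intro u v
    rw [← Set.image_pair, mem_ideal_span_X_image]
    refine forall_congr' fun a => ?_
    rw [mem_support_iff]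
    refine imp_congr_right fun _ => ?_
    simp [ex]
    omega
  simp only [key, SimpleGraph.pathGraph_adj]
  constructor
  · intro h a ha i hi
    exact h ⟨i, by omega⟩ ⟨i + 1, hi⟩ (Or.inl rfl) a ha
  · rintro h u v (huv | huv) a ha
    · have := h a ha u (by omega)
      rwa [huv] at this
    · have := h a ha v (by omega)
      rwa [huv, add_comm] at this

/-- The path is bipartite: a monomial with all edge sums at least `t + 1` is divisible by the
squarefree monomial on those even vertices where it is divisible by `x_i` and those odd vertices
where it is divisible by `x_i ^ (t + 1)`, which covers every edge and covers both ends only of edges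
with sum at least `t + 2`. -/
lemma pathSet_add (t : ℕ) :
    pathSet N (fun _ => t) ∅ + pathSet N (fun _ => 1) ∅ = pathSet N (fun _ => t + 1) ∅ := by
  ext a
  rw [Set.mem_add]
  constructor
  · rintro ⟨b, hb, c, hc, rfl⟩
    rw [mem_pathSet_const] at *
    intro i hi
    have := hb i hi
    have := hc i hi
    rw [ex_add, ex_add]
    omega
  · intro ha
    rw [mem_pathSet_const] at ha
    set c : Fin N →₀ ℕ := ofFn N fun i =>
      if i % 2 = 0 then (if 1 ≤ ex a i then 1 else 0) else (if t + 1 ≤ ex a i then 1 else 0) with hc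
    have hca : c ≤ a := by
      refine le_iff_ex.2 fun i hi => ?_
      rw [hc, ex_ofFn hi]
      split_ifs <;> omega
    obtain ⟨b, hb⟩ := exists_add_of_le hca
    have hex : ∀ i, ex a i = ex c i + ex b i := fun i => by rw [← ex_add, ← hb]
    refine ⟨b, ?_, c, ?_, by rw [hb, add_comm]⟩
    · rw [mem_pathSet_const]
      intro i hi
      have h1 := hex i
      have h2 := hex (i + 1)
      have h3 := ha i hi
      rw [hc, ex_ofFn (by omega)] at h1 h2
      split_ifs at h1 h2 <;> omega
    · rw [mem_pathSet_const]
      intro i hi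
      have h3 := ha i hi
      rw [hc, ex_ofFn (by omega), ex_ofFn hi]
      split_ifs <;> omega

lemma coverIdeal_pathGraph_pow (t : ℕ) :
    coverIdeal K (SimpleGraph.pathGraph N) ^ t = monIdeal K (pathSet N (fun _ => t) ∅) := by
  induction t with
  | zero =>
    rw [pow_zero, pathSet_eq_univ _ (fun _ _ => rfl), Ideal.one_eq_top, eq_comm,
      Ideal.eq_top_iff_one]
    exact Ideal.subset_span ⟨0, trivial, rfl⟩
  | succ t ih => rw [pow_succ, ih, coverIdeal_pathGraph, monIdeal_mul, pathSet_add]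

/-- A proper monomial ideal satisfies `DepthGE K d` exactly when there is a regular sequence of
length `d`, so `depthQuot` is the largest such `d`. -/
lemma depthQuot_monIdeal {U : Set (Fin N →₀ ℕ)} (hU : IsUpperSet U) (h0 : 0 ∉ U) {D : ℕ}
    (hD : ∀ d, DepthGE K d U ↔ d ≤ D) : depthQuot K N (monIdeal K U) = D := by
  have hle : monIdeal K U ≤ maxIdeal K N := by
    rw [← monIdeal_killSet_range, monIdeal, monIdeal]
    refine Ideal.span_mono (Set.image_mono fun a ha => ?_)
    by_contra hk
    refine h0 (hU (a := a) (le_iff_ex.2 fun i hi => ?_) ha)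
    by_contra hi'
    exact hk ⟨i, Finset.mem_range.2 hi, by omega⟩
  have hset : ∀ d, (∃ rs : List (MvPolynomial (Fin N) K), rs.length = d ∧
      (∀ r ∈ rs, r ∈ maxIdeal K N) ∧
      RingTheory.Sequence.IsRegular (MvPolynomial (Fin N) K ⧸ monIdeal K U) rs) ↔ d ≤ D :=
    fun d => (extVanish_iff_exists_isRegular hle maxIdeal_ne_top d).symm.trans (hD d)
  rw [depthQuot]
  simp only [hset]
  exact IsGreatest.csSup_eq ⟨le_refl D, fun _ h => h⟩

end Powers

/-! ### The depth formula -/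

/-- For the even path `P_n` with `n = 2k` (`k ≥ 1`) and `1 ≤ t ≤ k - 1`,
`depth(R/J(P_n)^t) = k - 1 + ⌊(k + t)/(2t + 1)⌋`. -/
theorem depth_coverIdeal_pow_even_path (K : Type*) [Field K] (k n t : ℕ)
    (hk : 1 ≤ k) (hn : n = 2 * k) (ht1 : 1 ≤ t) (ht2 : t ≤ k - 1) :
    depthQuot K n ((coverIdeal K (SimpleGraph.pathGraph n)) ^ t)
      = k - 1 + (k + t) / (2 * t + 1) := by
  have hcount := peelCount_even (t := t) k hk
  rw [← hn] at hcount
  have hpos : 1 ≤ peelCount t n t := by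
    rw [peelCount_pos_eq (by omega) ht1]
    omega
  have hS : (∅ : Finset ℕ) ⊆ Finset.range 0 := Finset.empty_subset _
  have htail : pathSet n (fun _ => t) ∅ = pathSet n (tailWeight t 0 t) ∅ :=
    pathSet_congr _ fun i _ => by unfold tailWeight; split_ifs <;> omega
  rw [coverIdeal_pathGraph_pow]
  refine depthQuot_monIdeal (isUpperSet_pathSet _ _) ?_ fun d => ?_
  · rw [mem_pathSet_const]
    intro h
    have := h 0 (by omega)
    rw [ex_zero, ex_zero] at this
    omega
  · rw [htail]
    constructor
    · intro h
      have := depthGE_upper ht1 n 0 t d ∅ rfl le_rfl hS hpos h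
      rw [Finset.card_empty, Nat.sub_zero] at this
      omega
    · intro h
      refine depthGE_lower ht1 n 0 t d ∅ rfl le_rfl hS ?_
      rw [Finset.card_empty, Nat.sub_zero]
      omega
end

section
/- Let K be a field, k ≥ 1 an integer, n = 2k, R = K[x_1,…,x_n], and let J(P_n) be the cover ideal of the path graph P_n. Then for every integer t ≥ k, depth(R/J(P_n)^t) = k − 1. -/
/-!
Write `n = 2k` and `J = J(P_n)`; vertices are numbered from `0`, so the edges are `{i, i + 1}` with
`0 ≤ i < n - 1`, and the path is bipartite with even and odd vertices as its two sides. Bipartiteness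
gives `J ^ t = ⋂ (x_i, x_{i+1}) ^ t`: a monomial `x^m` lies in `J ^ t` iff `t ≤ m u + m v` for every
edge `{u, v}`, because such an `m` dominates the sum of the `t` vertex covers
`{u even | l < m u} ∪ {v odd | t ≤ m v + l}`, `0 ≤ l < t` (`mem_coverIdeal_pow_iff`).

*Lower bound.* Once the exponents of the odd variables are fixed, membership in `J ^ t` becomes a
system of independent lower bounds `e_j ≤ m (2j)` on the exponents of the even ones, that is,
divisibility by a single monomial. A polynomial ring modulo one monomial admits the regular sequence
`x_0 - x_2, x_2 - x_4, …, x_{2k-4} - x_{2k-2}`: modulo the first `i` differences the variables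
`x_0, …, x_{2i}` become equal and the monomial stays a monomial, to which `x_{2i} - x_{2i+2}` is
coprime (`isWeaklyRegular_diffList`).

*Upper bound.* If `M` has a weakly regular sequence of length `> p` whose members have powers in
the ideal generated by a family `y`, then every Koszul `p`-cocycle of `y` on `M` is a coboundary
(`mem_koszulB_of_isWeaklyRegular`). On `M = R / J ^ t`, with `y` the family `x_v ^ t`, there is a
`(k-1)`-cocycle which is not a coboundary. Let `f` have exponents `j` at the vertex `2j` and
`t - 1 - j` at `2j + 1`; here `k ≤ t` is used. Then `f` sums to `t - 1` on each of the `k` disjoint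
edges `{2j, 2j + 1}` and to `t` on the other edges, so `J ^ t : x^f` is the intersection of the `k`
ideals `(x_{2j}, x_{2j+1})`. In the multidegrees above `f` the Koszul complex is therefore the cochain
complex of the sets of vertices which miss one of the `k` disjoint edges, a space with the homotopy
type of the boundary of a `(k-1)`-simplex, and the cocycle is the fundamental class of that sphere,
written as a determinant.
-/

open MvPolynomial

/-! ### Koszul cochains and regular sequences -/

section Koszul
open scoped Pointwise
variable {R : Type*} [CommRing R] {ι : Type*} (y : ι → R)

/-- The Koszul differential of the family `y` on `M`. The `p`-cochains are all functions on `p`-tuples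
of indices, not only the alternating ones. -/
def koszulD (M : Type*) [AddCommGroup M] [Module R M] (p : ℕ) :
    ((Fin p → ι) → M) →ₗ[R] ((Fin (p + 1) → ι) → M) where
  toFun z J := ∑ l : Fin (p + 1), (-1 : R) ^ (l : ℕ) • y (J l) • z (fun i => J (l.succAbove i))
  map_add' z w := by
    funext J
    simp only [Pi.add_apply, smul_add, Finset.sum_add_distrib]
  map_smul' c z := by
    funext J
    simp only [Pi.smul_apply, RingHom.id_apply, Finset.smul_sum]
    refine Finset.sum_congr rfl fun l _ => ?_
    rw [smul_comm c, smul_comm c]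

/-- The Koszul `p`-coboundaries of the family `y` on `M`; in degree `0` only `0`. -/
def koszulB (M : Type*) [AddCommGroup M] [Module R M] :
    (p : ℕ) → Submodule R ((Fin p → ι) → M)
  | 0 => ⊥
  | p + 1 => LinearMap.range (koszulD y M p)

variable {M : Type*} [AddCommGroup M] [Module R M]

lemma koszulD_apply (p : ℕ) (z : (Fin p → ι) → M) (J : Fin (p + 1) → ι) :
    koszulD y M p z J =
      ∑ l : Fin (p + 1), (-1 : R) ^ (l : ℕ) • y (J l) • z (fun i => J (l.succAbove i)) := rfl

lemma koszulD_zero_cons (z : (Fin 0 → ι) → M) (j : ι) (J : Fin 0 → ι) :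
    koszulD y M 0 z (Fin.cons j J) = y j • z J := by
  simp [koszulD_apply]

/-- The Cartan formula: contraction with the index `j` is a homotopy between `0` and multiplication
by `y j`. -/
lemma koszulD_cons (p : ℕ) (z : (Fin (p + 1) → ι) → M) (j : ι) (J : Fin (p + 1) → ι) :
    koszulD y M (p + 1) z (Fin.cons j J) =
      y j • z J - koszulD y M p (fun J' => z (Fin.cons j J')) J := by
  rw [koszulD_apply, koszulD_apply, Fin.sum_univ_succ, sub_eq_add_neg, ← Finset.sum_neg_distrib]
  congr 1
  · simp
  · refine Finset.sum_congr rfl fun l _ => ?_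
    have : (fun i => (Fin.cons j J : Fin (p + 2) → ι) (l.succ.succAbove i)) =
        Fin.cons j (fun i => J (l.succAbove i)) := by
      funext i
      refine Fin.cases ?_ (fun i => ?_) i
      · simp
      · simp
    rw [this]
    simp [pow_succ]

lemma koszulD_koszulD (p : ℕ) (z : (Fin p → ι) → M) :
    koszulD y M (p + 1) (koszulD y M p z) = 0 := by
  induction p with
  | zero =>
    funext J
    induction J using Fin.consCases with
    | _ j J =>
      rw [koszulD_cons]
      have : (fun J' => koszulD y M 0 z (Fin.cons j J')) = y j • z := by
        funext J'
        rw [koszulD_zero_cons, Pi.smul_apply]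
      rw [this, map_smul]
      simp
  | succ p ih =>
    funext J
    induction J using Fin.consCases with
    | _ j J =>
      rw [koszulD_cons]
      have : (fun J' => koszulD y M (p + 1) z (Fin.cons j J')) =
          y j • z - koszulD y M p (fun J' => z (Fin.cons j J')) := by
        funext J'
        rw [koszulD_cons, Pi.sub_apply, Pi.smul_apply]
      rw [this, map_sub, map_smul, ih]
      simp

lemma koszulD_of_mem_koszulB {p : ℕ} {z : (Fin p → ι) → M} (hz : z ∈ koszulB y M p) :
    koszulD y M p z = 0 := by
  cases p with
  | zero => rw [(Submodule.mem_bot R).1 hz, map_zero]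
  | succ p =>
    obtain ⟨w, rfl⟩ := hz
    exact koszulD_koszulD y p w

/-- The ideal generated by `y` annihilates Koszul cohomology. -/
lemma smul_mem_koszulB {p : ℕ} {z : (Fin p → ι) → M} (hz : koszulD y M p z = 0) {c : R}
    (hc : c ∈ Ideal.span (Set.range y)) : c • z ∈ koszulB y M p := by
  have key : Ideal.span (Set.range y) ≤
      (koszulB y M p).comap (LinearMap.toSpanSingleton R _ z) := by
    rw [Ideal.span_le]
    rintro _ ⟨j, rfl⟩
    change y j • z ∈ koszulB y M p
    cases p with
    | zero =>
      refine (Submodule.mem_bot R).2 (funext fun J => ?_)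
      rw [Pi.smul_apply, ← koszulD_zero_cons, hz]
      rfl
    | succ p =>
      refine ⟨fun J' => z (Fin.cons j J'), funext fun J => ?_⟩
      have := congrFun hz (Fin.cons j J)
      rw [koszulD_cons] at this
      exact (sub_eq_zero.1 this).symm
  exact key hc

lemma koszulD_comp {N : Type*} [AddCommGroup N] [Module R N] (f : M →ₗ[R] N) (p : ℕ)
    (z : (Fin p → ι) → M) : koszulD y N p (fun J => f (z J)) = fun J => f (koszulD y M p z J) := by
  funext J
  simp only [koszulD_apply, map_sum, map_smul]

/-- The projection `M → M / rM`, with its kernel described on families of elements of `M`. -/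
lemma exists_quotSMulTop_mk (M : Type*) [AddCommGroup M] [Module R M] (r : R) :
    ∃ q : M →ₗ[R] QuotSMulTop r M, Function.Surjective q ∧ (∀ x, q (r • x) = 0) ∧
      ∀ (α : Type _) (w : α → M), (∀ J, q (w J) = 0) → ∃ u : α → M, w = r • u := by
  refine ⟨Submodule.mkQ (r • (⊤ : Submodule R M)), Submodule.mkQ_surjective _, fun x => ?_,
    fun α w h => ?_⟩
  · exact (Submodule.Quotient.mk_eq_zero _).2 (Submodule.smul_mem_pointwise_smul _ _ _ trivial)
  · have : ∀ J, ∃ u, w J = r • u := fun J => by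
      obtain ⟨u, -, hu⟩ := (Submodule.mem_smul_pointwise_iff_exists _ _ _).1
        ((Submodule.Quotient.mk_eq_zero _).1 (h J))
      exact ⟨u, hu.symm⟩
    choose u hu using this
    exact ⟨u, funext hu⟩

/-- Koszul cohomology vanishes in degrees below the length of a weakly regular sequence whose members
lie in the radical of the ideal generated by the family. -/
lemma mem_koszulB_of_isWeaklyRegular (rs : List R) :
    ∀ {M : Type*} [AddCommGroup M] [Module R M] (p : ℕ) (z : (Fin p → ι) → M),
      RingTheory.Sequence.IsWeaklyRegular M rs → p < rs.length →
      (∀ r ∈ rs, ∃ N : ℕ, r ^ N ∈ Ideal.span (Set.range y)) →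
      koszulD y M p z = 0 → z ∈ koszulB y M p := by
  induction rs with
  | nil => intro M _ _ p z _ hp; simp at hp
  | cons r rs ih =>
    intro M _ _ p z hreg hp hrs hz
    rw [RingTheory.Sequence.isWeaklyRegular_cons_iff] at hreg
    obtain ⟨hr, hreg⟩ := hreg
    -- If `r • z'` is the coboundary of `w`, then `w` is a cocycle modulo `r`, hence a coboundary
    -- there, and cancelling `r` exhibits `z'` as a coboundary.
    have step : ∀ z' : (Fin p → ι) → M, koszulD y M p z' = 0 → r • z' ∈ koszulB y M p →
        z' ∈ koszulB y M p := by
      intro z' _ hrz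
      have canc : ∀ x : (Fin p → ι) → M, r • z' = r • x → z' = x := fun x h =>
        funext fun J => hr (congrFun h J)
      cases p with
      | zero =>
        have h0 : r • z' = 0 := (Submodule.mem_bot R).1 hrz
        have : z' = 0 := canc 0 (by rw [h0, smul_zero])
        exact (Submodule.mem_bot R).2 this
      | succ q =>
        obtain ⟨w, hw⟩ := hrz
        obtain ⟨π, hsurj, hπ0, hπ⟩ := exists_quotSMulTop_mk M r
        have hbar := ih q (fun J => π (w J)) hreg (by simpa using hp)
          (fun s hs => hrs s (List.mem_cons_of_mem _ hs)) (by
            rw [koszulD_comp, hw]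
            exact funext fun J => hπ0 _)
        cases q with
        | zero =>
          obtain ⟨u, rfl⟩ := hπ _ w (fun J => congrFun ((Submodule.mem_bot R).1 hbar) J)
          rw [map_smul] at hw
          exact ⟨u, (canc _ hw.symm).symm⟩
        | succ q =>
          obtain ⟨vbar, hv⟩ := hbar
          choose v hvv using fun J => hsurj (vbar J)
          obtain rfl : (fun J => π (v J)) = vbar := funext hvv
          rw [koszulD_comp] at hv
          obtain ⟨u, hu⟩ := hπ _ (w - koszulD y M q v) (fun J => by
            rw [Pi.sub_apply, map_sub, sub_eq_zero]
            exact (congrFun hv J).symm)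
          have : koszulD y M (q + 1) w = r • koszulD y M (q + 1) u := by
            rw [← map_smul, ← hu, map_sub, koszulD_koszulD, sub_zero]
          exact ⟨u, (canc _ (hw.symm.trans this)).symm⟩
    obtain ⟨N, hN⟩ := hrs r List.mem_cons_self
    have hpow := smul_mem_koszulB y hz hN
    clear hN
    induction N with
    | zero => simpa using hpow
    | succ N ihN =>
      refine ihN (step _ ?_ ?_)
      · rw [map_smul, hz, smul_zero]
      · rwa [smul_smul, ← pow_succ']
end Koszul

/-! ### Monomials in powers of the cover ideal of a path -/

section Pow
variable {K : Type*} [Field K]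

lemma le_of_mem_coverIdeal_pow {n : ℕ} {G : SimpleGraph (Fin n)} {u v : Fin n} (huv : G.Adj u v)
    (t : ℕ) {p : MvPolynomial (Fin n) K} (hp : p ∈ coverIdeal K G ^ t) {m : Fin n →₀ ℕ}
    (hm : coeff m p ≠ 0) : t ≤ m u + m v := by
  classical
  have hup : ∀ s : ℕ, IsUpperSet {m : Fin n →₀ ℕ | s ≤ m u + m v} := fun s m m' h hm =>
    le_trans (hm) (add_le_add (h u) (h v))
  have hmem : ∀ s (q : MvPolynomial (Fin n) K), q ∈ restrictSupportIdeal _ _ (hup s) ↔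
      ∀ m, coeff m q ≠ 0 → s ≤ m u + m v := fun s q =>
    ⟨fun h m hm => h (mem_support_iff.2 hm), fun h m hm => h m (mem_support_iff.1 hm)⟩
  have hle : ∀ s, coverIdeal K G ^ s ≤ restrictSupportIdeal _ _ (hup s) := by
    intro s
    induction s with
    | zero => exact fun q _ => (hmem 0 q).2 fun _ _ => Nat.zero_le _
    | succ s ih =>
      rw [pow_succ, Ideal.mul_le]
      intro f hf g hg
      have hJ : coverIdeal K G ≤ restrictSupportIdeal _ _ (hup 1) := by
        refine (iInf_le_of_le u <| iInf_le_of_le v <| iInf_le _ huv).trans ?_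
        rw [Ideal.span_le]
        rintro _ (rfl | rfl) <;>
        · refine (hmem 1 _).2 fun m hm => ?_
          rw [coeff_X] at hm
          obtain rfl : Finsupp.single _ 1 = m := by
            by_contra h
            exact hm (if_neg h)
          simp
      refine (hmem _ _).2 fun m hm => ?_
      rw [coeff_mul] at hm
      obtain ⟨⟨i, j⟩, hij, h⟩ := Finset.exists_ne_zero_of_sum_ne_zero hm
      rw [Finset.HasAntidiagonal.mem_antidiagonal] at hij
      have h1 := (hmem s f).1 (ih hf) i (left_ne_zero_of_mul h)
      have h2 := (hmem 1 g).1 (hJ hg) j (right_ne_zero_of_mul h)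
      dsimp only at hij
      rw [← hij, Finsupp.add_apply, Finsupp.add_apply]
      omega
  exact (hmem t p).1 (hle t hp) m hm

/-- For a path, the `t`-th ordinary power of the cover ideal contains the monomials of the `t`-th
symbolic power. -/
lemma monomial_mem_coverIdeal_pow {n t : ℕ} {m : Fin n →₀ ℕ}
    (hm : ∀ u v, (SimpleGraph.pathGraph n).Adj u v → t ≤ m u + m v) (c : K) :
    monomial m c ∈ coverIdeal K (SimpleGraph.pathGraph n) ^ t := by
  classical
  -- The sets `C l`, `l < t`, are vertex covers, and a vertex `i` lies in at most `m i` of them.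
  set C : ℕ → Finset (Fin n) := fun l => Finset.univ.filter fun i =>
    if (i : ℕ) % 2 = 0 then l < m i else t ≤ m i + l with hC
  have hcov : ∀ l, (∏ i ∈ C l, X i : MvPolynomial (Fin n) K) ∈
      coverIdeal K (SimpleGraph.pathGraph n) := by
    intro l
    simp only [coverIdeal, Ideal.mem_iInf]
    intro u v huv
    have h : u ∈ C l ∨ v ∈ C l := by
      have h1 := hm u v huv
      rw [SimpleGraph.pathGraph_adj] at huv
      simp only [hC, Finset.mem_filter, Finset.mem_univ, true_and]
      rcases Nat.mod_two_eq_zero_or_one u with hu | hu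
      · have hv : ¬ (v : ℕ) % 2 = 0 := by omega
        rw [if_pos hu, if_neg hv]
        omega
      · have hv : (v : ℕ) % 2 = 0 := by omega
        rw [if_neg (by omega), if_pos hv]
        omega
    rcases h with h | h
    · exact Ideal.mem_of_dvd _ (Finset.dvd_prod_of_mem _ h) (Ideal.subset_span (by simp))
    · exact Ideal.mem_of_dvd _ (Finset.dvd_prod_of_mem _ h) (Ideal.subset_span (by simp))
  have hprod : (∏ l ∈ Finset.range t, ∏ i ∈ C l, X i : MvPolynomial (Fin n) K) ∈
      coverIdeal K (SimpleGraph.pathGraph n) ^ t := by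
    have := Ideal.prod_mem_prod (s := Finset.range t)
      (I := fun _ => coverIdeal K (SimpleGraph.pathGraph n)) fun l _ => hcov l
    simpa using this
  have hdvd : (∏ l ∈ Finset.range t, ∏ i ∈ C l, X i : MvPolynomial (Fin n) K) ∣ monomial m 1 := by
    have h1 : (∏ l ∈ Finset.range t, ∏ i ∈ C l, X i : MvPolynomial (Fin n) K) =
        ∏ i, X i ^ ((Finset.range t).filter fun l => i ∈ C l).card := by
      simp_rw [hC, Finset.prod_filter]
      rw [Finset.prod_comm]
      refine Finset.prod_congr rfl fun i _ => ?_
      rw [← Finset.prod_filter, Finset.prod_const]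
      simp
    rw [h1, monomial_eq, C_1, one_mul, Finsupp.prod_fintype _ _ (fun _ => pow_zero _)]
    refine Finset.prod_dvd_prod_of_dvd _ _ fun i _ => pow_dvd_pow _ ?_
    by_cases hi : (i : ℕ) % 2 = 0
    · refine (Finset.card_le_card (t := Finset.range (m i)) fun l hl => ?_).trans (by simp)
      simpa [hC, hi] using (Finset.mem_filter.1 hl).2
    · refine (Finset.card_le_card (t := Finset.Ico (t - m i) t) fun l hl => ?_).trans
        (by rw [Nat.card_Ico]; omega)
      have h2 := (Finset.mem_filter.1 hl).2
      have h3 := (Finset.mem_filter.1 hl).1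
      simp only [hC, Finset.mem_filter, if_neg hi, Finset.mem_range, Finset.mem_Ico] at h2 h3 ⊢
      omega
  have := Ideal.mul_mem_left _ (MvPolynomial.C c) (Ideal.mem_of_dvd _ hdvd hprod)
  rwa [C_mul_monomial, mul_one] at this

lemma mem_coverIdeal_pow_iff {n : ℕ} (t : ℕ) (p : MvPolynomial (Fin n) K) :
    p ∈ coverIdeal K (SimpleGraph.pathGraph n) ^ t ↔
      ∀ m, coeff m p ≠ 0 → ∀ u v, (SimpleGraph.pathGraph n).Adj u v → t ≤ m u + m v := by
  refine ⟨fun hp m hm u v huv => le_of_mem_coverIdeal_pow huv t hp hm, fun h => ?_⟩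
  rw [p.as_sum]
  exact sum_mem fun m hm => monomial_mem_coverIdeal_pow (h m (mem_support_iff.1 hm)) _
end Pow

/-! ### A regular sequence of differences of variables -/

section Reg
variable {K : Type*} [Field K] {σ : Type*}

/-- The vanishing of `(x_u - x_v) q` on `S + v` propagates to `q` on `S`, provided that `S` is stable
under trading a factor `x_u` for `x_v`: repeated trading ends at an exponent without `x_u`. -/
lemma coeff_eq_zero_of_sub_mul {u v : σ} (huv : u ≠ v) (S : Set (σ →₀ ℕ))
    (hS : ∀ m, m + Finsupp.single u 1 ∈ S → m + Finsupp.single v 1 ∈ S)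
    (q : MvPolynomial σ K)
    (hq : ∀ m ∈ S, coeff (m + Finsupp.single v 1) ((X u - X v) * q) = 0) :
    ∀ m ∈ S, coeff m q = 0 := by
  classical
  suffices h : ∀ N : ℕ, ∀ m ∈ S, m u = N → coeff m q = 0 from fun m hm => h _ m hm rfl
  intro N
  induction N with
  | zero =>
    intro m hm h0
    have := hq m hm
    rw [sub_mul, coeff_sub, coeff_X_mul', add_comm m, coeff_X_mul] at this
    rw [if_neg (by simp [h0, huv.symm])] at this
    simpa using this
  | succ N ih =>
    intro m hm h0
    have := hq m hm
    obtain ⟨m', rfl⟩ : ∃ m', m = m' + Finsupp.single u 1 := by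
      refine ⟨m - Finsupp.single u 1, (tsub_add_cancel_of_le ?_).symm⟩
      rw [Finsupp.single_le_iff]; omega
    rw [sub_mul, coeff_sub, add_comm _ (Finsupp.single v 1), coeff_X_mul,
      show Finsupp.single v 1 + (m' + Finsupp.single u 1) =
        Finsupp.single u 1 + (m' + Finsupp.single v 1) by abel, coeff_X_mul,
      ih _ (hS _ hm) (by simpa [huv.symm] using h0)] at this
    simpa using this

variable {k : ℕ} (a : Fin (k + 1) → σ)

/-- The map of variables which identifies `a 0, …, a i` with `a i` and fixes all others. -/
noncomputable def collapse (i : Fin (k + 1)) (s : σ) : σ :=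
  open Classical in if ∃ j ≤ i, s = a j then a i else s

/-- The sequence `x_{a 0} - x_{a 1}, …, x_{a (k-1)} - x_{a k}`. -/
noncomputable def diffList (K : Type*) [Field K] : List (MvPolynomial σ K) :=
  List.ofFn fun i : Fin k => X (a i.castSucc) - X (a i.succ)

variable {a}

lemma collapse_of_le {i j : Fin (k + 1)} (h : j ≤ i) : collapse a i (a j) = a i :=
  if_pos ⟨j, h, rfl⟩

lemma collapse_of_lt (ha : a.Injective) {i j : Fin (k + 1)} (h : i < j) :
    collapse a i (a j) = a j := by
  refine if_neg ?_
  rintro ⟨l, hl, e⟩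
  exact absurd (ha e ▸ hl) (not_le.2 h)

lemma mapDomain_collapse_self (ha : a.Injective) (i : Fin (k + 1)) (m : σ →₀ ℕ) :
    m.mapDomain (collapse a i) (a i) = ∑ j ∈ Finset.Iic i, m (a j) := by
  classical
  induction m using Finsupp.induction_linear with
  | zero => simp
  | add f g hf hg => simp [Finsupp.mapDomain_add, hf, hg, Finset.sum_add_distrib]
  | single s c =>
    rw [Finsupp.mapDomain_single]
    simp only [Finsupp.single_apply]
    by_cases h : ∃ j ≤ i, s = a j
    · obtain ⟨j, hj, rfl⟩ := h
      rw [collapse_of_le hj, if_pos rfl, Finset.sum_eq_single j]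
      · simp
      · intro l _ hl
        exact if_neg fun e => hl (ha e.symm)
      · intro hj'
        exact absurd (Finset.mem_Iic.2 hj) hj'
    · have : collapse a i s = s := if_neg h
      rw [this, if_neg (fun e => h ⟨i, le_rfl, e⟩), Finset.sum_eq_zero]
      intro l hl
      exact if_neg fun e => h ⟨l, Finset.mem_Iic.1 hl, e⟩

lemma mapDomain_collapse_of_not (i : Fin (k + 1)) (m : σ →₀ ℕ) {s : σ}
    (hs : ¬ ∃ j ≤ i, s = a j) : m.mapDomain (collapse a i) s = m s := by
  classical
  induction m using Finsupp.induction_linear with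
  | zero => simp
  | add f g hf hg => simp [Finsupp.mapDomain_add, hf, hg]
  | single s' c =>
    rw [Finsupp.mapDomain_single]
    simp only [Finsupp.single_apply]
    by_cases h : ∃ j ≤ i, s' = a j
    · have : collapse a i s' = a i := if_pos h
      rw [this, if_neg, if_neg]
      · rintro rfl; exact hs h
      · rintro rfl; exact hs ⟨i, le_rfl, rfl⟩
    · have : collapse a i s' = s' := if_neg h
      rw [this]

lemma mem_ofList_take (i : Fin (k + 1)) {j : Fin k} (h : j.castSucc < i) :
    (X (a j.castSucc) - X (a j.succ) : MvPolynomial σ K) ∈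
      Ideal.ofList ((diffList a K).take i) := by
  refine Ideal.subset_span (List.mem_take_iff_getElem.2 ⟨j, ?_, ?_⟩)
  · simp only [diffList, List.length_ofFn, lt_min_iff]
    exact ⟨h, j.2⟩
  · simp [diffList]

lemma rename_eq_zero_of_mem (i : Fin (k + 1)) {p : MvPolynomial σ K}
    (hp : p ∈ Ideal.ofList ((diffList a K).take i)) : rename (collapse a i) p = 0 := by
  suffices h : Ideal.ofList ((diffList a K).take i) ≤
      RingHom.ker (rename (R := K) (collapse a i)).toRingHom from h hp
  refine Ideal.span_le.2 fun r hr => ?_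
  obtain ⟨j, hj, rfl⟩ := List.mem_take_iff_getElem.1 hr
  simp only [diffList, List.length_ofFn, lt_min_iff] at hj
  simp only [diffList, List.getElem_ofFn, SetLike.mem_coe, RingHom.mem_ker]
  change rename (collapse a i) _ = 0
  rw [map_sub, rename_X, rename_X, collapse_of_le, collapse_of_le, sub_self]
  · rw [Fin.le_def]; simp; omega
  · rw [Fin.le_def]; simp; omega

/-- Together with `rename_eq_zero_of_mem`: the first `i` differences generate the kernel of the
identification of the variables `a 0, …, a i`. -/
lemma sub_rename_mem (i : Fin (k + 1)) (p : MvPolynomial σ K) :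
    p - rename (collapse a i) p ∈ Ideal.ofList ((diffList a K).take i) := by
  have key : ∀ j ≤ i, (X (a j) - X (a i) : MvPolynomial σ K) ∈
      Ideal.ofList ((diffList a K).take i) := by
    intro j
    induction j using Fin.reverseInduction with
    | last =>
      intro h
      rw [Fin.last_le_iff.1 h, sub_self]
      exact zero_mem _
    | cast j ih =>
      intro h
      rcases h.eq_or_lt with h | h
      · rw [h, sub_self]
        exact zero_mem _
      · have := add_mem (mem_ofList_take (a := a) (K := K) i h) (ih (Fin.castSucc_lt_iff_succ_le.1 h))
        simpa using this
  have hom : (Ideal.Quotient.mkₐ K (Ideal.ofList ((diffList a K).take i))).comp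
      (rename (collapse a i)) = Ideal.Quotient.mkₐ K _ := by
    refine MvPolynomial.algHom_ext fun s => ?_
    simp only [AlgHom.comp_apply, rename_X, Ideal.Quotient.mkₐ_eq_mk]
    by_cases h : ∃ j ≤ i, s = a j
    · obtain ⟨j, hj, rfl⟩ := h
      rw [collapse_of_le hj]
      exact (Ideal.Quotient.eq.2 (key j hj)).symm
    · rw [show collapse a i s = s from if_neg h]
  exact Ideal.Quotient.eq.1 (DFunLike.congr_fun hom p).symm

/-- The condition on exponents which describes the image of the monomial ideal
`{x^m | ∀ j, e j m ≤ m (a j)}` once `a 0, …, a i` are identified with `a i`: the lower bounds on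
the exponents of these variables add up. -/
def Thr (a : Fin (k + 1) → σ) (e : Fin (k + 1) → (σ →₀ ℕ) → ℕ) (i : Fin (k + 1))
    (m : σ →₀ ℕ) : Prop :=
  ∑ j ∈ Finset.Iic i, e j m ≤ m (a i) ∧ ∀ j, i < j → e j m ≤ m (a j)

/-- Membership in `I` plus the first `i` differences, tested after identifying variables. -/
lemma mem_sup_ofList_iff (ha : a.Injective) {e : Fin (k + 1) → (σ →₀ ℕ) → ℕ}
    (he : ∀ j m m', (∀ s, s ∉ Set.range a → m s = m' s) → e j m = e j m')
    {I : Ideal (MvPolynomial σ K)}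
    (hI : ∀ p, p ∈ I ↔ ∀ m, coeff m p ≠ 0 → ∀ j, e j m ≤ m (a j))
    (i : Fin (k + 1)) (p : MvPolynomial σ K) :
    p ∈ I ⊔ Ideal.ofList ((diffList a K).take i) ↔
      ∀ m, coeff m (rename (collapse a i) p) ≠ 0 → Thr a e i m := by
  classical
  have hem : ∀ j (m : σ →₀ ℕ), e j (m.mapDomain (collapse a i)) = e j m := fun j m =>
    he j _ _ fun s hs => mapDomain_collapse_of_not i m
      (by rintro ⟨l, -, rfl⟩; exact hs ⟨l, rfl⟩)
  constructor
  · intro hp m hm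
    obtain ⟨p₁, h₁, p₂, h₂, rfl⟩ := Submodule.mem_sup.1 hp
    rw [map_add, rename_eq_zero_of_mem i h₂, add_zero] at hm
    obtain ⟨m', rfl, hm'⟩ := coeff_rename_ne_zero _ _ _ hm
    have h := (hI p₁).1 h₁ m' hm'
    refine ⟨?_, fun j hj => ?_⟩
    · rw [mapDomain_collapse_self ha]
      exact Finset.sum_le_sum fun j _ => (hem j m').trans_le (h j)
    · rw [hem, mapDomain_collapse_of_not]
      · exact h j
      · rintro ⟨l, hl, e'⟩
        exact absurd (ha e' ▸ hl) (not_le.2 hj)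
  · intro h
    rw [← sub_add_cancel p (rename (collapse a i) p)]
    refine add_mem (Ideal.mem_sup_right (sub_rename_mem i p)) ?_
    rw [(rename (collapse a i) p).as_sum]
    refine sum_mem fun m hm => ?_
    obtain ⟨hT1, hT2⟩ := h m (mem_support_iff.1 hm)
    generalize coeff m (rename (collapse a i) p) = c
    -- `m₁` spreads the factor `x_{a i} ^ (∑ e j m)` of `x^m` over `a 0, …, a i`; this puts the
    -- monomial into `I` and does not change its image.
    set w : σ →₀ ℕ := ∑ j ∈ Finset.Iic i, Finsupp.single (a j) (e j m) with hw
    set m₁ : σ →₀ ℕ := m - Finsupp.single (a i) (∑ j ∈ Finset.Iic i, e j m) + w with hm₁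
    have hwa : ∀ l, w (a l) = if l ≤ i then e l m else 0 := by
      intro l
      simp only [hw, Finsupp.finsetSum_apply, Finsupp.single_apply, ha.eq_iff]
      simp
    have hwn : ∀ s, s ∉ Set.range a → w s = 0 := by
      intro s hs
      simp only [hw, Finsupp.finsetSum_apply, Finsupp.single_apply]
      exact Finset.sum_eq_zero fun j _ => if_neg fun e' => hs ⟨j, e'⟩
    have hem₁ : ∀ j, e j m₁ = e j m := fun j => he j _ _ fun s hs => by
      have : a i ≠ s := fun e' => hs ⟨i, e'⟩
      simp [hm₁, hwn s hs, this]
    have hmap : m₁.mapDomain (collapse a i) = m.mapDomain (collapse a i) := by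
      have h2 : m = m - Finsupp.single (a i) (∑ j ∈ Finset.Iic i, e j m) +
          Finsupp.single (a i) (∑ j ∈ Finset.Iic i, e j m) := by
        rw [tsub_add_cancel_of_le]
        rwa [Finsupp.single_le_iff]
      conv_rhs => rw [h2]
      rw [hm₁, Finsupp.mapDomain_add, Finsupp.mapDomain_add]
      congr 1
      rw [Finsupp.mapDomain_single, collapse_of_le le_rfl, hw, Finsupp.mapDomain_finsetSum,
        Finsupp.single_finsetSum]
      refine Finset.sum_congr rfl fun j hj => ?_
      rw [Finsupp.mapDomain_single, collapse_of_le (Finset.mem_Iic.1 hj)]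
    have hmem : monomial m₁ c ∈ I := by
      refine (hI _).2 fun m' hm' j => ?_
      have : m₁ = m' := by
        by_contra hne
        rw [coeff_monomial, if_neg hne] at hm'
        exact hm' rfl
      subst this
      rw [hem₁]
      rcases le_or_gt j i with hj | hj
      · simp [hm₁, hwa, hj]
      · have : a i ≠ a j := ha.ne hj.ne
        refine (hT2 j hj).trans ?_
        simp [hm₁, this]
    have hd := sub_mem (sub_rename_mem (a := a) i (monomial m c))
      (sub_rename_mem (a := a) i (monomial m₁ c))
    rw [rename_monomial, rename_monomial, hmap, sub_sub_sub_cancel_right] at hd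
    rw [← sub_add_cancel (monomial m c) (monomial m₁ c)]
    exact add_mem (Ideal.mem_sup_right hd) (Ideal.mem_sup_left hmem)

lemma mk_mem_smul_top_iff {R : Type*} [CommRing R] (I A : Ideal R) (p : R) :
    Ideal.Quotient.mk I p ∈ (A • ⊤ : Submodule R (R ⧸ I)) ↔ p ∈ I ⊔ A := by
  rw [Ideal.smul_top_eq_map, Submodule.restrictScalars_mem, Ideal.Quotient.algebraMap_eq,
    ← Ideal.mem_comap, Ideal.comap_map_of_surjective _ Ideal.Quotient.mk_surjective,
    ← RingHom.ker_eq_comap_bot, Ideal.mk_ker, sup_comm]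

/-- If membership in the monomial ideal `I` is given by lower bounds `e j m` on the exponents of the
variables `a j`, where `e j m` depends only on the other variables, then the differences of
consecutive `a j` form a weakly regular sequence modulo `I`. -/
lemma isWeaklyRegular_diffList (ha : a.Injective) {e : Fin (k + 1) → (σ →₀ ℕ) → ℕ}
    (he : ∀ j m m', (∀ s, s ∉ Set.range a → m s = m' s) → e j m = e j m')
    {I : Ideal (MvPolynomial σ K)}
    (hI : ∀ p, p ∈ I ↔ ∀ m, coeff m p ≠ 0 → ∀ j, e j m ≤ m (a j)) :
    RingTheory.Sequence.IsWeaklyRegular (MvPolynomial σ K ⧸ I) (diffList a K) := by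
  classical
  refine ⟨fun i hi => ?_⟩
  obtain ⟨i, rfl⟩ : ∃ i' : Fin k, (i' : ℕ) = i := ⟨⟨i, by simpa [diffList] using hi⟩, rfl⟩
  have hget : (diffList a K)[(i : ℕ)] = X (a i.castSucc) - X (a i.succ) := by
    simp [diffList]
  rw [hget]
  have hmk : ∀ p : MvPolynomial σ K,
      (Submodule.Quotient.mk (Ideal.Quotient.mk I p) : (MvPolynomial σ K ⧸ I) ⧸
        (Ideal.ofList ((diffList a K).take i) • ⊤ : Submodule (MvPolynomial σ K) _)) = 0 ↔
      p ∈ I ⊔ Ideal.ofList ((diffList a K).take i) := by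
    intro p
    rw [Submodule.Quotient.mk_eq_zero, mk_mem_smul_top_iff]
  rw [isSMulRegular_iff_right_eq_zero_of_smul]
  intro x hx
  obtain ⟨x, rfl⟩ := Submodule.Quotient.mk_surjective _ x
  obtain ⟨p, rfl⟩ := Ideal.Quotient.mk_surjective x
  have hx' := (hmk ((X (a i.castSucc) - X (a i.succ)) * p)).1 hx
  refine (hmk p).2 ?_
  have hiff := mem_sup_ofList_iff ha he hI i.castSucc
  rw [Fin.val_castSucc] at hiff
  rw [hiff] at hx' ⊢
  have hlt : i.castSucc < i.succ := Fin.castSucc_lt_succ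
  rw [map_mul, map_sub, rename_X, rename_X, collapse_of_le le_rfl, collapse_of_lt ha hlt] at hx'
  set q := rename (collapse a i.castSucc) p
  have hne : a i.castSucc ≠ a i.succ := ha.ne hlt.ne
  have hea : ∀ j l (m : σ →₀ ℕ), e j (m + Finsupp.single (a l) 1) = e j m := fun j l m =>
    he j _ _ fun s hs => by
      have : a l ≠ s := fun e' => hs ⟨l, e'⟩
      simp [this]
  intro m hm
  by_contra hT
  rw [Thr, not_and_or, not_le] at hT
  rcases hT with hT | hT
  · refine hm (coeff_eq_zero_of_sub_mul hne
      {m | m (a i.castSucc) < ∑ j ∈ Finset.Iic i.castSucc, e j m} ?_ q ?_ m hT)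
    · intro m hm
      simp only [Set.mem_ofPred_eq, hea] at hm ⊢
      simp [hne.symm] at hm ⊢
      omega
    · intro m hm
      by_contra h0
      have := (hx' _ h0).1
      simp only [Set.mem_ofPred_eq, hea] at hm this
      simp [hne.symm] at this
      omega
  · push Not at hT
    obtain ⟨j, hj, hT⟩ := hT
    have hne' : a i.castSucc ≠ a j := ha.ne hj.ne
    refine hm (coeff_eq_zero_of_sub_mul hne.symm {m | m (a j) < e j m} ?_ q ?_ m hT)
    · intro m hm
      simp only [Set.mem_ofPred_eq, hea] at hm ⊢
      simp [Finsupp.single_apply, hne'] at hm ⊢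
      omega
    · intro m hm
      by_contra h0
      rw [← neg_sub, neg_mul, coeff_neg, neg_eq_zero] at h0
      have := (hx' _ h0).2 j hj
      simp only [Set.mem_ofPred_eq, hea] at hm this
      simp [hne'] at this
      omega
end Reg

/-! ### A nontrivial Koszul cohomology class -/

section Upper
variable {K : Type*} [Field K]

/-- The fundamental cocycle of the boundary of the simplex on `Fin (κ + 1)`: the sign of `B` if `B`
lists `1, …, κ` in some order, and `0` otherwise. -/
def sgn (K : Type*) [Field K] {κ : ℕ} (B : Fin κ → Fin (κ + 1)) : K :=
  Matrix.det (Matrix.of fun i l => if B l = i.succ then (1 : K) else 0)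

/-- The matrix of `sgn` for `κ + 1` vertices, bordered by a row of ones on top. Its determinant is the
coboundary of `sgn` (`sum_sgn`). -/
def sgnMatrix (K : Type*) [Field K] {κ : ℕ} (B : Fin (κ + 1) → Fin (κ + 1)) :
    Matrix (Fin (κ + 1)) (Fin (κ + 1)) K :=
  Matrix.of fun i l => Fin.cases 1 (fun i => if B l = Fin.succ i then 1 else 0) i

lemma sum_sgn {κ : ℕ} (B : Fin (κ + 1) → Fin (κ + 1)) :
    ∑ l : Fin (κ + 1), (-1 : K) ^ (l : ℕ) * sgn K (fun i => B (l.succAbove i)) =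
      (sgnMatrix K B).det := by
  rw [Matrix.det_succ_row_zero]
  refine Finset.sum_congr rfl fun l _ => ?_
  simp only [sgnMatrix, Matrix.of_apply, Fin.cases_zero, mul_one]
  rfl

lemma det_sgnMatrix_id (κ : ℕ) : (sgnMatrix K (id : Fin (κ + 1) → Fin (κ + 1))).det = 1 := by
  rw [Matrix.det_of_isUpperTriangular]
  · refine Finset.prod_eq_one fun i _ => ?_
    cases i using Fin.cases <;> simp [sgnMatrix]
  · intro i j hij
    have hij : j < i := hij
    cases i using Fin.cases with
    | zero => simp at hij
    | succ i => simp [sgnMatrix, hij.ne]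

lemma det_sgnMatrix_eq_zero {κ : ℕ} {B : Fin (κ + 1) → Fin (κ + 1)}
    (hB : ¬ Function.Surjective B) : (sgnMatrix K B).det = 0 := by
  rw [← Finite.injective_iff_surjective, Function.Injective] at hB
  push Not at hB
  obtain ⟨i, j, h, hne⟩ := hB
  exact Matrix.det_zero_of_column_eq hne fun r => by simp [sgnMatrix, h]

/-- The exponent `f` with value `j` at the vertex `2j` and `t - 1 - j` at `2j + 1`. It sums to `t - 1`
on the edges `{2j, 2j + 1}` and to `t` on the edges `{2j + 1, 2j + 2}`, as long as `j < t`. -/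
noncomputable def baseExp (n t : ℕ) : Fin n →₀ ℕ :=
  Finsupp.equivFunOnFinite.symm fun v => if (v : ℕ) % 2 = 0 then v / 2 else t - 1 - v / 2

/-- The multidegree `f + ∑ l, t • e_{J l}` in which the Koszul cochain is concentrated at `J`. -/
noncomputable def tupleExp {n : ℕ} (t : ℕ) {p : ℕ} (J : Fin p → Fin n) : Fin n →₀ ℕ :=
  baseExp n t + ∑ l, Finsupp.single (J l) t

lemma baseExp_apply (n t : ℕ) (v : Fin n) :
    baseExp n t v = if (v : ℕ) % 2 = 0 then (v : ℕ) / 2 else t - 1 - v / 2 := rfl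

lemma baseExp_le_tupleExp {n t p : ℕ} (J : Fin p → Fin n) (v : Fin n) :
    baseExp n t v ≤ tupleExp t J v := by
  simp [tupleExp]

lemma le_tupleExp {n t p : ℕ} (J : Fin p → Fin n) (l : Fin p) : t ≤ tupleExp t J (J l) := by
  rw [tupleExp, Finsupp.add_apply, Finsupp.finsetSum_apply]
  refine le_add_left ?_
  exact (by simp : t ≤ Finsupp.single (J l) t (J l)).trans
    (Finset.single_le_sum (f := fun i => Finsupp.single (J i) t (J l))
      (fun _ _ => Nat.zero_le _) (Finset.mem_univ l))

lemma tupleExp_of_notMem {n t p : ℕ} (J : Fin p → Fin n) {v : Fin n} (hv : ∀ l, J l ≠ v) :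
    tupleExp t J v = baseExp n t v := by
  simp [tupleExp, hv]

lemma tupleExp_succAbove {n t p : ℕ} (J : Fin (p + 1) → Fin n) (l : Fin (p + 1)) :
    Finsupp.single (J l) t + tupleExp t (fun i => J (l.succAbove i)) = tupleExp t J := by
  rw [tupleExp, tupleExp, Fin.sum_univ_succAbove _ l]
  abel

/-- The index `j` of the edge `{2j, 2j + 1}` which contains a given vertex. -/
def block {κ : ℕ} (v : Fin (2 * (κ + 1))) : Fin (κ + 1) := ⟨v / 2, by omega⟩

/-- The vertex `2j`. -/
def evenVertex {κ : ℕ} (j : Fin (κ + 1)) : Fin (2 * (κ + 1)) := ⟨2 * j, by omega⟩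

lemma block_evenVertex {κ : ℕ} (j : Fin (κ + 1)) : block (evenVertex j) = j := by
  simp [block, evenVertex]

lemma baseExp_evenVertex {κ t : ℕ} (j : Fin (κ + 1)) : baseExp _ t (evenVertex j) = j := by
  have h : ((evenVertex j : Fin (2 * (κ + 1))) : ℕ) = 2 * j := rfl
  rw [baseExp_apply, h, if_pos (by omega)]
  omega

lemma monomial_tupleExp_mem {κ t p : ℕ} (ht : κ + 1 ≤ t) (J : Fin p → Fin (2 * (κ + 1)))
    (hJ : Function.Surjective fun l => block (J l)) (c : K) :
    monomial (tupleExp t J) c ∈ coverIdeal K (SimpleGraph.pathGraph (2 * (κ + 1))) ^ t := by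
  refine monomial_mem_coverIdeal_pow (fun u v huv => ?_) c
  rw [SimpleGraph.pathGraph_adj] at huv
  wlog h : (u : ℕ) + 1 = v generalizing u v
  · rw [add_comm]
    exact this v u huv.symm (huv.resolve_left h)
  have hu := baseExp_le_tupleExp (t := t) J u
  have hv := baseExp_le_tupleExp (t := t) J v
  rw [baseExp_apply] at hu hv
  rcases Nat.mod_two_eq_zero_or_one u with h2 | h2
  · obtain ⟨l, hl⟩ := hJ (block u)
    have hl' : ((J l : Fin _) : ℕ) / 2 = (u : ℕ) / 2 := congrArg Fin.val hl
    have h3 := le_tupleExp (t := t) J l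
    have : J l = u ∨ J l = v := by
      simp only [Fin.ext_iff]
      omega
    rcases this with h4 | h4 <;> rw [h4] at h3 <;> omega
  · rw [if_neg (by omega)] at hu
    rw [if_pos (by omega)] at hv
    omega

lemma coeff_tupleExp_eq_zero {κ t p : ℕ} (ht : κ + 1 ≤ t) (J : Fin p → Fin (2 * (κ + 1)))
    (hJ : ¬ Function.Surjective fun l => block (J l)) {q : MvPolynomial (Fin (2 * (κ + 1))) K}
    (hq : q ∈ coverIdeal K (SimpleGraph.pathGraph (2 * (κ + 1))) ^ t) :
    coeff (tupleExp t J) q = 0 := by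
  by_contra h
  rw [Function.Surjective] at hJ
  push Not at hJ
  obtain ⟨j, hj⟩ := hJ
  have hlt : 2 * (j : ℕ) + 1 < 2 * (κ + 1) := by omega
  have hle := le_of_mem_coverIdeal_pow (u := evenVertex j) (v := ⟨2 * j + 1, hlt⟩)
    (by rw [SimpleGraph.pathGraph_adj]; exact Or.inl rfl) t hq h
  rw [tupleExp_of_notMem, tupleExp_of_notMem, baseExp_evenVertex, baseExp_apply,
    if_neg (by simp only; omega)] at hle
  · simp only at hle
    omega
  · rintro l h'
    exact hj l (by rw [h']; ext; simp only [block]; omega)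
  · rintro l h'
    exact hj l (by rw [h', block_evenVertex])

/-- The upper bound on depth. A longer sequence would make the cocycle
`J ↦ sgn (block ∘ J) x^(tupleExp t J)` a coboundary. -/
lemma length_le_of_isWeaklyRegular {κ t : ℕ} (ht : κ + 1 ≤ t)
    {rs : List (MvPolynomial (Fin (2 * (κ + 1))) K)}
    (hrs : ∀ r ∈ rs, r ∈ maxIdeal K (2 * (κ + 1)))
    (hreg : RingTheory.Sequence.IsWeaklyRegular (MvPolynomial (Fin (2 * (κ + 1))) K ⧸
      coverIdeal K (SimpleGraph.pathGraph (2 * (κ + 1))) ^ t) rs) : rs.length ≤ κ := by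
  by_contra! hlen
  set I := coverIdeal K (SimpleGraph.pathGraph (2 * (κ + 1))) ^ t with hI
  let S := MvPolynomial (Fin (2 * (κ + 1))) K
  let y : Fin (2 * (κ + 1)) → S := fun v => X v ^ t
  have hy : ∀ v, y v = monomial (Finsupp.single v t) 1 := fun v => X_pow_eq_monomial
  have hneg : ∀ l : ℕ, (-1 : S) ^ l = C ((-1) ^ l) := fun l => by simp [S]
  let π : S →ₗ[S] S ⧸ I := Algebra.linearMap S (S ⧸ I)
  have hπ : ∀ p : S, π p = 0 ↔ p ∈ I := fun p => Ideal.Quotient.eq_zero_iff_mem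
  have hπs : Function.Surjective π := Ideal.Quotient.mk_surjective
  let z : (Fin κ → Fin (2 * (κ + 1))) → S := fun J =>
    monomial (tupleExp t J) (sgn K fun l => block (J l))
  have hpow : ∀ r ∈ rs, ∃ N : ℕ, r ^ N ∈ Ideal.span (Set.range y) := by
    intro r hr
    have hle : maxIdeal K (2 * (κ + 1)) ≤ (Ideal.span (Set.range y)).radical := by
      refine Ideal.span_le.2 ?_
      rintro _ ⟨v, rfl⟩
      exact ⟨t, Ideal.subset_span ⟨v, rfl⟩⟩
    exact hle (hrs r hr)
  -- The factor `x_v ^ t` is exactly the step from one multidegree `tupleExp` to the next.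
  have hmul : ∀ (J : Fin (κ + 1) → Fin (2 * (κ + 1))) (l : Fin (κ + 1)) (c : K),
      (-1 : S) ^ (l : ℕ) • y (J l) • (monomial (tupleExp t fun i => J (l.succAbove i)) c : S) =
        monomial (tupleExp t J) ((-1) ^ (l : ℕ) * c) := by
    intro J l c
    rw [← tupleExp_succAbove J l, smul_eq_mul, smul_eq_mul, hy, monomial_mul, one_mul,
      hneg, C_mul_monomial]
  have hdz : ∀ J, koszulD y S κ z J =
      monomial (tupleExp t J) (sgnMatrix K fun l => block (J l)).det := by
    intro J
    rw [koszulD_apply, ← sum_sgn, map_sum]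
    exact Finset.sum_congr rfl fun l _ => hmul J l _
  have hcocycle : koszulD y (S ⧸ I) κ (fun J => π (z J)) = 0 := by
    rw [koszulD_comp]
    funext J
    rw [hdz, Pi.zero_apply, hπ]
    by_cases hJ : Function.Surjective fun l => block (J l)
    · exact monomial_tupleExp_mem ht J hJ _
    · rw [det_sgnMatrix_eq_zero hJ, map_zero]
      exact zero_mem _
  have hcob := mem_koszulB_of_isWeaklyRegular y rs κ _ hreg hlen hpow hcocycle
  have hns : ∀ B : Fin κ → Fin (κ + 1), ¬ Function.Surjective B := fun B hB => by
    have := Fintype.card_le_of_surjective B hB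
    simp at this
  -- Coefficients in the multidegrees `tupleExp t J`, with `J` a tuple of even vertices, turn a
  -- primitive of the cocycle into a primitive of `sgn` over `K`.
  have hsgn : (sgn K : (Fin κ → Fin (κ + 1)) → K) ∈ koszulB (fun _ => (1 : K)) K κ := by
    have hcoef : ∀ (B : Fin κ → Fin (κ + 1)) (q : S), q ∈ I →
        coeff (tupleExp t fun l => evenVertex (B l)) q = 0 := fun B q hq =>
      coeff_tupleExp_eq_zero ht _ (by simpa only [block_evenVertex] using hns B) hq
    have hz : ∀ B : Fin κ → Fin (κ + 1),
        coeff (tupleExp t fun l => evenVertex (B l)) (z fun l => evenVertex (B l)) = sgn K B := by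
      intro B
      simp [z, block_evenVertex]
    clear hcocycle hdz hlen hmul hns
    cases κ with
    | zero =>
      refine (Submodule.mem_bot _).2 (funext fun B => ?_)
      have h0 := congrFun ((Submodule.mem_bot _).1 hcob) fun l => evenVertex (B l)
      rw [← hz B]
      exact hcoef B _ ((hπ _).1 h0)
    | succ κ =>
      obtain ⟨w, hw⟩ := hcob
      choose w' hw' using fun J => hπs (w J)
      obtain rfl : (fun J => π (w' J)) = w := funext hw'
      rw [koszulD_comp] at hw
      refine ⟨fun B => coeff (tupleExp t fun l => evenVertex (B l))
        (w' fun l => evenVertex (B l)), funext fun B => ?_⟩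
      have h1 := congrFun hw fun l => evenVertex (B l)
      rw [← sub_eq_zero, ← map_sub, hπ] at h1
      have h2 := hcoef B _ h1
      rw [coeff_sub, sub_eq_zero, hz] at h2
      rw [← h2, koszulD_apply, koszulD_apply, coeff_sum]
      refine Finset.sum_congr rfl fun l _ => ?_
      rw [← tupleExp_succAbove (fun l => evenVertex (B l)) l]
      simp only [smul_eq_mul, hy, hneg]
      rw [coeff_C_mul, coeff_monomial_mul]
  -- The coboundary of `sgn` does not vanish on the full simplex.
  have h0 := congrFun (koszulD_of_mem_koszulB _ hsgn) id
  rw [koszulD_apply] at h0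
  simp only [smul_eq_mul, one_mul] at h0
  rw [sum_sgn, det_sgnMatrix_id] at h0
  exact one_ne_zero h0
end Upper

/-! ### The lower bound and the theorem -/

section Lower
variable {K : Type*} [Field K]

lemma evenVertex_injective {κ : ℕ} : (evenVertex : Fin (κ + 1) → _).Injective := fun i j h => by
  rw [← block_evenVertex i, h, block_evenVertex]

lemma isRegular_diffList {κ t : ℕ} (ht : κ + 1 ≤ t) :
    RingTheory.Sequence.IsRegular (MvPolynomial (Fin (2 * (κ + 1))) K ⧸
      coverIdeal K (SimpleGraph.pathGraph (2 * (κ + 1))) ^ t) (diffList (evenVertex (κ := κ)) K) := by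
  classical
  -- The edges at the even vertex `2j` impose the bound `e j m ≤ m (2j)`.
  let e : Fin (κ + 1) → (Fin (2 * (κ + 1)) →₀ ℕ) → ℕ := fun j m =>
    Finset.univ.sup fun w =>
      if (SimpleGraph.pathGraph _).Adj (evenVertex j) w then t - m w else 0
  refine ⟨isWeaklyRegular_diffList evenVertex_injective (e := e) ?_ ?_, ?_⟩
  · intro j m m' h
    refine Finset.sup_congr rfl fun w _ => ?_
    split_ifs with hw
    · rw [h]
      rintro ⟨i, rfl⟩
      rw [SimpleGraph.pathGraph_adj] at hw
      simp only [evenVertex] at hw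
      omega
    · rfl
  · intro p
    rw [mem_coverIdeal_pow_iff]
    refine forall₂_congr fun m _ => ?_
    simp only [e, Finset.sup_le_iff, Finset.mem_univ, true_imp_iff]
    constructor
    · intro h j w
      split_ifs with hw
      · have := h _ _ hw
        omega
      · exact Nat.zero_le _
    · intro h u v huv
      wlog hu : (u : ℕ) % 2 = 0 generalizing u v
      · rw [add_comm]
        refine this v u huv.symm ?_
        rw [SimpleGraph.pathGraph_adj] at huv
        omega
      have hev : evenVertex (block u) = u := by
        ext
        simp only [evenVertex, block]
        omega
      have := h (block u) v
      rw [hev, if_pos huv] at this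
      omega
  · intro htop
    have h1 := (mk_mem_smul_top_iff (coverIdeal K (SimpleGraph.pathGraph (2 * (κ + 1))) ^ t)
      (Ideal.ofList (diffList (evenVertex (κ := κ)) K)) 1).1 (htop ▸ Submodule.mem_top)
    have hle : coverIdeal K (SimpleGraph.pathGraph (2 * (κ + 1))) ^ t ⊔
        Ideal.ofList (diffList (evenVertex (κ := κ)) K) ≤ RingHom.ker (constantCoeff (R := K)) := by
      refine sup_le (fun p hp => ?_) (Ideal.span_le.2 fun r hr => ?_)
      · rw [RingHom.mem_ker, constantCoeff_eq]
        by_contra h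
        have := le_of_mem_coverIdeal_pow (u := ⟨0, by omega⟩) (v := ⟨1, by omega⟩)
          (by rw [SimpleGraph.pathGraph_adj]; exact Or.inl rfl) t hp h
        simp at this
        omega
      · obtain ⟨i, rfl⟩ := (List.mem_ofFn' _ _).1 hr
        simp
    simpa using hle h1
end Lower

/-- For the even path `P_n` with `n = 2k` (`k ≥ 1`) and every `t ≥ k`,
`depth(R/J(P_n)^t) = k - 1`. -/
theorem depth_coverIdeal_pow_even_path_stable (K : Type*) [Field K] (k n t : ℕ)
    (hk : 1 ≤ k) (hn : n = 2 * k) (ht : k ≤ t) :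
    depthQuot K n ((coverIdeal K (SimpleGraph.pathGraph n)) ^ t) = k - 1 := by
  subst hn
  obtain ⟨κ, rfl⟩ : ∃ κ, k = κ + 1 := ⟨k - 1, by omega⟩
  refine IsGreatest.csSup_eq ⟨⟨diffList (evenVertex (κ := κ)) K, ?_, ?_, isRegular_diffList ht⟩, ?_⟩
  · simp [diffList]
  · intro r hr
    obtain ⟨i, rfl⟩ := (List.mem_ofFn' _ _).1 hr
    exact sub_mem (Ideal.subset_span ⟨_, rfl⟩) (Ideal.subset_span ⟨_, rfl⟩)
  · rintro d ⟨rs, rfl, hrs, hreg⟩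
    exact length_le_of_isWeaklyRegular ht hrs hreg.toIsWeaklyRegular
end

section
/- Let K be a field, k ≥ 0 an integer, n = 4k + 3, R = K[x_1,…,x_n], and let J(P_n) be the cover ideal of the path graph P_n. Then for every integer t with 1 ≤ t ≤ k, depth(R/J(P_n)^t) = (2k + 1) + ⌊(2k + 1)/(2t + 1)⌋. -/
/-!
Put `I = J(P_n)^t`, `q = ⌊(2k+1)/(2t+1)⌋` and `p₀ = 2k + 1 - q`. Since `n = 4k + 3`, the claimed depth
is `n - 1 - p₀`.

The depth of a finitely generated module is read off from the vanishing of Koszul homology on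
`x_1, …, x_n`: a weakly regular sequence of length `d` in `(x_1, …, x_n)` exists exactly when the
Koszul homology `H_p` vanishes for all `p > n - d` (`KVan.of_weaklyRegular`,
`exists_weaklyRegular`). Because the Koszul homology of `R` vanishes in positive degrees,
`H_{p+1}(R/I)` vanishes exactly when `H_p(I)` does, for `p ≥ 1` (`KVan.quot_ideal`,
`not_kVan_quot_ideal`). So it has to be shown that `p₀` is the largest `p` with `H_p(I) ≠ 0`.

The ideal `I` is spanned by the monomials `x^b` with `b_i + b_{i+1} ≥ t` for all `i` (`mem_pow_iff`):
an exponent vector with this property is a sum of `t` vertex covers, found one at a time because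
the path is bipartite. Hence the Koszul complex of `I` splits by multidegree, and its strand in
multidegree `a` is the simplicial complex over `K` of the sets `F ⊆ {1, …, n}` for which `a - 1_F`
is a nonnegative vector satisfying these inequalities (upper Koszul complex).

Peeling vertices off the left end of the path, such a complex is empty, or a cone, or equal to the
complex of the path without its first vertex, or the suspension of the complex of the path without
its first two vertices. Keeping track of the amount `u ≤ t` available to the left of the first vertex, this
gives `p (2t + 1) ≤ u + n t` whenever degree `p` is not acyclic (`bound_of_nonAcyclic`), and
conversely a multidegree realizing `p` as soon as `p ≤ u + (n - 2p) t` (`exists_nonAcyclic`). For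
`u = t` and `n = 4k + 3`, both conditions say that `p ≤ p₀`.
-/

open MvPolynomial

/-! ### The Koszul complex and regular sequences -/

section Koszul
variable {R : Type*} [CommRing R] {M : Type*} [AddCommGroup M] [Module R M]
  {N : Type*} [AddCommGroup N] [Module R N]

/-- The restriction of a cochain on the cube `Fin (n + 1) → Bool` to the facet where the first
coordinate is `b`. -/
def face {α : Type*} {n : ℕ} (b : Bool) (ω : (Fin (n + 1) → Bool) → α) : (Fin n → Bool) → α :=
  fun S => ω (Fin.cons b S)

theorem face_ext {α : Type*} {n : ℕ} {ω η : (Fin (n + 1) → Bool) → α}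
    (hf : face false ω = face false η) (ht : face true ω = face true η) : ω = η := by
  funext S
  rw [← Fin.cons_self_tail S]
  cases S 0
  · exact congrFun hf _
  · exact congrFun ht _

/-- The differential of the Koszul cochain complex of `x_1, …, x_n` with values in `M`. Families
`ω : (Fin n → Bool) → M` are elements of `⋀ Rⁿ ⊗ M`; the basis element `e_S` belongs to the set of
`i` with `S i = true`, and `kd x` is multiplication by `∑ x_i e_i` from the left. All degrees are
kept together; `HasCod` singles out one. -/
def kd : ∀ {n : ℕ} (_ : Fin n → R), ((Fin n → Bool) → M) → (Fin n → Bool) → M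
  | 0, _, _ => 0
  | _ + 1, x, ω => fun S =>
      if S 0 then
        x 0 • face false ω (Fin.tail S) - kd (Fin.tail x) (face true ω) (Fin.tail S)
      else kd (Fin.tail x) (face false ω) (Fin.tail S)

theorem kd_zero_dim (x : Fin 0 → R) (ω : (Fin 0 → Bool) → M) : kd x ω = 0 := rfl

theorem face_false_kd {n : ℕ} (x : Fin (n + 1) → R) (ω : (Fin (n + 1) → Bool) → M) :
    face false (kd x ω) = kd (Fin.tail x) (face false ω) := by
  funext S; simp [face, kd]

theorem face_true_kd {n : ℕ} (x : Fin (n + 1) → R) (ω : (Fin (n + 1) → Bool) → M) :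
    face true (kd x ω) = x 0 • face false ω - kd (Fin.tail x) (face true ω) := by
  funext S; simp [face, kd]

theorem face_add {n : ℕ} (b) (ω η : (Fin (n + 1) → Bool) → M) :
    face b (ω + η) = face b ω + face b η := rfl
theorem face_sub {n : ℕ} (b) (ω η : (Fin (n + 1) → Bool) → M) :
    face b (ω - η) = face b ω - face b η := rfl
theorem face_neg {n : ℕ} (b) (ω : (Fin (n + 1) → Bool) → M) :
    face b (-ω) = -face b ω := rfl
theorem face_smul {n : ℕ} (b) (r : R) (ω : (Fin (n + 1) → Bool) → M) :
    face b (r • ω) = r • face b ω := rfl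
theorem face_zero {n : ℕ} (b) : face b (0 : (Fin (n + 1) → Bool) → M) = 0 := rfl

theorem kd_add {n : ℕ} (x : Fin n → R) (ω η : (Fin n → Bool) → M) :
    kd x (ω + η) = kd x ω + kd x η := by
  induction n with
  | zero => simp [kd_zero_dim]
  | succ n ih =>
    apply face_ext
    · simp only [face_false_kd, face_add, ih]
    · simp only [face_true_kd, face_add, ih, smul_add]; abel

theorem kd_smul {n : ℕ} (x : Fin n → R) (r : R) (ω : (Fin n → Bool) → M) :
    kd x (r • ω) = r • kd x ω := by
  induction n with
  | zero => simp [kd_zero_dim]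
  | succ n ih =>
    apply face_ext
    · simp only [face_false_kd, face_smul, ih]
    · simp only [face_true_kd, face_smul, ih, smul_sub, smul_comm r]

theorem kd_neg {n : ℕ} (x : Fin n → R) (ω : (Fin n → Bool) → M) :
    kd x (-ω) = -kd x ω := by
  have := kd_smul x (-1 : R) ω
  simpa using this

theorem kd_sub {n : ℕ} (x : Fin n → R) (ω η : (Fin n → Bool) → M) :
    kd x (ω - η) = kd x ω - kd x η := by
  rw [sub_eq_add_neg, kd_add, kd_neg, sub_eq_add_neg]

theorem kd_zero {n : ℕ} (x : Fin n → R) : kd x (0 : (Fin n → Bool) → M) = 0 := by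
  simpa using kd_sub x (0 : (Fin n → Bool) → M) 0

theorem kd_map {n : ℕ} (x : Fin n → R) (φ : M →ₗ[R] N) (ω : (Fin n → Bool) → M) :
    kd x (φ ∘ ω) = φ ∘ kd x ω := by
  have face_map {n : ℕ} (b) (ω : (Fin (n + 1) → Bool) → M) :
    face b (φ ∘ ω) = φ ∘ face b ω := rfl
  induction n with
  | zero => funext S; simp [kd_zero_dim]
  | succ n ih =>
    apply face_ext
    · simp only [face_false_kd, face_map, ih]
    · simp only [face_true_kd, face_map, ih]
      funext S; simp

theorem kd_kd {n : ℕ} (x : Fin n → R) (ω : (Fin n → Bool) → M) : kd x (kd x ω) = 0 := by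
  induction n with
  | zero => rfl
  | succ n ih =>
    apply face_ext
    · simp only [face_false_kd, ih, face_zero]
    · simp only [face_true_kd, face_false_kd, kd_sub, kd_smul, ih, face_zero]; simp

/-- Contraction of a Koszul cochain with the linear form `e_i ↦ c_i`. -/
def kh : ∀ {n : ℕ} (_ : Fin n → R), ((Fin n → Bool) → M) → (Fin n → Bool) → M
  | 0, _, _ => 0
  | _ + 1, c, ω => fun S =>
      if S 0 then - kh (Fin.tail c) (face true ω) (Fin.tail S)
      else kh (Fin.tail c) (face false ω) (Fin.tail S) + c 0 • face true ω (Fin.tail S)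

theorem face_false_kh {n : ℕ} (c : Fin (n + 1) → R) (ω : (Fin (n + 1) → Bool) → M) :
    face false (kh c ω) = kh (Fin.tail c) (face false ω) + c 0 • face true ω := by
  funext S; simp [face, kh]

theorem face_true_kh {n : ℕ} (c : Fin (n + 1) → R) (ω : (Fin (n + 1) → Bool) → M) :
    face true (kh c ω) = - kh (Fin.tail c) (face true ω) := by
  funext S; simp [face, kh]

theorem kh_sub_smul {n : ℕ} (c : Fin n → R) (r : R) (ω η : (Fin n → Bool) → M) :
    kh c (r • ω - η) = r • kh c ω - kh c η := by
  induction n with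
  | zero => simp [kh]
  | succ n ih =>
    apply face_ext
    · simp only [face_false_kh, face_sub, face_smul, ih, smul_sub, smul_add, smul_comm r]; abel
    · simp only [face_true_kh, face_sub, face_smul, ih, smul_neg]; abel

theorem kh_zero {n : ℕ} (c : Fin n → R) : kh c (0 : (Fin n → Bool) → M) = 0 := by
  induction n with
  | zero => rfl
  | succ n ih =>
    apply face_ext
    · simp only [face_false_kh, face_zero, ih]; simp
    · simp only [face_true_kh, face_zero, ih]; simp

/-- Contraction by `c` is a homotopy from multiplication by `∑ c_i x_i` to zero. -/
theorem kd_kh {n : ℕ} (x c : Fin n → R) (ω : (Fin n → Bool) → M) :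
    kd x (kh c ω) + kh c (kd x ω) = (∑ i, c i * x i) • ω := by
  induction n with
  | zero => simp [kd, kh]
  | succ n ih =>
    rw [Fin.sum_univ_succ]
    have hs : (∑ i : Fin n, c i.succ * x i.succ) = ∑ i, Fin.tail c i * Fin.tail x i := rfl
    rw [hs]
    apply face_ext
    · simp only [face_add, face_smul, face_false_kd, face_false_kh, face_true_kd, kd_add, kd_smul]
      rw [add_smul, ← ih (Fin.tail x) (Fin.tail c) (face false ω), smul_sub, mul_smul]
      abel
    · simp only [face_add, face_smul, face_false_kh, face_true_kd, face_true_kh,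
        kd_neg, kh_sub_smul]
      rw [add_smul, ← ih (Fin.tail x) (Fin.tail c) (face true ω), smul_add, mul_smul,
        smul_comm (c 0)]
      abel

/-- The number of coordinates equal to `false`. A cochain on `S` with `cod S = p` has
cohomological degree `n - p`, that is, homological degree `p`. -/
def cod {n : ℕ} (S : Fin n → Bool) : ℕ := ∑ i, if S i then 0 else 1

theorem cod_le {n : ℕ} (S : Fin n → Bool) : cod S ≤ n := by
  calc cod S ≤ ∑ _i : Fin n, 1 := Finset.sum_le_sum fun i _ => by split <;> simp
    _ = n := by simp

theorem cod_cons_false {n : ℕ} (S : Fin n → Bool) :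
    cod (Fin.cons false S : Fin (n + 1) → Bool) = cod S + 1 := by
  simp [cod, Fin.sum_univ_succ, add_comm]

theorem cod_cons_true {n : ℕ} (S : Fin n → Bool) :
    cod (Fin.cons true S : Fin (n + 1) → Bool) = cod S := by
  simp [cod, Fin.sum_univ_succ]

/-- The cochain `ω` is homogeneous of homological degree `p`. -/
def HasCod {α : Type*} [Zero α] {n : ℕ} (p : ℕ) (ω : (Fin n → Bool) → α) : Prop :=
  ∀ S, cod S ≠ p → ω S = 0

open Classical in
/-- The part of a cochain in the degrees satisfying `A`. -/
noncomputable def kproj {n : ℕ} (A : ℕ → Prop) (ω : (Fin n → Bool) → M) : (Fin n → Bool) → M :=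
  fun S => if A (cod S) then ω S else 0

theorem kd_kproj {n : ℕ} (x : Fin n → R) (A : ℕ → Prop) (ω : (Fin n → Bool) → M) :
    kd x (kproj A ω) = kproj (fun k => A (k + 1)) (kd x ω) := by
  have hf {n : ℕ} (A : ℕ → Prop) (ω : (Fin (n + 1) → Bool) → M) :
      face false (kproj A ω) = kproj (fun k => A (k + 1)) (face false ω) := by
    classical funext S; exact if_congr (by rw [cod_cons_false]) rfl rfl
  have ht {n : ℕ} (A : ℕ → Prop) (ω : (Fin (n + 1) → Bool) → M) :
      face true (kproj A ω) = kproj A (face true ω) := by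
    classical funext S; exact if_congr (by rw [cod_cons_true]) rfl rfl
  induction n generalizing A with
  | zero => funext S; simp [kproj, kd_zero_dim]
  | succ n ih =>
    apply face_ext
    · simp only [face_false_kd, hf, ih]
    · simp only [face_true_kd, hf, ht, ih]
      funext S; simp only [kproj, Pi.sub_apply, Pi.smul_apply]; split <;> simp

theorem kproj_of_hasCod {n : ℕ} {p : ℕ} {A : ℕ → Prop} (hA : A p) {ω : (Fin n → Bool) → M}
    (h : HasCod p ω) : kproj A ω = ω := by
  funext S; simp only [kproj]; split
  · rfl
  · rename_i hS; exact (h S (by rintro rfl; exact hS hA)).symm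

theorem hasCod_kproj {n : ℕ} (p : ℕ) (ω : (Fin n → Bool) → M) : HasCod p (kproj (· = p) ω) := by
  intro S hS; simp [kproj, hS]

theorem HasCod.diff {n : ℕ} {p : ℕ} (x : Fin n → R) {ω : (Fin n → Bool) → M}
    (h : HasCod (p + 1) ω) : HasCod p (kd x ω) := by
  rw [← kproj_of_hasCod (A := (· = p + 1)) rfl h, kd_kproj]
  intro S hS; simp [kproj, hS]

theorem HasCod.htpy {n : ℕ} {p : ℕ} (c : Fin n → R) {ω : (Fin n → Bool) → M}
    (h : HasCod p ω) : HasCod (p + 1) (kh c ω) := by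
  induction n generalizing p with
  | zero => intro S _; rfl
  | succ n ih =>
    have htr : HasCod p (face true ω) := fun S hS => h _ (by rwa [cod_cons_true])
    intro S hS
    rw [← Fin.cons_self_tail S] at hS ⊢
    cases hb : S 0 <;> rw [hb] at hS
    · change face false (kh c ω) (Fin.tail S) = 0
      rw [cod_cons_false] at hS
      rw [face_false_kh, Pi.add_apply, Pi.smul_apply, htr _ (by omega), smul_zero, add_zero]
      rcases p with _ | p
      · have h0 : face false ω = 0 := by
          funext S; exact h _ (by rw [cod_cons_false]; omega)
        rw [h0, kh_zero]; rfl
      · exact ih (Fin.tail c) (p := p) (fun S hS => h _ (by rw [cod_cons_false]; omega)) _ (by omega)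
    · change face true (kh c ω) (Fin.tail S) = 0
      rw [cod_cons_true] at hS
      rw [face_true_kh, Pi.neg_apply, ih _ htr _ hS, neg_zero]

/-- A preimage under the differential of a homogeneous cochain may be taken homogeneous, with
values in the same submodule. -/
theorem exists_kd_hasCod {n p : ℕ} (x : Fin n → R) (I : Submodule R M) {z v : (Fin n → Bool) → M}
    (hz : HasCod p z) (hv : ∀ S, v S ∈ I) (h : kd x v = z) :
    ∃ w, HasCod (p + 1) w ∧ (∀ S, w S ∈ I) ∧ kd x w = z := by
  refine ⟨_, hasCod_kproj (p + 1) v, fun S => ?_, ?_⟩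
  · simp only [kproj]; split
    · exact hv S
    · exact I.zero_mem
  · rw [kd_kproj, h]; exact kproj_of_hasCod (A := fun k => k + 1 = p + 1) rfl hz

/-- The Koszul homology `H_p(x; M)` vanishes. -/
def KVan {n : ℕ} (x : Fin n → R) (M : Type*) [AddCommGroup M] [Module R M] (p : ℕ) : Prop :=
  ∀ z : (Fin n → Bool) → M, HasCod p z → kd x z = 0 → ∃ v, kd x v = z

theorem KVan.hasCod {n : ℕ} {x : Fin n → R} {p : ℕ} (h : KVan x M p) {z : (Fin n → Bool) → M}
    (hz : HasCod p z) (hd : kd x z = 0) : ∃ v, HasCod (p + 1) v ∧ kd x v = z := by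
  obtain ⟨v, hv⟩ := h z hz hd
  obtain ⟨w, h1, -, h2⟩ := exists_kd_hasCod x ⊤ hz (fun _ => trivial) hv
  exact ⟨w, h1, h2⟩

theorem exists_lift {n p : ℕ} {φ : M →ₗ[R] N} (hφ : Function.Surjective φ)
    {z : (Fin n → Bool) → N} (hz : HasCod p z) : ∃ y : (Fin n → Bool) → M,
    HasCod p y ∧ φ ∘ y = z := by
  classical
  refine ⟨fun S => if cod S = p then Function.surjInv hφ (z S) else 0, fun S hS => if_neg hS, ?_⟩
  funext S
  by_cases hS : cod S = p
  · simp [hS, Function.surjInv_eq]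
  · simp [hS, hz S hS]

open RingTheory.Sequence Pointwise

theorem exists_smul_of_mkQ {n : ℕ} {r : R} {y : (Fin n → Bool) → M}
    (h : (r • (⊤ : Submodule R M)).mkQ ∘ y = 0) : ∃ w, y = r • w := by
  have : ∀ S, ∃ m, y S = r • m := fun S => by
    have := congrFun h S
    simp only [Function.comp, Submodule.mkQ_apply, Pi.zero_apply,
      Submodule.Quotient.mk_eq_zero] at this
    obtain ⟨m, -, hm⟩ := (Submodule.mem_smul_pointwise_iff_exists _ _ _).1 this
    exact ⟨m, hm.symm⟩
  choose w hw using this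
  exact ⟨w, funext hw⟩

/-- Koszul homology vanishes above `n - d` if the ideal `(x)` contains a weakly regular sequence of
length `d`. Multiplication by an element of `(x)` is null-homotopic on the Koszul complex, so a
cycle `z` has `r z = kd y`; modulo `r` the chain `y` is a cycle in degree `p + 1`, where induction
applies. -/
theorem KVan.of_weaklyRegular {n : ℕ} (x : Fin n → R) (rs : List R)
    (hm : ∀ r ∈ rs, r ∈ Ideal.span (Set.range x)) (hr : IsWeaklyRegular M rs) (p : ℕ)
    (hp : n < p + rs.length) : KVan x M p := by
  induction rs generalizing M p with
  | nil =>
    intro z hz _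
    refine ⟨0, ?_⟩
    rw [kd_zero]; funext S
    exact (hz S (by have := cod_le S; simp at hp; omega)).symm
  | cons r rs ih =>
    obtain ⟨hr1, hr2⟩ := (isWeaklyRegular_cons_iff M r rs).1 hr
    intro z hz hd
    obtain ⟨c, hc⟩ := (Ideal.mem_span_range_iff_exists_fun).1 (hm r (by simp))
    have hy : kd x (kh c z) = r • z := by
      have := kd_kh x c z
      rwa [hd, kh_zero, add_zero, hc] at this
    have hrz : (r • (⊤ : Submodule R M)).mkQ ∘ (r • z) = 0 := by
      funext S
      simp only [Function.comp, Submodule.mkQ_apply, Pi.zero_apply, Pi.smul_apply,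
        Submodule.Quotient.mk_eq_zero]
      exact Submodule.smul_mem_pointwise_smul _ _ _ trivial
    obtain ⟨wb, hwb⟩ := ih (fun s hs => hm s (by simp [hs])) hr2 (p + 1)
      (by simp at hp; omega) ((r • (⊤ : Submodule R M)).mkQ ∘ kh c z)
      (fun S hS => by simp only [Function.comp]; rw [hz.htpy c S hS, map_zero])
      (by rw [kd_map, hy, hrz])
    choose w hw using fun S => (r • (⊤ : Submodule R M)).mkQ_surjective (wb S)
    obtain rfl : (r • (⊤ : Submodule R M)).mkQ ∘ w = wb := funext hw
    rw [kd_map] at hwb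
    obtain ⟨y', hy'⟩ := exists_smul_of_mkQ (r := r) (y := kh c z - kd x w) (by
      funext S
      have := congrFun hwb S
      simp only [Function.comp, Pi.sub_apply, map_sub, Pi.zero_apply] at this ⊢
      rw [this, sub_self])
    refine ⟨y', ?_⟩
    funext S
    apply hr1
    have := congrArg (kd x) hy'
    rw [kd_sub, kd_kd, sub_zero, hy, kd_smul] at this
    exact (congrFun this S).symm

/-- If no nonzero element is annihilated by `(x)`, then `(x)` contains a nonzerodivisor on `M`, by
prime avoidance for the associated primes. -/
theorem exists_regular [IsNoetherianRing R] [Module.Finite R M] {n : ℕ} (x : Fin n → R)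
    (h : ∀ m : M, (∀ i, x i • m = 0) → m = 0) :
    ∃ r ∈ Ideal.span (Set.range x), IsSMulRegular M r := by
  by_contra! hcon
  have hsub : (Ideal.span (Set.range x) : Set R) ⊆ ⋃ P ∈ associatedPrimes R M, (P : Set R) := by
    rw [biUnion_associatedPrimes_eq_compl_regular]
    exact fun r hr => hcon r hr
  have hfin := associatedPrimes.finite R M
  have := (Ideal.subset_union_prime_finite hfin (f := fun P => P) ⊥ ⊥
    (fun P hP _ _ => (hP : IsAssociatedPrime P M).isPrime)).1 hsub
  obtain ⟨P, hP, hle⟩ := this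
  obtain ⟨hPp, m, hm⟩ := isAssociatedPrime_iff.1 (hP : IsAssociatedPrime P M)
  have hm0 : m = 0 := h m fun i => by
    have : x i ∈ P := hle (Ideal.subset_span ⟨i, rfl⟩)
    rw [hm, Submodule.mem_colon_singleton] at this
    exact this
  apply hPp.ne_top
  rw [hm, hm0, Ideal.eq_top_iff_one, Submodule.mem_colon_singleton]
  simp

theorem kd_eq_zero_of_smul {n : ℕ} (x : Fin n → R) (ω : (Fin n → Bool) → M)
    (h : ∀ i S, x i • ω S = 0) : kd x ω = 0 := by
  induction n with
  | zero => rfl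
  | succ n ih =>
    apply face_ext
    · rw [face_false_kd, face_zero, ih (Fin.tail x) (face false ω) fun i S => h i.succ _]
    · rw [face_true_kd, face_zero, ih (Fin.tail x) (face true ω) fun i S => h i.succ _, sub_zero]
      funext S; exact h 0 _

theorem HasCod.diff_eq_zero {n : ℕ} (x : Fin n → R) {ω : (Fin n → Bool) → M} (h : HasCod 0 ω) :
    kd x ω = 0 := by
  rw [← kproj_of_hasCod (A := (· = 0)) rfl h, kd_kproj]
  funext S; simp [kproj]

/-- The top Koszul homology `H_n(x; M)` consists of the elements of `M` annihilated by `(x)`. -/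
theorem KVan.eq_zero_of_smul {n : ℕ} {x : Fin n → R} (h : KVan x M n) (m : M)
    (hm : ∀ i, x i • m = 0) : m = 0 := by
  classical
  obtain ⟨v, hv, hvz⟩ := h.hasCod (z := fun S => if cod S = n then m else 0)
    (fun S hS => if_neg hS) (kd_eq_zero_of_smul x _ fun i S => by
      split
      · exact hm i
      · exact smul_zero _)
  have hv0 : v = 0 := funext fun S => hv S (by have := cod_le S; omega)
  rw [hv0, kd_zero] at hvz
  have := congrFun hvz (fun _ => false)
  simpa [cod] using this.symm

/-- If `r` is a nonzerodivisor on `M`, then `H_p(x; M / r M)` vanishes together with `H_p(x; M)` and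
`H_{p-1}(x; M)`, by the long exact homology sequence. -/
theorem KVan.quot {n p : ℕ} {x : Fin n → R} {r : R} (hr : IsSMulRegular M r)
    (h : KVan x M p) (h' : ∀ k, p = k + 1 → KVan x M k) :
    KVan x (QuotSMulTop r M) p := by
  intro zb hzb hd
  obtain ⟨y, hy, rfl⟩ := exists_lift (r • (⊤ : Submodule R M)).mkQ_surjective hzb
  rw [kd_map] at hd
  obtain ⟨w, hw⟩ := exists_smul_of_mkQ hd
  obtain ⟨v, hv, hvw⟩ : ∃ v, HasCod p v ∧ kd x (y - r • v) = 0 := by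
    rcases p with _ | k
    · exact ⟨0, fun S _ => rfl, by rw [smul_zero, sub_zero, hy.diff_eq_zero]⟩
    · have hwc : HasCod k w := fun S hS => hr (by
        have := congrFun hw S
        simp only [Pi.smul_apply] at this
        simp only [smul_zero]
        rw [← this]; exact hy.diff x S hS)
      have hdw : kd x w = 0 := by
        funext S; apply hr
        have := congrArg (kd x) hw
        rw [kd_kd, kd_smul] at this
        simpa using (congrFun this S).symm
      obtain ⟨v, hv, hvw⟩ := (h' k rfl).hasCod hwc hdw
      exact ⟨v, hv, by rw [kd_sub, kd_smul, hvw, hw, sub_self]⟩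
  obtain ⟨u, hu⟩ := h _ (fun S hS => by simp [hy S hS, hv S hS]) hvw
  refine ⟨(r • (⊤ : Submodule R M)).mkQ ∘ u, ?_⟩
  rw [kd_map, hu]
  funext S
  simp only [Function.comp, Pi.sub_apply, map_sub, Pi.smul_apply, sub_eq_self,
    Submodule.mkQ_apply, Submodule.Quotient.mk_eq_zero]
  exact Submodule.smul_mem_pointwise_smul _ _ _ trivial

/-- Vanishing of the top `d` Koszul homologies produces a weakly regular sequence of length `d`
in `(x)`. -/
theorem exists_weaklyRegular [IsNoetherianRing R] [Module.Finite R M] {n : ℕ} (x : Fin n → R)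
    (d : ℕ) (h : ∀ p, n < p + d → KVan x M p) :
    ∃ rs : List R, rs.length = d ∧ (∀ r ∈ rs, r ∈ Ideal.span (Set.range x)) ∧
      IsWeaklyRegular M rs := by
  induction d generalizing M with
  | zero => exact ⟨[], rfl, by simp, by simp⟩
  | succ d ih =>
    obtain ⟨r, hrm, hr⟩ := exists_regular (M := M) x (h n (by omega)).eq_zero_of_smul
    obtain ⟨rs, h1, h2, h3⟩ := ih (M := QuotSMulTop r M) fun p hp =>
      KVan.quot hr (h p (by omega)) fun k hk => h k (by omega)
    exact ⟨r :: rs, by simp [h1], by simpa [hrm] using h2,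
      (isWeaklyRegular_cons_iff M r rs).2 ⟨hr, h3⟩⟩

/-- If `H_{p+1}(x; R)` and `H_p(x; I)` vanish, then so does `H_{p+1}(x; R / I)`. -/
theorem KVan.quot_ideal {n p : ℕ} {x : Fin n → R} {I : Ideal R} (hR : KVan x R (p + 1))
    (hI : ∀ z : (Fin n → Bool) → R, HasCod p z → (∀ S, z S ∈ I) → kd x z = 0 →
      ∃ v, (∀ S, v S ∈ I) ∧ kd x v = z) : KVan x (R ⧸ I) (p + 1) := by
  intro zb hzb hd
  obtain ⟨z, hz, rfl⟩ := exists_lift (φ := Submodule.mkQ I) (Submodule.mkQ_surjective I) hzb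
  rw [kd_map] at hd
  have hdI : ∀ S, kd x z S ∈ I := fun S =>
    (Submodule.Quotient.mk_eq_zero I).1 (congrFun hd S)
  obtain ⟨v, hv, hvz⟩ := hI _ (hz.diff x) hdI (kd_kd x z)
  obtain ⟨w, hw, hwI, hwz⟩ := exists_kd_hasCod x I (hz.diff x) hv hvz
  obtain ⟨u, hu⟩ := hR (z - w) (fun S hS => by simp [hz S hS, hw S hS])
    (by rw [kd_sub, hwz, sub_self])
  refine ⟨Submodule.mkQ I ∘ u, ?_⟩
  rw [kd_map, hu]
  funext S
  simp [Ideal.Quotient.eq_zero_iff_mem.2 (hwI S)]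

/-- If `H_p(x; R)` vanishes and `H_p(x; I)` does not, then `H_{p+1}(x; R / I)` does not vanish. -/
theorem not_kVan_quot_ideal {n p : ℕ} {x : Fin n → R} {I : Ideal R} (hR : KVan x R p)
    {z : (Fin n → Bool) → R} (hz : HasCod p z) (hd : kd x z = 0)
    (hzI : ∀ S, z S ∈ I) (hne : ∀ v, (∀ S, v S ∈ I) → kd x v ≠ z) :
    ¬ KVan x (R ⧸ I) (p + 1) := by
  intro hV
  obtain ⟨u, hu, hud⟩ := hR.hasCod hz hd
  obtain ⟨vb, hvb⟩ := hV (Submodule.mkQ I ∘ u) (fun S hS => by simp [hu S hS]) (by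
    rw [kd_map, hud]; funext S; exact (Submodule.Quotient.mk_eq_zero I).2 (hzI S))
  choose v hv using fun S => Submodule.mkQ_surjective I (vb S)
  obtain rfl : Submodule.mkQ I ∘ v = vb := funext hv
  rw [kd_map] at hvb
  refine hne (u - kd x v) (fun S => ?_) (by rw [kd_sub, kd_kd, sub_zero, hud])
  rw [← Submodule.Quotient.mk_eq_zero]
  have := congrFun hvb S
  simp only [Function.comp, Submodule.mkQ_apply] at this
  rw [Pi.sub_apply, Submodule.Quotient.mk_sub, this, sub_self]

end Koszul

/-! ### Homology of the complexes of a path -/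

/-- The cochain on a cube of dimension `n + 1` with prescribed restrictions to the two facets of
the first coordinate. -/
def glue {α : Type*} {n : ℕ} (cf ct : (Fin n → Bool) → α) : (Fin (n + 1) → Bool) → α :=
  fun S => if S 0 then ct (Fin.tail S) else cf (Fin.tail S)

@[simp] theorem face_false_glue {α : Type*} {n : ℕ} (cf ct : (Fin n → Bool) → α) :
    face false (glue cf ct) = cf := by funext S; simp [face, glue]

@[simp] theorem face_true_glue {α : Type*} {n : ℕ} (cf ct : (Fin n → Bool) → α) :
    face true (glue cf ct) = ct := by funext S; simp [face, glue]

section Strand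
variable (K : Type*) [Field K]

variable {K} in
/-- The cochain `c` is supported on the family `P` of vertices of the cube. -/
def SuppOn {n : ℕ} (P : (Fin n → Bool) → Prop) (c : (Fin n → Bool) → K) : Prop :=
  ∀ S, ¬ P S → c S = 0

variable {K} in
/-- The simplicial differential: the Koszul differential for `x_i = 1`. Regarding `S` as the face
`{i | S i = false}`, it is, up to signs, the boundary map of simplicial chains. -/
abbrev sd {n : ℕ} (c : (Fin n → Bool) → K) : (Fin n → Bool) → K := kd (fun _ => (1 : K)) c

/-- The chain complex of the family `P` has nonzero homology on faces with `p` elements. When `P` is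
closed under removing elements from faces, this is reduced simplicial homology in degree `p - 1`. -/
def NonAcyclic {n : ℕ} (P : (Fin n → Bool) → Prop) (p : ℕ) : Prop :=
  ∃ c : (Fin n → Bool) → K, SuppOn P c ∧ HasCod p c ∧ sd c = 0 ∧ ∀ e, SuppOn P e → sd e ≠ c

variable {K} in
theorem face_false_sd {n : ℕ} (c : (Fin (n + 1) → Bool) → K) :
    face false (sd c) = sd (face false c) := face_false_kd _ _

variable {K} in
theorem face_true_sd {n : ℕ} (c : (Fin (n + 1) → Bool) → K) :
    face true (sd c) = face false c - sd (face true c) := by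
  rw [face_true_kd, one_smul]; rfl

variable {K} in
theorem suppOn_iff {n : ℕ} {P : (Fin (n + 1) → Bool) → Prop} {c : (Fin (n + 1) → Bool) → K} :
    SuppOn P c ↔ SuppOn (face false P) (face false c) ∧ SuppOn (face true P) (face true c) := by
  refine ⟨fun h => ⟨fun S hS => h _ hS, fun S hS => h _ hS⟩, fun h S hS => ?_⟩
  rw [← Fin.cons_self_tail S] at hS ⊢
  cases hb : S 0 <;> rw [hb] at hS
  · exact h.1 _ hS
  · exact h.2 _ hS

variable {K} in
theorem hasCod_iff {n p : ℕ} {c : (Fin (n + 1) → Bool) → K} :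
    HasCod (p + 1) c ↔ HasCod p (face false c) ∧ HasCod (p + 1) (face true c) := by
  refine ⟨fun h => ⟨fun S hS => h _ (by rw [cod_cons_false]; omega),
    fun S hS => h _ (by rwa [cod_cons_true])⟩, fun h S hS => ?_⟩
  rw [← Fin.cons_self_tail S] at hS ⊢
  cases hb : S 0 <;> rw [hb] at hS
  · exact h.1 _ (by rw [cod_cons_false] at hS; omega)
  · exact h.2 _ (by rwa [cod_cons_true] at hS)

variable {K} in
theorem hasCod_zero_iff {n : ℕ} {c : (Fin (n + 1) → Bool) → K} :
    HasCod 0 c ↔ face false c = 0 ∧ HasCod 0 (face true c) := by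
  refine ⟨fun h => ⟨funext fun S => h _ (by rw [cod_cons_false]; omega),
    fun S hS => h _ (by rwa [cod_cons_true])⟩, fun h S hS => ?_⟩
  rw [← Fin.cons_self_tail S] at hS ⊢
  cases hb : S 0 <;> rw [hb] at hS
  · exact congrFun h.1 _
  · exact h.2 _ (by rwa [cod_cons_true] at hS)

variable {K} in
theorem SuppOn.eq_zero {n : ℕ} {P : (Fin n → Bool) → Prop} {c : (Fin n → Bool) → K}
    (h : SuppOn P c) (hP : ∀ S, ¬ P S) : c = 0 := funext fun S => h S (hP S)

variable {K} in
theorem SuppOn.mono {n : ℕ} {P Q : (Fin n → Bool) → Prop} {c : (Fin n → Bool) → K}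
    (h : SuppOn P c) (hP : ∀ S, P S → Q S) : SuppOn Q c := fun S hS => h S (mt (hP S) hS)

variable {K} in
theorem SuppOn.neg {n : ℕ} {P : (Fin n → Bool) → Prop} {c : (Fin n → Bool) → K}
    (h : SuppOn P c) : SuppOn P (-c) := fun S hS => by simp [h S hS]

variable {K} in
theorem SuppOn.sub {n : ℕ} {P : (Fin n → Bool) → Prop} {c e : (Fin n → Bool) → K}
    (h : SuppOn P c) (h' : SuppOn P e) : SuppOn P (c - e) :=
  fun S hS => by simp [h S hS, h' S hS]

variable {K} in
theorem suppOn_zero {n : ℕ} (P : (Fin n → Bool) → Prop) :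
    SuppOn P (0 : (Fin n → Bool) → K) := fun _ _ => rfl

theorem not_nonAcyclic_empty {n p : ℕ} {P : (Fin n → Bool) → Prop} (hP : ∀ S, ¬ P S) :
    ¬ NonAcyclic K P p := by
  rintro ⟨c, hc, -, -, h⟩
  exact h 0 (suppOn_zero _) (by rw [hc.eq_zero hP]; exact kd_zero _)

/-- A cone over the first vertex is acyclic. -/
theorem not_nonAcyclic_cone {n p : ℕ} {P : (Fin (n + 1) → Bool) → Prop}
    (hP : ∀ S, P (Fin.cons false S) ↔ P (Fin.cons true S)) : ¬ NonAcyclic K P p := by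
  rintro ⟨c, hc, -, hd, h⟩
  have h1 : face false c = sd (face true c) := by
    have := face_true_sd c
    rw [hd, face_zero] at this
    exact (sub_eq_zero.1 this.symm)
  refine h (glue (face true c) 0) (suppOn_iff.2 ⟨?_, ?_⟩) (face_ext ?_ ?_)
  · rw [face_false_glue]
    exact (suppOn_iff.1 hc).2.mono fun S hS => (hP S).2 hS
  · rw [face_true_glue]; exact suppOn_zero _
  · rw [face_false_sd, face_false_glue, h1]
  · rw [face_true_sd, face_false_glue, face_true_glue]
    exact (congrArg _ (kd_zero _)).trans (sub_zero _)

/-- If the first vertex lies in no face, it may be deleted. -/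
theorem nonAcyclic_drop {n p : ℕ} {P : (Fin (n + 1) → Bool) → Prop} {Q : (Fin n → Bool) → Prop}
    (hf : ∀ S, ¬ P (Fin.cons false S)) (ht : ∀ S, P (Fin.cons true S) ↔ Q S) :
    NonAcyclic K P p ↔ NonAcyclic K Q p := by
  obtain rfl : face true P = Q := funext fun S => propext (ht S)
  constructor
  · rintro ⟨c, hc, hp, hd, h⟩
    have hc0 : face false c = 0 := (suppOn_iff.1 hc).1.eq_zero hf
    have hd1 : sd (face true c) = 0 := by
      have := face_true_sd c
      rw [hd, hc0, zero_sub, face_zero] at this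
      exact neg_eq_zero.1 this.symm
    refine ⟨face true c, (suppOn_iff.1 hc).2, ?_, hd1, fun e he hec => ?_⟩
    · rcases p with _ | p
      · exact (hasCod_zero_iff.1 hp).2
      · exact (hasCod_iff.1 hp).2
    · refine h (glue 0 (-e)) (suppOn_iff.2 ⟨?_, ?_⟩) (face_ext ?_ ?_)
      · rw [face_false_glue]; exact suppOn_zero _
      · rw [face_true_glue]; exact he.neg
      · rw [face_false_sd, face_false_glue, hc0]; exact kd_zero _
      · rw [face_true_sd, face_false_glue, face_true_glue, sd, kd_neg, ← hec]; simp
  · rintro ⟨c, hc, hp, hd, h⟩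
    refine ⟨glue 0 c, suppOn_iff.2 ⟨?_, ?_⟩, ?_, face_ext ?_ ?_, fun e he hec => ?_⟩
    · rw [face_false_glue]; exact suppOn_zero _
    · rwa [face_true_glue]
    · rcases p with _ | p
      · rw [hasCod_zero_iff]; simpa using hp
      · rw [hasCod_iff]; simpa using ⟨fun S _ => rfl, hp⟩
    · rw [face_false_sd, face_false_glue]; exact kd_zero _
    · rw [face_true_sd, face_false_glue, face_true_glue, hd]; simp [face_zero]
    · have he0 : face false e = 0 := (suppOn_iff.1 he).1.eq_zero hf
      refine h (-(face true e)) (suppOn_iff.1 he).2.neg ?_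
      have := face_true_sd e
      rw [hec, face_true_glue, he0, zero_sub] at this
      rw [sd, kd_neg, ← this]

/-- Homology of a suspension with apexes the first two vertices, when `Q` is the link of the second
vertex: the first two vertices span no edge (`hff`), and the link of the first vertex is the whole
deletion of both (`hft`). Hence the complex is a cone over the first vertex with a second cone, over
`Q`, attached. -/
theorem nonAcyclic_susp_of {n p : ℕ} {P : (Fin (n + 1 + 1) → Bool) → Prop} {Q : (Fin n → Bool) → Prop}
    (hff : ∀ S, ¬ P (Fin.cons false (Fin.cons false S)))
    (htf : ∀ S, P (Fin.cons true (Fin.cons false S)) ↔ Q S)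
    (hft : ∀ S, P (Fin.cons false (Fin.cons true S)) ↔ P (Fin.cons true (Fin.cons true S)))
    (hsub : ∀ S, P (Fin.cons true (Fin.cons false S)) → P (Fin.cons true (Fin.cons true S)))
    :
    NonAcyclic K P p → ∃ q, p = q + 1 ∧ NonAcyclic K Q q := by
  obtain rfl : face false (face true P) = Q := funext fun S => propext (htf S)
  have hR : face true (face false P) = face true (face true P) :=
    funext fun S => propext (hft S)
  rintro ⟨c, hc, hp, hd, h⟩
  obtain ⟨hcf, hct⟩ := suppOn_iff.1 hc
  rw [suppOn_iff] at hcf hct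
  have hc0 : face false (face false c) = 0 := hcf.1.eq_zero hff
  have hrel : face true (face false c) = face false (face true c) - sd (face true (face true c)) := by
    have := congrArg (face true) (face_true_sd c)
    rw [hd, face_sub, face_true_sd, face_zero, face_zero] at this
    exact (sub_eq_zero.1 this.symm)
  have hcyc : sd (face false (face true c)) = 0 := by
    have := congrArg (face false) (face_true_sd c)
    rw [hd, face_sub, face_false_sd, face_zero, face_zero, hc0, zero_sub] at this
    exact neg_eq_zero.1 this.symm
  have key : ∀ e', SuppOn (face false (face true P)) e' → sd e' ≠ face false (face true c) := by
    intro e' he' hee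
    -- If `e'` fills the link of the second vertex in `c`, then `c` is a boundary: the suspension of `e'`
    -- accounts for that link, and what remains is coned off from the first vertex.
    refine h (glue (glue 0 (face true (face true c) - e')) (glue (-e') 0)) ?_ ?_
    · rw [suppOn_iff, suppOn_iff, suppOn_iff]
      simp only [face_false_glue, face_true_glue]
      refine ⟨⟨suppOn_zero _, ?_⟩, he'.neg, suppOn_zero _⟩
      rw [hR]
      exact hct.2.sub (he'.mono hsub)
    · have z0 : sd (0 : (Fin n → Bool) → K) = 0 := kd_zero _
      refine face_ext (face_ext ?_ ?_) (face_ext ?_ ?_)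
      · simp only [face_false_sd, face_false_glue, hc0, z0]
      · simp only [face_false_sd, face_true_sd, face_false_glue, face_true_glue]
        rw [sd, kd_sub, hrel, ← hee]; simp
      · simp only [face_false_sd, face_true_sd, face_false_glue, face_true_glue, face_sub]
        rw [sd, kd_neg, ← hee]; simp
      · simp only [face_true_sd, face_false_glue, face_true_glue, face_sub, z0]
        simp
  rcases p with _ | q
  · have := (hasCod_zero_iff.1 hp).2
    rw [hasCod_zero_iff] at this
    exact absurd (kd_zero _) (this.1 ▸ key 0 (suppOn_zero _))
  · have := (hasCod_iff.1 hp).2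
    rw [hasCod_iff] at this
    exact ⟨q, rfl, _, hct.1, this.1, hcyc, key⟩

/-- Converse of `nonAcyclic_susp_of`: a cycle of `Q` is suspended by the first two vertices. -/
theorem nonAcyclic_susp {n p : ℕ} {P : (Fin (n + 1 + 1) → Bool) → Prop} {Q : (Fin n → Bool) → Prop}
    (hff : ∀ S, ¬ P (Fin.cons false (Fin.cons false S)))
    (htf : ∀ S, P (Fin.cons true (Fin.cons false S)) ↔ Q S)
    (hft : ∀ S, P (Fin.cons false (Fin.cons true S)) ↔ P (Fin.cons true (Fin.cons true S)))
    (hsub : ∀ S, P (Fin.cons true (Fin.cons false S)) → P (Fin.cons true (Fin.cons true S)))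
    (hQ : NonAcyclic K Q p) : NonAcyclic K P (p + 1) := by
  obtain rfl : face false (face true P) = Q := funext fun S => propext (htf S)
  have hR : face true (face false P) = face true (face true P) :=
    funext fun S => propext (hft S)
  obtain ⟨c, hc, hp, hd, h⟩ := hQ
  have z0 : sd (0 : (Fin n → Bool) → K) = 0 := kd_zero _
  refine ⟨glue (glue 0 c) (glue c 0), ?_, ?_, ?_, fun e he hec => ?_⟩
  · rw [suppOn_iff, suppOn_iff, suppOn_iff]
    simp only [face_false_glue, face_true_glue]
    exact ⟨⟨suppOn_zero _, hR ▸ hc.mono hsub⟩, hc, suppOn_zero _⟩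
  · rw [hasCod_iff, hasCod_iff]
    simp only [face_false_glue, face_true_glue]
    refine ⟨?_, hp, fun _ _ => rfl⟩
    rcases p with _ | p
    · rw [hasCod_zero_iff]; simpa using hp
    · rw [hasCod_iff]; simpa using ⟨fun S _ => rfl, hp⟩
  · refine face_ext (face_ext ?_ ?_) (face_ext ?_ ?_)
    · simp only [face_false_sd, face_false_glue, z0, face_zero]
    · simp only [face_false_sd, face_true_sd, face_false_glue, face_true_glue, hd, face_zero]; simp
    · simp only [face_false_sd, face_true_sd, face_false_glue, face_true_glue, face_sub, hd,
        face_zero]; simp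
    · simp only [face_true_sd, face_false_glue, face_true_glue, face_sub, z0, face_zero]; simp
  · obtain ⟨hef, het⟩ := suppOn_iff.1 he
    rw [suppOn_iff] at hef het
    have he0 : face false (face false e) = 0 := hef.1.eq_zero hff
    refine h (-(face false (face true e))) het.1.neg ?_
    have := congrArg (face false) (face_true_sd e)
    rw [hec, face_sub, face_false_sd, he0, zero_sub] at this
    simp only [face_false_glue, face_true_glue] at this
    rw [sd, kd_neg, ← this]

/-- The face `{i | S i = false}` belongs to the complex of multidegree `a`: subtracting its indicator
from `a` leaves a nonnegative vector `b` with `b_i + b_{i+1} ≥ t` along the path, and with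
`u + b_1 ≥ t` for the amount `u` already placed to the left of the first vertex. The face condition
`1 ≤ a 0` keeps the truncated subtraction honest. -/
def PathFace (t : ℕ) : ∀ {n : ℕ} (_ : ℕ) (_ : Fin n → ℕ) (_ : Fin n → Bool), Prop
  | 0, _, _, _ => True
  | _ + 1, u, a, S => (S 0 = false → 1 ≤ a 0) ∧ t ≤ u + (a 0 - if S 0 then 0 else 1) ∧
      PathFace t (a 0 - if S 0 then 0 else 1) (Fin.tail a) (Fin.tail S)

theorem pathFace_cons_false {t n u : ℕ} {a : Fin (n + 1) → ℕ} {S : Fin n → Bool} :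
    PathFace t u a (Fin.cons false S) ↔
      1 ≤ a 0 ∧ t ≤ u + (a 0 - 1) ∧ PathFace t (a 0 - 1) (Fin.tail a) S := by
  simp [PathFace]

theorem pathFace_cons_true {t n u : ℕ} {a : Fin (n + 1) → ℕ} {S : Fin n → Bool} :
    PathFace t u a (Fin.cons true S) ↔ t ≤ u + a 0 ∧ PathFace t (a 0) (Fin.tail a) S := by
  simp [PathFace]

theorem PathFace.le {t n u : ℕ} {a : Fin (n + 1) → ℕ} {S : Fin (n + 1) → Bool}
    (h : PathFace t u a S) : t ≤ u + a 0 := by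
  have := h.2.1; omega

theorem PathFace.mono {t n u v : ℕ} (huv : u ≤ v) {a : Fin n → ℕ} {S : Fin n → Bool}
    (h : PathFace t u a S) : PathFace t v a S := by
  cases n with
  | zero => trivial
  | succ n => exact ⟨h.1, h.2.1.trans (by omega), h.2.2⟩

theorem PathFace.of_slack {t n u v : ℕ} {a : Fin (n + 1) → ℕ} (huv : t + 1 ≤ u + a 0)
    {S : Fin (n + 1) → Bool} (h : PathFace t v a S) : PathFace t u a S :=
  ⟨h.1, by split <;> omega, h.2.2⟩

/-- When `a_1 + a_2 = t + 1`, no face contains both of the first two vertices. If moreover `u + a_1 > t`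
and `a_2 ≥ 1`, each of them can be in a face, and the complex is the suspension of that of the path
without these two vertices, with `a_2 - 1` as new left amount. -/
theorem pathFace_susp_iff {t n u p : ℕ} (hu : u ≤ t) {a : Fin (n + 1 + 1) → ℕ} (h0 : t < a 0 + u)
    (h1 : a 0 + a 1 = t + 1) (h2 : 1 ≤ a 1) :
    NonAcyclic K (PathFace t u a) p ↔
      ∃ q, p = q + 1 ∧ NonAcyclic K (PathFace t (a 1 - 1) (Fin.tail (Fin.tail a))) q := by
  have ha : Fin.tail a 0 = a 1 := rfl
  have hff : ∀ S, ¬ PathFace t u a (Fin.cons false (Fin.cons false S)) := fun S => by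
    simp only [pathFace_cons_false, ha]; omega
  have htf : ∀ S, PathFace t u a (Fin.cons true (Fin.cons false S)) ↔
      PathFace t (a 1 - 1) (Fin.tail (Fin.tail a)) S := fun S => by
    simp only [pathFace_cons_false, pathFace_cons_true, ha]
    exact ⟨fun h => h.2.2.2, fun h => ⟨by omega, by omega, by omega, h⟩⟩
  have hft : ∀ S, PathFace t u a (Fin.cons false (Fin.cons true S)) ↔
      PathFace t u a (Fin.cons true (Fin.cons true S)) := fun S => by
    simp only [pathFace_cons_false, pathFace_cons_true, ha]
    exact ⟨fun h => ⟨by omega, by omega, h.2.2.2⟩,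
      fun h => ⟨by omega, by omega, by omega, h.2.2⟩⟩
  have hsub : ∀ S, PathFace t u a (Fin.cons true (Fin.cons false S)) →
      PathFace t u a (Fin.cons true (Fin.cons true S)) := fun S => by
    simp only [pathFace_cons_false, pathFace_cons_true, ha]
    exact fun h => ⟨by omega, by omega, h.2.2.2.mono (by omega)⟩
  constructor
  · exact nonAcyclic_susp_of K hff htf hft hsub
  · rintro ⟨q, rfl, h⟩
    exact nonAcyclic_susp K hff htf hft hsub h

/-- Upper bound for the degree of homology of the complexes `PathFace t u a`, by induction along the
path. -/
theorem bound_of_nonAcyclic (t : ℕ) : ∀ {n p u : ℕ}, u ≤ t → ∀ {a : Fin n → ℕ},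
    NonAcyclic K (PathFace t u a) p → p * (2 * t + 1) ≤ u + n * t := by
  intro n
  induction n using Nat.strong_induction_on with
  | _ n ih =>
  intro p u hu a h
  rcases n with _ | n
  · obtain ⟨c, -, hp, -, h⟩ := h
    rcases p with _ | p
    · simp
    · refine absurd (kd_zero _) (h 0 (suppOn_zero _) |>.trans_eq ?_)
      funext S; exact hp S (by simp [cod])
  have drop (v : ℕ) (hv : a 0 = v) (hvt : v ≤ t)
      (hS : ∀ S, ¬ PathFace t u a (Fin.cons false S)) (hu' : t ≤ u + v) :
      p * (2 * t + 1) ≤ u + (n + 1) * t := by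
    have := ih n (by omega) hvt ((nonAcyclic_drop K hS (Q := PathFace t v (Fin.tail a)) fun S => by
      rw [pathFace_cons_true, hv]; simp [hu']).1 h)
    nlinarith
  -- Too little at the left end leaves no face; equality there keeps the first vertex out of all faces.
  rcases lt_trichotomy (a 0 + u) t with h0 | h0 | h0
  · exact absurd h (not_nonAcyclic_empty K fun S hS => by have := hS.le; omega)
  · exact drop _ rfl (by omega) (fun S => by rw [pathFace_cons_false]; omega) (by omega)
  -- From here on the first vertex is only constrained by the second one.
  rcases n with _ | n
  · refine absurd h (not_nonAcyclic_cone K fun S => ?_)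
    rw [pathFace_cons_false, pathFace_cons_true]
    simp only [PathFace, and_true]; omega
  have h1 : Fin.tail a 0 = a 1 := rfl
  rcases lt_trichotomy (a 0 + a 1) t with h2 | h2 | h2
  · exact absurd h (not_nonAcyclic_empty K fun S hS => by
      have := hS.2.2.le; rw [h1] at this; omega)
  · refine drop _ rfl (by omega) (fun S hS => ?_) (by omega)
    rw [pathFace_cons_false] at hS
    have := hS.2.2.le
    rw [h1] at this; omega
  rcases Nat.lt_or_ge (t + 1) (a 0 + a 1) with h3 | h3
  · refine absurd h (not_nonAcyclic_cone K fun S => ?_)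
    rw [pathFace_cons_false, pathFace_cons_true]
    constructor
    · rintro ⟨-, -, h⟩; exact ⟨by omega, h.mono (by omega)⟩
    · rintro ⟨-, h⟩; exact ⟨by omega, by omega, h.of_slack (by rw [h1]; omega)⟩
  rcases Nat.eq_zero_or_pos (a 1) with h4 | h4
  · refine absurd h (not_nonAcyclic_cone K fun S => ?_)
    rw [pathFace_cons_false, pathFace_cons_true]
    simp only [PathFace, h1, h4]
    constructor
    · rintro ⟨-, -, h, -, h'⟩; exact ⟨by omega, h, by omega, h'⟩
    · rintro ⟨-, h, -, h'⟩; exact ⟨by omega, by omega, h, by omega, h'⟩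
  · obtain ⟨q, rfl, hq⟩ := (pathFace_susp_iff K hu (by omega) (by omega) h4).1 h
    have := ih n (by omega) (by omega) hq
    have h5 : a 1 - 1 + 1 ≤ u := by omega
    nlinarith

/-- A multidegree with nonzero homology in degree `p`. Two vertices with values `t + 1 - u`, `u` raise
the degree by one and lower the left amount `u` by one; a single vertex with value `t - u` replaces
`u` by `t - u`, which is used to restore the left amount to `t` when it has dropped to `0`, and for all vertices once
the degree is `0`. -/
theorem exists_nonAcyclic (t : ℕ) : ∀ (n p u r : ℕ), u ≤ t → n = r + 2 * p → p ≤ u + r * t →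
    ∃ a : Fin n → ℕ, NonAcyclic K (PathFace t u a) p := by
  intro n
  induction n using Nat.strong_induction_on with
  | _ n ih =>
  intro p u r hu hn hp
  rcases Nat.eq_zero_or_pos n with rfl | hn0
  · obtain rfl : p = 0 := by omega
    refine ⟨0, fun _ => 1, fun S hS => absurd trivial hS, fun S hS => absurd (by simp [cod]) hS, rfl,
      fun e _ he => ?_⟩
    exact one_ne_zero (congrFun he 0).symm
  by_cases hA : p = 0 ∨ u = 0
  · obtain ⟨r, rfl⟩ : ∃ r', r = r' + 1 := Nat.exists_eq_add_one.2 (by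
      rcases hA with rfl | rfl
      · omega
      · rcases r with _ | r
        · omega
        · omega)
    obtain ⟨n, rfl⟩ : ∃ m, n = m + 1 := ⟨n - 1, by omega⟩
    obtain ⟨a, ha⟩ := ih n (by omega) p (t - u) r (by omega) (by omega) (by
      rcases hA with rfl | rfl
      · omega
      · rw [add_mul] at hp; omega)
    refine ⟨Fin.cons (t - u) a, (nonAcyclic_drop K (fun S => ?_) fun S => ?_).2 ha⟩
    · rw [pathFace_cons_false, Fin.cons_zero]; omega
    · rw [pathFace_cons_true, Fin.cons_zero, Fin.tail_cons]
      exact ⟨fun h => h.2, fun h => ⟨by omega, h⟩⟩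
  · obtain ⟨q, rfl⟩ : ∃ q, p = q + 1 := ⟨p - 1, by omega⟩
    obtain ⟨n, rfl⟩ : ∃ m, n = m + 2 := ⟨n - 2, by omega⟩
    obtain ⟨a, ha⟩ := ih n (by omega) q (u - 1) r (by omega) (by omega) (by omega)
    exact ⟨Fin.cons (t + 1 - u) (Fin.cons u a : Fin (n + 1) → ℕ),
      (pathFace_susp_iff K hu (by simp; omega) (by simp; omega) (by simp; omega)).2 ⟨q, rfl, ha⟩⟩

end Strand

/-! ### Powers of the cover ideal of a path -/

/-- The inequalities defining `J(P_n)^t`: `b_i + b_{i+1} ≥ t` for neighbours, and `u + b_1 ≥ t` at the left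
end. For `u = t` the latter is void. -/
def Mem (t : ℕ) : ∀ {n : ℕ} (_ : ℕ) (_ : Fin n → ℕ), Prop
  | 0, _, _ => True
  | _ + 1, u, b => t ≤ u + b 0 ∧ Mem t (b 0) (Fin.tail b)

theorem pathFace_iff {t n u : ℕ} {a : Fin n → ℕ} {S : Fin n → Bool} :
    PathFace t u a S ↔ (∀ i, S i = false → 1 ≤ a i) ∧
      Mem t u (fun i => a i - if S i then 0 else 1) := by
  induction n generalizing u with
  | zero => simp [PathFace, Mem]
  | succ n ih =>
    simp only [PathFace, ih, Mem, Fin.forall_fin_succ (P := fun i => S i = false → 1 ≤ a i)]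
    exact ⟨fun h => ⟨⟨h.1, h.2.2.1⟩, h.2.1, h.2.2.2⟩, fun h => ⟨h.1.1, h.2.1, h.1.2, h.2.2⟩⟩

theorem mem_iff {t n u : ℕ} {b : Fin n → ℕ} :
    Mem t u b ↔ (∀ h : 0 < n, t ≤ u + b ⟨0, h⟩) ∧
      ∀ (i : ℕ) (h : i + 1 < n), t ≤ b ⟨i, by omega⟩ + b ⟨i + 1, h⟩ := by
  induction n generalizing u with
  | zero => simp [Mem]
  | succ n ih =>
    simp only [Mem, ih, Fin.tail]
    constructor
    · rintro ⟨h1, h2, h3⟩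
      refine ⟨fun _ => h1, fun i h => ?_⟩
      rcases i with _ | i
      · exact h2 (by omega)
      · exact h3 i (by omega)
    · rintro ⟨h1, h2⟩
      exact ⟨h1 (by omega), fun h => h2 0 (by omega), fun i h => h2 (i + 1) (by omega)⟩

theorem mem_iff_adj {t n : ℕ} {b : Fin n → ℕ} :
    Mem t t b ↔ ∀ u v, (SimpleGraph.pathGraph n).Adj u v → t ≤ b u + b v := by
  rw [mem_iff]
  simp only [SimpleGraph.pathGraph_adj]
  constructor
  · rintro ⟨-, h⟩ ⟨u, hu⟩ ⟨v, hv⟩ (huv | huv)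
    · obtain rfl : u + 1 = v := huv
      exact h u hv
    · obtain rfl : v + 1 = u := huv
      rw [add_comm]; exact h v hu
  · exact fun h => ⟨fun _ => by omega, fun i hi => h _ _ (Or.inl rfl)⟩

theorem mem_coverIdeal_iff {K : Type*} [Field K] {n : ℕ} {G : SimpleGraph (Fin n)}
    {f : MvPolynomial (Fin n) K} : f ∈ coverIdeal K G ↔
      ∀ b ∈ f.support, ∀ u v, G.Adj u v → 1 ≤ b u + b v := by
  simp only [coverIdeal, Ideal.mem_iInf]
  have (u v : Fin n) : (f ∈ Ideal.span {X u, X v}) ↔ ∀ b ∈ f.support, 1 ≤ b u + b v := by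
    rw [← Set.image_pair, mem_ideal_span_X_image]
    refine forall₂_congr fun b _ => ?_
    simp; omega
  simp only [this]
  exact ⟨fun h b hb u v huv => h u v huv b hb, fun h u v huv b hb => h b hb u v huv⟩

/-- A monomial satisfying the inequalities for `t + 1` is divisible by a vertex cover whose quotient
satisfies those for `t`: the cover consists of the even vertices with positive exponent and the odd
vertices with exponent at least `t + 1`. -/
theorem monomial_mem_pow {K : Type*} [Field K] {n : ℕ} (t : ℕ) {b : Fin n →₀ ℕ}
    (hb : ∀ u v, (SimpleGraph.pathGraph n).Adj u v → t ≤ b u + b v) (r : K) :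
    monomial b r ∈ (coverIdeal K (SimpleGraph.pathGraph n)) ^ t := by
  induction t generalizing b r with
  | zero => simp
  | succ t ih =>
    -- An even vertex outside the cover has exponent `0`, so its neighbours have exponent at least
    -- `t + 1` and are in it; if both ends of an edge are in the cover, the odd end alone still
    -- contributes `t` to the quotient.
    let c : Fin n →₀ ℕ := Finsupp.equivFunOnFinite.symm fun i =>
      if (i.val % 2 = 0 ∧ 1 ≤ b i) ∨ (i.val % 2 = 1 ∧ t + 1 ≤ b i) then 1 else 0
    have hc : ∀ i, c i = if (i.val % 2 = 0 ∧ 1 ≤ b i) ∨ (i.val % 2 = 1 ∧ t + 1 ≤ b i)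
      then 1 else 0 := fun i => rfl
    have hcb : c ≤ b := fun i => by rw [hc]; split <;> omega
    have hadj : ∀ u v, (SimpleGraph.pathGraph n).Adj u v →
        1 ≤ c u + c v ∧ t ≤ (b - c) u + (b - c) v := fun u v huv => by
      have h1 := hb u v huv
      rw [SimpleGraph.pathGraph_adj] at huv
      rw [Finsupp.tsub_apply, Finsupp.tsub_apply, hc, hc]
      constructor <;> split_ifs <;> omega
    have := Ideal.mul_mem_mul (ih (b := b - c) (fun u v h => (hadj u v h).2) r)
      (show monomial c (1 : K) ∈ coverIdeal K (SimpleGraph.pathGraph n) from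
        mem_coverIdeal_iff.2 fun e he u v huv => by
          obtain rfl : e = c := by simpa using support_monomial_subset he
          exact (hadj u v huv).1)
    rwa [monomial_mul, mul_one, tsub_add_cancel_of_le hcb, ← pow_succ] at this

/-- `J(P_n)^t` is the monomial ideal of all `x^b` with `b_i + b_{i+1} ≥ t`. -/
theorem mem_pow_iff {K : Type*} [Field K] {n : ℕ} (t : ℕ) {f : MvPolynomial (Fin n) K} :
    f ∈ (coverIdeal K (SimpleGraph.pathGraph n)) ^ t ↔ ∀ b ∈ f.support, Mem t t b := by
  simp only [mem_iff_adj]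
  constructor
  · intro hf
    induction t generalizing f with
    | zero => simp
    | succ t ih =>
      rw [pow_succ] at hf
      induction hf using Submodule.mul_induction_on' with
      | mem_mul_mem g hg h hh =>
        intro b hb u v huv
        obtain ⟨b1, h1, b2, h2, rfl⟩ := Finset.mem_add.1 (support_mul g h hb)
        have := ih hg b1 h1 u v huv
        have := mem_coverIdeal_iff.1 hh b2 h2 u v huv
        simp only [Finsupp.add_apply]; omega
      | add g _ h _ hg hh =>
        intro b hb
        rcases Finset.mem_union.1 (support_add hb) with hb | hb
        · exact hg b hb
        · exact hh b hb
  · intro h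
    rw [f.as_sum]
    exact Ideal.sum_mem _ fun b hb => monomial_mem_pow t (h b hb) _

/-! ### Multigraded strands of the Koszul complex -/

section Strands
variable {K : Type*} [Field K]

/-- Evaluating the values of a Koszul cochain by additive maps that turn multiplication by `x_i` into
removal of `i` from the index set carries the Koszul differential to the simplicial one. -/
theorem strand_kd_aux {R M : Type*} [CommRing R] [AddCommGroup M] [Module R M] {n : ℕ}
    (x : Fin n → R) (φ : (Fin n → Bool) → M →+ K)
    (h : ∀ S i, S i = true → ∀ m, φ S (x i • m) = φ (Function.update S i false) m)
    (ω : (Fin n → Bool) → M) : (fun S => φ S (kd x ω S)) = sd (fun S => φ S (ω S)) := by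
  induction n with
  | zero => funext S; simp [kd_zero_dim]
  | succ n ih =>
    have ih' (b : Bool) (η : (Fin n → Bool) → M) :
        (fun S => φ (Fin.cons b S) (kd (Fin.tail x) η S)) =
          sd (fun S => φ (Fin.cons b S) (η S)) :=
      ih (Fin.tail x) (fun S => φ (Fin.cons b S)) (fun S i hS m => by
        rw [Fin.cons_update]
        exact h (Fin.cons b S) i.succ (by simpa using hS) m) η
    refine face_ext ?_ ?_
    · rw [face_false_sd]
      have h1 : face false (fun S => φ S (kd x ω S)) =
          fun S => φ (Fin.cons false S) (face false (kd x ω) S) := rfl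
      rw [h1, face_false_kd]
      exact ih' false (face false ω)
    · rw [face_true_sd]
      have h1 : face true (fun S => φ S (kd x ω S)) =
          fun S => φ (Fin.cons true S) (face true (kd x ω) S) := rfl
      rw [h1, face_true_kd]
      refine Eq.trans ?_ (congrArg _ (ih' true (face true ω)))
      funext S
      simp only [Pi.sub_apply, Pi.smul_apply, map_sub]
      rw [h _ 0 (by simp)]
      simp [face]

/-- The exponent of the coefficient of `e_S` in multidegree `a`: the indicator of `{i | S i = false}`
is subtracted from `a`. The subtraction is truncated, hence only meaningful under `Occurs a S`. -/
noncomputable def expo {n : ℕ} (a : Fin n → ℕ) (S : Fin n → Bool) : Fin n →₀ ℕ :=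
  Finsupp.equivFunOnFinite.symm fun i => a i - if S i then 0 else 1

theorem expo_apply {n : ℕ} (a : Fin n → ℕ) (S : Fin n → Bool) (i : Fin n) :
    expo a S i = a i - if S i then 0 else 1 := rfl

/-- The basis element `e_S` occurs in multidegree `a`. -/
def Occurs {n : ℕ} (a : Fin n → ℕ) (S : Fin n → Bool) : Prop := ∀ i, S i = false → 1 ≤ a i

theorem eq_of_expo {n : ℕ} {a b : Fin n → ℕ} {S : Fin n → Bool} (ha : Occurs a S)
    (hb : Occurs b S) (h : expo a S = expo b S) : a = b := by
  funext i
  have := DFunLike.congr_fun h i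
  rw [expo_apply, expo_apply] at this
  cases hS : S i
  · have h1 := ha i hS
    have h2 := hb i hS
    simp only [hS, Bool.false_eq_true, if_false] at this
    omega
  · simpa [hS] using this

open Classical in
/-- The coefficient of `f • e_S` in multidegree `a`. -/
noncomputable def strandHom {n : ℕ} (a : Fin n → ℕ) (S : Fin n → Bool) :
    MvPolynomial (Fin n) K →+ K :=
  if Occurs a S then coeffAddMonoidHom (expo a S) else 0

/-- The multidegree `a` component of a Koszul cochain of the polynomial ring. -/
noncomputable def strand {n : ℕ} (a : Fin n → ℕ) (ω : (Fin n → Bool) → MvPolynomial (Fin n) K) :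
    (Fin n → Bool) → K := fun S => strandHom a S (ω S)

theorem strandHom_of {n : ℕ} {a : Fin n → ℕ} {S : Fin n → Bool} (h : Occurs a S)
    (f : MvPolynomial (Fin n) K) : strandHom a S f = coeff (expo a S) f := by
  simp [strandHom, h]

theorem strandHom_of_not {n : ℕ} {a : Fin n → ℕ} {S : Fin n → Bool} (h : ¬ Occurs a S)
    (f : MvPolynomial (Fin n) K) : strandHom a S f = 0 := by
  simp [strandHom, h]

theorem strand_kd {n : ℕ} (a : Fin n → ℕ) (ω : (Fin n → Bool) → MvPolynomial (Fin n) K) :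
    strand a (kd (X : Fin n → MvPolynomial (Fin n) K) ω) = sd (strand a ω) := by
  classical
  refine strand_kd_aux X (strandHom a) (fun S i hS m => ?_) ω
  have hocc : Occurs a (Function.update S i false) ↔ Occurs a S ∧ 1 ≤ a i := by
    constructor
    · intro h
      refine ⟨fun j hj => h j ?_, h i (by simp)⟩
      rw [Function.update_apply]; split <;> simp [hj]
    · rintro ⟨h, h1⟩ j hj
      rw [Function.update_apply] at hj
      split at hj
      · subst j; exact h1
      · exact h j hj
  by_cases h : Occurs a S
  · rw [strandHom_of h, smul_eq_mul, mul_comm, coeff_mul_X']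
    have hi : expo a S i = a i := by simp [expo_apply, hS]
    by_cases h1 : 1 ≤ a i
    · rw [if_pos (by rw [Finsupp.mem_support_iff, hi]; omega), strandHom_of (hocc.2 ⟨h, h1⟩)]
      congr 1
      ext j
      rw [Finsupp.tsub_apply, expo_apply, expo_apply, Function.update_apply, Finsupp.single_apply]
      by_cases hj : j = i
      · subst hj; simp [hS]
      · simp [hj, Ne.symm hj]
    · rw [if_neg (by rw [Finsupp.mem_support_iff, hi]; omega),
        strandHom_of_not (fun h2 => h1 (hocc.1 h2).2)]
  · rw [strandHom_of_not h, strandHom_of_not (fun h2 => h (hocc.1 h2).1)]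

/-- A Koszul cochain is determined by its multigraded components. -/
theorem strand_ext {n : ℕ} {ω η : (Fin n → Bool) → MvPolynomial (Fin n) K}
    (h : ∀ a, strand a ω = strand a η) : ω = η := by
  funext S
  ext b
  let a : Fin n → ℕ := fun i => b i + if S i then 0 else 1
  have ha : Occurs a S := fun i hi => by simp [a, hi]
  have hb : expo a S = b := by ext i; simp [expo_apply, a]
  have := congrFun (h a) S
  rwa [strand, strand, strandHom_of ha, strandHom_of ha, hb] at this

theorem HasCod.strand {n p : ℕ} {ω : (Fin n → Bool) → MvPolynomial (Fin n) K} (h : HasCod p ω)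
    (a : Fin n → ℕ) : HasCod p (strand a ω) := fun S hS => by
  rw [_root_.strand, h S hS, map_zero]

/-- The multidegree `a` strand of the Koszul complex of `J(P_n)^t` lives on the complex `PathFace t t a`. -/
theorem suppOn_strand {n t : ℕ} {I : Ideal (MvPolynomial (Fin n) K)}
    (hI : ∀ f, f ∈ I ↔ ∀ b ∈ f.support, Mem t t b)
    {ω : (Fin n → Bool) → MvPolynomial (Fin n) K} (hω : ∀ S, ω S ∈ I) (a : Fin n → ℕ) :
    SuppOn (PathFace t t a) (strand a ω) := by
  intro S hS
  by_cases h : Occurs a S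
  · rw [strand, strandHom_of h]
    by_contra hc
    exact hS (pathFace_iff.2 ⟨h, (hI _).1 (hω S) _ (mem_support_iff.2 hc)⟩)
  · exact strandHom_of_not h _

/-- The multihomogeneous Koszul cochain of multidegree `a` with coefficients `c`. -/
noncomputable def unstrand {n : ℕ} (a : Fin n → ℕ) (c : (Fin n → Bool) → K) :
    (Fin n → Bool) → MvPolynomial (Fin n) K := fun S => monomial (expo a S) (c S)

theorem unstrand_mem {n t : ℕ} {I : Ideal (MvPolynomial (Fin n) K)}
    (hI : ∀ f, f ∈ I ↔ ∀ b ∈ f.support, Mem t t b) {a : Fin n → ℕ} {c : (Fin n → Bool) → K}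
    (hc : SuppOn (PathFace t t a) c) (S : Fin n → Bool) : unstrand a c S ∈ I := by
  by_cases hS : PathFace t t a S
  · refine (hI _).2 fun b hb => ?_
    obtain rfl : b = expo a S := by simpa using support_monomial_subset hb
    exact (pathFace_iff.1 hS).2
  · rw [unstrand, hc S hS, monomial_zero]; exact I.zero_mem

theorem strand_unstrand_self {n t : ℕ} {a : Fin n → ℕ} {c : (Fin n → Bool) → K}
    (hc : SuppOn (PathFace t t a) c) : strand a (unstrand a c) = c := by
  funext S
  by_cases hS : PathFace t t a S
  · rw [strand, strandHom_of (pathFace_iff.1 hS).1, unstrand, coeff_monomial, if_pos rfl]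
  · rw [strand, unstrand, hc S hS, monomial_zero, map_zero]

theorem strand_unstrand_ne {n t : ℕ} {a a' : Fin n → ℕ} (h : a ≠ a') {c : (Fin n → Bool) → K}
    (hc : SuppOn (PathFace t t a) c) : strand a' (unstrand a c) = 0 := by
  funext S
  by_cases hS : PathFace t t a S
  · by_cases hS' : Occurs a' S
    · rw [strand, strandHom_of hS', unstrand, coeff_monomial, if_neg fun he =>
        h (eq_of_expo (pathFace_iff.1 hS).1 hS' he)]; rfl
    · exact strandHom_of_not hS' _
  · rw [strand, unstrand, hc S hS, monomial_zero, map_zero]; rfl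

theorem strand_sum {n : ℕ} {ι : Type*} (A : Finset ι) (a : Fin n → ℕ)
    (ω : ι → (Fin n → Bool) → MvPolynomial (Fin n) K) :
    strand a (∑ j ∈ A, ω j) = ∑ j ∈ A, strand a (ω j) := by
  funext S
  simp only [strand, Finset.sum_apply, map_sum]

/-- Only finitely many multigraded components are nonzero. -/
theorem exists_finset_strand {n : ℕ} (ω : (Fin n → Bool) → MvPolynomial (Fin n) K) :
    ∃ A : Finset (Fin n → ℕ), ∀ a ∉ A, strand a ω = 0 := by
  classical
  refine ⟨Finset.univ.biUnion fun S => (ω S).support.image fun b i => b i + if S i then 0 else 1,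
    fun a ha => funext fun S => ?_⟩
  by_cases h : Occurs a S
  · rw [strand, strandHom_of h]
    by_contra hc
    refine ha (Finset.mem_biUnion.2 ⟨S, Finset.mem_univ _, Finset.mem_image.2
      ⟨expo a S, mem_support_iff.2 hc, ?_⟩⟩)
    funext i
    rw [expo_apply]
    cases hS : S i
    · have := h i hS; simp; omega
    · simp
  · exact strandHom_of_not h _

/-- `H_p(x; J(P_n)^t) = 0` when `p (2t + 1) > t + n t`, by solving in each multidegree separately. -/
theorem exists_kd_of_bound {n t p : ℕ} {I : Ideal (MvPolynomial (Fin n) K)}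
    (hI : ∀ f, f ∈ I ↔ ∀ b ∈ f.support, Mem t t b) (hp : t + n * t < p * (2 * t + 1))
    {z : (Fin n → Bool) → MvPolynomial (Fin n) K} (hz : HasCod p z) (hzI : ∀ S, z S ∈ I)
    (hd : kd (X : Fin n → MvPolynomial (Fin n) K) z = 0) :
    ∃ v, (∀ S, v S ∈ I) ∧ kd (X : Fin n → MvPolynomial (Fin n) K) v = z := by
  have hstr : ∀ a, ∃ e, SuppOn (PathFace t t a) e ∧ sd e = strand a z := fun a => by
    by_contra! hcon
    refine absurd (bound_of_nonAcyclic K t le_rfl ⟨strand a z, suppOn_strand hI hzI a, hz.strand a,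
      ?_, hcon⟩) (by omega)
    rw [← strand_kd, hd]; funext S; exact map_zero _
  choose e he hez using hstr
  obtain ⟨A, hA⟩ := exists_finset_strand z
  refine ⟨∑ a ∈ A, unstrand a (e a), fun S => ?_, strand_ext fun a => ?_⟩
  · rw [Finset.sum_apply]
    exact I.sum_mem fun a _ => unstrand_mem hI (he a) S
  · rw [strand_kd, strand_sum]
    by_cases ha : a ∈ A
    · rw [Finset.sum_eq_single_of_mem a ha fun b _ hb => strand_unstrand_ne hb (he b),
        strand_unstrand_self (he a), hez]
    · rw [Finset.sum_eq_zero fun b hb => strand_unstrand_ne (by rintro rfl; exact ha hb) (he b),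
        hA a ha]
      exact kd_zero _

/-- `H_p(x; J(P_n)^t) ≠ 0` when `p ≤ t + (n - 2p) t`, by a multihomogeneous cycle. -/
theorem exists_not_kd {n t p r : ℕ} {I : Ideal (MvPolynomial (Fin n) K)}
    (hI : ∀ f, f ∈ I ↔ ∀ b ∈ f.support, Mem t t b) (hn : n = r + 2 * p) (hp : p ≤ t + r * t) :
    ∃ z : (Fin n → Bool) → MvPolynomial (Fin n) K, HasCod p z ∧ (∀ S, z S ∈ I) ∧
      kd (X : Fin n → MvPolynomial (Fin n) K) z = 0 ∧
      ∀ v, (∀ S, v S ∈ I) → kd (X : Fin n → MvPolynomial (Fin n) K) v ≠ z := by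
  obtain ⟨a, c, hc, hcp, hcd, hne⟩ := exists_nonAcyclic K t n p t r le_rfl hn hp
  refine ⟨unstrand a c, fun S hS => ?_, unstrand_mem hI hc, strand_ext fun a' => ?_,
    fun v hv hvz => ?_⟩
  · rw [unstrand, hcp S hS, monomial_zero]
  · have h0 : strand a' (0 : (Fin n → Bool) → MvPolynomial (Fin n) K) = 0 :=
      funext fun S => map_zero _
    rw [strand_kd, h0]
    by_cases h : a = a'
    · subst h; rw [strand_unstrand_self hc, hcd]
    · rw [strand_unstrand_ne h hc]; exact kd_zero _
  · refine hne (strand a v) (suppOn_strand hI hv a) ?_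
    rw [← strand_kd, hvz, strand_unstrand_self hc]

/-- The Koszul complex of the polynomial ring is acyclic in positive degrees. This is the case `t = 0` of
`exists_kd_of_bound`, where `I` is the unit ideal. -/
theorem kVan_polynomial {n p : ℕ} (hp : 0 < p) :
    KVan (X : Fin n → MvPolynomial (Fin n) K) (MvPolynomial (Fin n) K) p := fun z hz hd => by
  obtain ⟨v, -, hv⟩ := exists_kd_of_bound (t := 0) (I := ⊤)
    (fun f => by simp [mem_iff]) (by simpa using hp) hz (fun _ => trivial) hd
  exact ⟨v, hv⟩

end Strands

/-! ### Depth -/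

theorem constantCoeff_of_mem_maxIdeal {K : Type*} [Field K] {n : ℕ}
    {f : MvPolynomial (Fin n) K} (hf : f ∈ maxIdeal K n) : constantCoeff f = 0 := by
  have : maxIdeal K n ≤ RingHom.ker (constantCoeff (σ := Fin n) (R := K)) := by
    rw [maxIdeal, Ideal.span_le]
    rintro _ ⟨i, rfl⟩
    simp
  exact this hf

theorem top_ne_smul_of_le {K : Type*} [Field K] {n : ℕ} {I : Ideal (MvPolynomial (Fin n) K)}
    (hI : I ≤ maxIdeal K n) {rs : List (MvPolynomial (Fin n) K)}
    (hrs : ∀ r ∈ rs, r ∈ maxIdeal K n) :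
    (⊤ : Submodule (MvPolynomial (Fin n) K) (MvPolynomial (Fin n) K ⧸ I)) ≠
      Ideal.ofList rs • ⊤ := by
  intro h
  have hle : Ideal.ofList rs ≤ maxIdeal K n := Ideal.span_le.2 hrs
  have h1 : (I.mkQ 1) ∈ (⊤ : Submodule (MvPolynomial (Fin n) K) (MvPolynomial (Fin n) K ⧸ I)) := trivial
  rw [h, ← Submodule.range_mkQ, ← Submodule.map_top, ← Submodule.map_smul''] at h1
  obtain ⟨f, hf, hf1⟩ := h1
  rw [← sub_eq_zero, ← map_sub, Submodule.mkQ_apply, Submodule.Quotient.mk_eq_zero] at hf1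
  have hf' : f ∈ maxIdeal K n := by
    have : Ideal.ofList rs • (⊤ : Ideal (MvPolynomial (Fin n) K)) ≤ Ideal.ofList rs :=
      Ideal.mul_le_right (I := ⊤) |> fun h => by rwa [smul_eq_mul, mul_comm]
    exact hle (this hf)
  have := (maxIdeal K n).sub_mem hf' (hI hf1)
  rw [sub_sub_cancel] at this
  simpa using constantCoeff_of_mem_maxIdeal this

theorem coverIdeal_pow_le {K : Type*} [Field K] {n t : ℕ} (hn : 2 ≤ n) (ht : 1 ≤ t) :
    coverIdeal K (SimpleGraph.pathGraph n) ^ t ≤ maxIdeal K n := by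
  refine (Ideal.pow_le_self (by omega)).trans fun f hf => ?_
  simp only [coverIdeal, Ideal.mem_iInf] at hf
  have hadj : (SimpleGraph.pathGraph n).Adj ⟨0, by omega⟩ ⟨1, hn⟩ :=
    SimpleGraph.pathGraph_adj.2 (Or.inl rfl)
  refine Ideal.span_mono ?_ (hf _ _ hadj)
  rintro _ (rfl | rfl) <;> exact ⟨_, rfl⟩

/-- For the odd path `P_n` with `n = 4k + 3` (`k ≥ 0`) and `1 ≤ t ≤ k`,
`depth(R/J(P_n)^t) = (2k + 1) + ⌊(2k + 1)/(2t + 1)⌋`. -/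
theorem depth_coverIdeal_pow_odd_path_three (K : Type*) [Field K] (k n t : ℕ)
    (hn : n = 4 * k + 3) (ht1 : 1 ≤ t) (ht2 : t ≤ k) :
    depthQuot K n ((coverIdeal K (SimpleGraph.pathGraph n)) ^ t)
      = (2 * k + 1) + (2 * k + 1) / (2 * t + 1) := by
  have hI := fun f => mem_pow_iff (K := K) (n := n) t (f := f)
  set I := (coverIdeal K (SimpleGraph.pathGraph n)) ^ t with hIdef
  set q := (2 * k + 1) / (2 * t + 1) with hq
  have hq1 : q * (2 * t + 1) ≤ 2 * k + 1 := Nat.div_mul_le_self _ _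
  have hq2 : 2 * k + 1 < (q + 1) * (2 * t + 1) := by
    rw [← Nat.div_lt_iff_lt_mul (by omega)]; exact Nat.lt_succ_self _
  have hIm : I ≤ maxIdeal K n := coverIdeal_pow_le (by omega) ht1
  have hqk : q ≤ k := by nlinarith
  -- `p` is the largest degree with nonzero Koszul homology of `I`
  obtain ⟨p, hp⟩ : ∃ p, p + q = 2 * k + 1 := ⟨2 * k + 1 - q, by omega⟩
  refine IsGreatest.csSup_eq ⟨?_, ?_⟩
  · obtain ⟨rs, hlen, hmem, hreg⟩ := exists_weaklyRegular (M := MvPolynomial (Fin n) K ⧸ I)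
      (X : Fin n → MvPolynomial (Fin n) K) (2 * k + 1 + q) fun p' hp' => by
        obtain ⟨p', rfl⟩ : ∃ m, p' = m + 1 := ⟨p' - 1, by omega⟩
        have hpp : p + 1 ≤ p' := by omega
        refine (kVan_polynomial (by omega)).quot_ideal fun z hz hzI hd =>
          exists_kd_of_bound hI ?_ hz hzI hd
        -- `(p + 1) (2t + 1) > (n + 1) t` because `q (2t + 1) ≤ 2k + 1`
        have := Nat.mul_le_mul_right (2 * t + 1) hpp
        subst hn
        nlinarith
    exact ⟨rs, hlen, hmem, hreg, top_ne_smul_of_le hIm hmem⟩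
  · rintro d ⟨rs, rfl, hmem, hreg⟩
    obtain ⟨z, hz, hzI, hd, hne⟩ := exists_not_kd (r := 2 * q + 1) (p := p) hI (by omega)
      (by nlinarith)
    by_contra! hlt
    exact not_kVan_quot_ideal (kVan_polynomial (by omega)) hz hd hzI hne
      (KVan.of_weaklyRegular _ rs hmem hreg.toIsWeaklyRegular _ (by omega))
end
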